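/- arXiv:1801.08461 — 14 statements merged into one kernel-verified Lean document; each statement's English description precedes it below -/
import Mathlib

section
/- Let M ⊂ ℝ^d be a compact C² manifold, φ a flow on M with C¹ velocity field X, and Λ ⊂ M a compact φ-invariant subset. If the restricted flow φ|Λ is k*-expansive and efficient, then φ|Λ is rescaling expansive. -/
open Metric Set Function

noncomputable section

/-- The set of increasing homeomorphisms of `ℝ`, viewed as continuous strictly
increasing surjections `ℝ → ℝ`. -/
def IsHplus (h : ℝ → ℝ) : Prop :=
  Continuous h ∧ StrictMono h ∧ Function.Surjective h

/-- Increasing homeomorphisms of `ℝ` fixing `0`. -/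
def IsHplus0 (h : ℝ → ℝ) : Prop := IsHplus h ∧ h 0 = 0

/-- The orbit `φ_ℝ(x)` of a point under a flow. -/
def orb {α : Type*} (φ : ℝ → α → α) (x : α) : Set α := Set.range fun t => φ t x

/-- The orbit segment `φ_{[a,b]}(x)` (where `[a,b]` is the closed interval between
`a` and `b`, also when `a > b`). -/
def arc {α : Type*} (φ : ℝ → α → α) (x : α) (a b : ℝ) : Set α :=
  (fun t => φ t x) '' Set.uIcc a b

abbrev Euc (d : ℕ) := EuclideanSpace ℝ (Fin d)

/-- A flow on a subset `M` of a topological space: continuous on `ℝ × M`, maps `M`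
to itself, `φ_0 = id` and `φ_{s+t} = φ_s ∘ φ_t` on `M`. -/
def FlowOn {α : Type*} [TopologicalSpace α] (φ : ℝ → α → α) (M : Set α) : Prop :=
  ContinuousOn (fun p : ℝ × α => φ p.1 p.2) (Set.univ ×ˢ M) ∧
  (∀ t : ℝ, Set.MapsTo (φ t) M M) ∧ (∀ x ∈ M, φ 0 x = x) ∧
  ∀ s t : ℝ, ∀ x ∈ M, φ (s + t) x = φ s (φ t x)

/-- The fixed points of the flow lying in `M`. -/
def fixOn {α : Type*} (φ : ℝ → α → α) (M : Set α) : Set α :=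
  {σ ∈ M | ∀ t : ℝ, φ t σ = σ}

/-- `φ|Λ` is k*-expansive: for all `ε > 0` there is `δ > 0` such that if `x, y ∈ Λ`,
`h ∈ H⁺₀(ℝ)` and `dist (φ_t x) (φ_{h t} y) ≤ δ` for all `t`, then
`φ_{h t₀} y ∈ φ_{[-ε,ε]} (φ_{t₀} x)` for some `t₀`. -/
def KStarExpansiveOn {α : Type*} [MetricSpace α] (φ : ℝ → α → α) (Λ : Set α) : Prop :=
  ∀ ε > (0 : ℝ), ∃ δ > (0 : ℝ), ∀ x ∈ Λ, ∀ y ∈ Λ, ∀ h : ℝ → ℝ, IsHplus0 h →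
    (∀ t : ℝ, dist (φ t x) (φ (h t) y) ≤ δ) →
    ∃ t₀ : ℝ, φ (h t₀) y ∈ arc φ (φ t₀ x) (-ε) ε

/-- `φ|Λ` is rescaling expansive (with velocity field `X`): for all `ε > 0` there is
`δ > 0` such that if `x, y ∈ Λ`, `h ∈ H⁺₀(ℝ)` and
`dist (φ_t x) (φ_{h t} y) ≤ δ‖X (φ_t x)‖` for all `t`, then
`φ_{h t} y ∈ φ_{[-ε,ε]} (φ_t x)` for all `t`. -/
def RescalingExpansive {d : ℕ} (φ : ℝ → Euc d → Euc d) (X : Euc d → Euc d)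
    (Λ : Set (Euc d)) : Prop :=
  ∀ ε > (0 : ℝ), ∃ δ > (0 : ℝ), ∀ x ∈ Λ, ∀ y ∈ Λ, ∀ h : ℝ → ℝ, IsHplus0 h →
    (∀ t : ℝ, dist (φ t x) (φ (h t) y) ≤ δ * ‖X (φ t x)‖) →
    ∀ t : ℝ, φ (h t) y ∈ arc φ (φ t x) (-ε) ε

/-- `φ|Λ` is efficient: there is `δ* > 0` such that whenever `0 < δ < δ*`,
`x ∈ Λ \ fix(φ)`, `g ∈ H⁺(ℝ)`, `dist (φ_t x) (φ_{g t} x) < δ‖X (φ_t x)‖` for all `t`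
and `diam (φ_{[t, g t]} x) < δ*` for all `t`, then
`φ_{[t, g t]} x ⊆ B(φ_t x, δ‖X (φ_t x)‖)` for all `t`. -/
def Efficient {d : ℕ} (φ : ℝ → Euc d → Euc d) (X : Euc d → Euc d)
    (Λ : Set (Euc d)) : Prop :=
  ∃ δs > (0 : ℝ), ∀ δ : ℝ, 0 < δ → δ < δs → ∀ x ∈ Λ, (¬ ∀ t : ℝ, φ t x = x) →
    ∀ g : ℝ → ℝ, IsHplus g →
    (∀ t : ℝ, dist (φ t x) (φ (g t) x) < δ * ‖X (φ t x)‖) →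
    (∀ t : ℝ, Metric.diam (arc φ x t (g t)) < δs) →
    ∀ t : ℝ, arc φ x t (g t) ⊆ Metric.ball (φ t x) (δ * ‖X (φ t x)‖)

/-- Over a short time interval the displacement along a `C¹` curve whose velocity field is
`L`-Lipschitz on the curve is at least half of the initial speed times the elapsed time. -/
theorem half_speed_mul_abs_le_norm_sub {E : Type*} [NormedAddCommGroup E] [NormedSpace ℝ E]
    {γ : ℝ → E} {X : E → E} {L r : ℝ} (hr : 0 ≤ r) (hL : 0 ≤ L) (hLr : L * r ≤ 1 / 4)
    (hγ : ∀ t, HasDerivAt γ (X (γ t)) t)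
    (hX : ∀ t, ‖X (γ t) - X (γ 0)‖ ≤ L * ‖γ t - γ 0‖) {u : ℝ} (hu : |u| ≤ r) :
    |u| * ‖X (γ 0)‖ / 2 ≤ ‖γ u - γ 0‖ := by
  have h0 : (0 : ℝ) ∈ Icc (-r) r := ⟨by linarith, hr⟩
  have hcont : Continuous γ := continuous_iff_continuousAt.2 fun t => (hγ t).continuousAt
  obtain ⟨v, hv, hmax⟩ := (isCompact_Icc (a := -r) (b := r)).exists_isMaxOn ⟨0, h0⟩
    (f := fun t => ‖γ t - γ 0‖) (by fun_prop)
  set m := ‖γ v - γ 0‖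
  have hm : ∀ t ∈ Icc (-r) r, ‖γ t - γ 0‖ ≤ m := fun t ht => hmax ht
  have hm_le : m ≤ (‖X (γ 0)‖ + L * m) * r := by
    have hspeed : ∀ t ∈ Icc (-r) r, ‖X (γ t)‖ ≤ ‖X (γ 0)‖ + L * m := fun t ht => by
      have h1 := norm_le_norm_add_norm_sub' (X (γ t)) (X (γ 0))
      have h2 := mul_le_mul_of_nonneg_left (hm t ht) hL
      linarith [hX t]
    have h1 := (convex_Icc (-r) r).norm_image_sub_le_of_norm_hasDerivWithin_le
      (fun t _ => (hγ t).hasDerivWithinAt) hspeed h0 hv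
    refine h1.trans (mul_le_mul_of_nonneg_left ?_ (by positivity))
    rw [sub_zero, Real.norm_eq_abs]
    exact abs_le.2 hv
  have hLm : L * m ≤ ‖X (γ 0)‖ / 2 := by
    have h1 := mul_le_mul_of_nonneg_left hm_le hL
    have h2 : (L * r) * (‖X (γ 0)‖ + L * m) ≤ 1 / 4 * (‖X (γ 0)‖ + L * m) :=
      mul_le_mul_of_nonneg_right hLr (by positivity)
    nlinarith [norm_nonneg (X (γ 0))]
  have hdev := (convex_Icc (-r) r).norm_image_sub_le_of_norm_hasDerivWithin_le
    (f := fun t => γ t - t • X (γ 0)) (f' := fun t => X (γ t) - (1 : ℝ) • X (γ 0))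
    (C := ‖X (γ 0)‖ / 2) (x := 0) (y := u)
    (fun t _ => ((hγ t).sub ((hasDerivAt_id t).smul_const _)).hasDerivWithinAt)
    (fun t ht => by
      rw [one_smul]
      exact (hX t).trans ((mul_le_mul_of_nonneg_left (hm t ht) hL).trans hLm))
    h0 (abs_le.1 hu)
  have h1 := norm_sub_norm_le (u • X (γ 0)) (γ u - γ 0)
  have h2 : ‖u • X (γ 0) - (γ u - γ 0)‖ ≤ ‖X (γ 0)‖ / 2 * |u| := by
    rw [zero_smul, sub_zero, sub_zero, Real.norm_eq_abs] at hdev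
    rwa [norm_sub_rev, sub_right_comm]
  rw [norm_smul, Real.norm_eq_abs] at h1
  linarith

/-- A zero of a velocity field that is Lipschitz on `M` is a fixed point of the flow. -/
theorem FlowOn.eq_self_of_velocity_eq_zero {E : Type*} [NormedAddCommGroup E] [NormedSpace ℝ E]
    {φ : ℝ → E → E} {X : E → E} {M : Set E} {K : NNReal} (hflow : FlowOn φ M)
    (hX : LipschitzOnWith K X M)
    (hvel : ∀ x ∈ M, ∀ t : ℝ, HasDerivAt (fun s : ℝ => φ s x) (X (φ t x)) t)
    {z : E} (hz : z ∈ M) (h0 : X z = 0) (t : ℝ) : φ t z = z := by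
  have h := ODE_solution_unique_univ (v := fun _ => X) (s := fun _ => M) (K := K) (t₀ := 0)
    (f := fun s => φ s z) (g := fun _ => z) (fun _ => hX)
    (fun s => ⟨hvel z hz s, hflow.2.1 s hz⟩)
    (fun s => ⟨by simpa [h0] using hasDerivAt_const s z, hz⟩) (hflow.2.2.1 z hz)
  exact congrFun h t

/-- Let `M ⊂ ℝ^d` be a compact C² manifold, `φ` a flow on `M`
with C¹ velocity field `X`, and `Λ ⊆ M` a compact `φ`-invariant subset.
If `φ|Λ` is k*-expansive and efficient, then `φ|Λ` is rescaling expansive. -/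
theorem kstar_and_efficient_imp_rescaling {d : ℕ}
    (φ : ℝ → Euc d → Euc d) (X : Euc d → Euc d) (M Λ : Set (Euc d))
    (hMc : IsCompact M) (hflow : FlowOn φ M) (hX : ContDiff ℝ 1 X)
    (hvel : ∀ x ∈ M, ∀ t : ℝ, HasDerivAt (fun s : ℝ => φ s x) (X (φ t x)) t)
    (hΛM : Λ ⊆ M) (hΛc : IsCompact Λ) (hΛinv : ∀ t : ℝ, Set.MapsTo (φ t) Λ Λ)
    (hks : KStarExpansiveOn φ Λ) (heff : Efficient φ X Λ) :
    RescalingExpansive φ X Λ := by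
  obtain ⟨-, hmaps, hzero, hadd⟩ := id hflow
  obtain ⟨K, hK⟩ : ∃ K, LipschitzOnWith K X M :=
    hX.locallyLipschitz.locallyLipschitzOn.exists_lipschitzOnWith_of_compact hMc
  obtain ⟨B, hB⟩ := hMc.exists_bound_of_continuousOn hX.continuous.continuousOn
  intro ε hε
  set r : ℝ := min ε (1 / (4 * (K + 1)))
  have hr : 0 < r := lt_min hε (by positivity)
  have hKr : (K : ℝ) * r ≤ 1 / 4 := by
    calc (K : ℝ) * r ≤ K * (1 / (4 * (K + 1))) :=
          mul_le_mul_of_nonneg_left (min_le_right _ _) K.coe_nonneg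
      _ ≤ 1 / 4 := by
        rw [mul_one_div, div_le_div_iff₀ (by positivity) (by norm_num)]
        linarith
  obtain ⟨η, hη, hexp⟩ := hks r hr
  refine ⟨min (r / 4) (η / (|B| + 1)), by positivity, fun x hx y hy h hh hclose => ?_⟩
  set δ := min (r / 4) (η / (|B| + 1))
  have hδr : δ ≤ r / 4 := min_le_left _ _
  have hxM := hΛM hx
  have hyM := hΛM hy
  by_cases hsing : ∃ t, X (φ t x) = 0
  · obtain ⟨t₁, ht₁⟩ := hsing
    have hfix := hflow.eq_self_of_velocity_eq_zero hK hvel (hmaps t₁ hxM) ht₁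
    intro t
    have hXt : X (φ t x) = 0 := by
      have : φ t x = φ t₁ x := by
        rw [← hfix (t - t₁), ← hadd _ _ x hxM, sub_add_cancel]
      rw [this, ht₁]
    have heq : φ t x = φ (h t) y := by
      have := hclose t
      rw [hXt, norm_zero, mul_zero] at this
      exact dist_le_zero.1 this
    exact ⟨0, by rw [mem_uIcc]; left; constructor <;> linarith,
      (hzero _ (hmaps t hxM)).trans heq⟩
  push Not at hsing
  obtain ⟨t₀, s, hs, hst⟩ := hexp x hx y hy h hh fun t => by
    refine (hclose t).trans ?_
    have h1 : ‖X (φ t x)‖ ≤ |B| + 1 := by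
      linarith [hB _ (hmaps t hxM), le_abs_self B]
    calc δ * ‖X (φ t x)‖ ≤ η / (|B| + 1) * (|B| + 1) :=
          mul_le_mul (min_le_right _ _) h1 (norm_nonneg _) (by positivity)
      _ = η := div_mul_cancel₀ _ (by positivity)
  rw [uIcc_of_le (by linarith)] at hs
  set g : ℝ → ℝ := fun t => h t - h t₀ + s + t₀ - t
  have hg : ∀ t, φ (g t) (φ t x) = φ (h t) y := fun t => by
    have h1 : φ (h t) y = φ (h t - h t₀) (φ (h t₀) y) := by
      rw [← hadd _ _ y hyM, sub_add_cancel]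
    rw [h1, ← hst]
    simp only
    rw [← hadd _ _ x hxM, ← hadd _ _ x hxM, ← hadd _ _ x hxM]
    congr 1
    simp only [g]
    ring
  have hgc : Continuous g := by
    have := hh.1.1
    fun_prop
  have hgap : ∀ t, |g t| ≤ r → |g t| < r := fun t ht => by
    have hzM := hmaps t hxM
    have h1 := half_speed_mul_abs_le_norm_sub hr.le K.coe_nonneg hKr (γ := fun u => φ u (φ t x))
      (hvel _ hzM)
      (fun u => by
        simpa only [dist_eq_norm] using hK.dist_le_mul _ (hmaps u hzM) _ (hmaps 0 hzM)) ht
    simp only [hzero _ hzM] at h1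
    rw [hg, ← dist_eq_norm, dist_comm] at h1
    have h2 := h1.trans (hclose t)
    have hpos : 0 < ‖X (φ t x)‖ := norm_pos_iff.2 (hsing t)
    have h3 : |g t| / 2 ≤ δ := le_of_mul_le_mul_right (by linarith) hpos
    linarith
  have hclopen : IsClopen {t | |g t| ≤ r} := by
    refine ⟨isClosed_le hgc.abs continuous_const, ?_⟩
    have : {t | |g t| ≤ r} = {t | |g t| < r} := by
      ext t
      exact ⟨hgap t, fun ht => (show |g t| < r from ht).le⟩
    rw [this]
    exact isOpen_lt hgc.abs continuous_const
  have huniv := hclopen.eq_univ ⟨t₀, by simpa [g] using abs_le.2 hs⟩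
  intro t
  have ht : |g t| ≤ r := by
    have hmem : t ∈ {t | |g t| ≤ r} := huniv ▸ mem_univ t
    exact hmem
  refine ⟨g t, ?_, hg t⟩
  rw [uIcc_of_le (by linarith)]
  exact abs_le.1 (ht.trans (min_le_left _ _))
end
end

section
/- A flow φ of a compact metric space (Λ, dist) is KH-expansive if and only if it is separating and fix(φ) is an open subset of Λ. -/
open Metric Set Function

noncomputable section

/-- A (global) flow on a topological space: a continuous map `φ : ℝ × Λ → Λ` with
`φ_0 = id` and `φ_{s+t} = φ_s ∘ φ_t`. -/
def IsFlow {α : Type*} [TopologicalSpace α] (φ : ℝ → α → α) : Prop :=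
  Continuous (fun p : ℝ × α => φ p.1 p.2) ∧ (∀ x, φ 0 x = x) ∧
    ∀ s t : ℝ, ∀ x, φ (s + t) x = φ s (φ t x)

/-- The set of fixed points of a flow. -/
def fixSet {α : Type*} (φ : ℝ → α → α) : Set α := {σ | ∀ t : ℝ, φ t σ = σ}

/-- `φ` is separating: there is `δ > 0` such that if
`dist (φ_t x) (φ_t y) < δ` for all `t ∈ ℝ` then `y ∈ φ_ℝ(x)`. -/
def Separating {α : Type*} [MetricSpace α] (φ : ℝ → α → α) : Prop :=
  ∃ δ > (0 : ℝ), ∀ x y : α, (∀ t : ℝ, dist (φ t x) (φ t y) < δ) → y ∈ orb φ x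

/-- `φ` is KH-expansive: there is `δ > 0` such that whenever `x ∈ Λ`,
`s : ℝ → ℝ` is continuous with `s 0 = 0`, `dist (φ_t x) (φ_{s t} x) < δ` for all
`t`, and `y` satisfies `dist (φ_t x) (φ_{s t} y) < δ` for all `t`, then
`y ∈ φ_ℝ(x)`. -/
def KHExpansive {α : Type*} [MetricSpace α] (φ : ℝ → α → α) : Prop :=
  ∃ δ > (0 : ℝ), ∀ x : α, ∀ s : ℝ → ℝ, Continuous s → s 0 = 0 →
    (∀ t : ℝ, dist (φ t x) (φ (s t) x) < δ) →
    ∀ y : α, (∀ t : ℝ, dist (φ t x) (φ (s t) y) < δ) → y ∈ orb φ x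

namespace IsFlow

variable {Λ : Type*} {φ : ℝ → Λ → Λ}

lemma apply_mem_fixSet_iff [TopologicalSpace Λ] (hφ : IsFlow φ) {x : Λ} {t : ℝ} :
    φ t x ∈ fixSet φ ↔ x ∈ fixSet φ := by
  refine ⟨fun h => ?_, fun h => (h t).symm ▸ h⟩
  have hx : φ t x = x := by
    rw [← h (-t), ← hφ.2.2, neg_add_cancel, hφ.2.1]
  rwa [hx] at h

lemma isClosed_fixSet [TopologicalSpace Λ] [T2Space Λ] (hφ : IsFlow φ) :
    IsClosed (fixSet φ) := by
  have : fixSet φ = ⋂ t : ℝ, {x | φ t x = x} := by ext; simp [fixSet]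
  rw [this]
  exact isClosed_iInter fun t =>
    isClosed_eq (hφ.1.comp (Continuous.prodMk_right t)) continuous_id

lemma apply_int_mul_of_apply_eq [TopologicalSpace Λ] (hφ : IsFlow φ) {x : Λ} {c : ℝ}
    (h : φ c x = x) (n : ℤ) : φ (n * c) x = x := by
  have hp : Function.Periodic (fun t => φ t x) c := fun t => by
    simp only [hφ.2.2, h]
  simpa [hφ.2.1] using hp.int_mul_eq n

/-- Near a point which is not fixed, there are no periodic points of small period. -/
lemma eventually_apply_ne [TopologicalSpace Λ] [T2Space Λ] (hφ : IsFlow φ) {x : Λ}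
    (hx : x ∉ fixSet φ) :
    ∀ᶠ p : ℝ × Λ in nhds (0, x), 0 < p.1 → φ p.1 p.2 ≠ p.2 := by
  obtain ⟨T, hT⟩ : ∃ T, φ T x ≠ x := by simpa [fixSet] using hx
  have hopen : IsOpen {p : ℝ × Λ | φ p.1 p.2 ≠ p.2} := isOpen_ne_fun hφ.1 continuous_snd
  have hev : ∀ᶠ p : ℝ × Λ in nhds (T, x), φ p.1 p.2 ≠ p.2 := hopen.mem_nhds hT
  rw [nhds_prod_eq, Filter.eventually_prod_iff] at hev
  obtain ⟨P, hP, Q, hQ, hPQ⟩ := hev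
  obtain ⟨η, hη, hball⟩ := Metric.eventually_nhds_iff.1 hP
  rw [nhds_prod_eq, Filter.eventually_prod_iff]
  refine ⟨fun ε => ε < η, eventually_lt_nhds hη, Q, hQ, fun {ε} hε {y} hy hpos heq => ?_⟩
  refine hPQ (hball ?_) hy (hφ.apply_int_mul_of_apply_eq heq ⌊T / ε⌋)
  have h₁ : (⌊T / ε⌋ : ℝ) * ε ≤ T := (le_div_iff₀ hpos).1 (Int.floor_le _)
  have h₂ : T < (⌊T / ε⌋ + 1 : ℝ) * ε := (div_lt_iff₀ hpos).1 (Int.lt_floor_add_one _)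
  rw [Real.dist_eq, abs_lt]
  constructor <;> linarith

/-- If the fixed point set is open, then small times move all other points by a uniformly
positive distance. -/
lemma exists_le_dist_apply [MetricSpace Λ] [CompactSpace Λ] (hφ : IsFlow φ)
    (ho : IsOpen (fixSet φ)) {ρ : ℝ} (hρ : 0 < ρ) :
    ∃ ε, 0 < ε ∧ ε < ρ ∧ ∃ γ > 0, ∀ x ∉ fixSet φ, ∀ t : ℝ, |t| = ε → γ ≤ dist x (φ t x) := by
  have hK : IsCompact (fixSet φ)ᶜ := ho.isClosed_compl.isCompact
  have hev := hK.eventually_forall_of_forall_eventually (x₀ := (0 : ℝ))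
    (P := fun ε y => 0 < ε → φ ε y ≠ y)
    fun x hx => hφ.eventually_apply_ne hx
  obtain ⟨η, hη, hball⟩ := Metric.eventually_nhds_iff.1 hev
  have hm : 0 < min η ρ := lt_min hη hρ
  have hε : 0 < min η ρ / 2 := half_pos hm
  have hlt := half_lt_self hm
  refine ⟨min η ρ / 2, hε, hlt.trans_le (min_le_right _ _), ?_⟩
  obtain ⟨γ, hγ, hle⟩ := hK.exists_forall_le' (a := 0)
    (f := fun x => dist x (φ (min η ρ / 2) x))
    (continuous_id.dist (hφ.1.comp (Continuous.prodMk_right _))).continuousOn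
    fun x hx => dist_pos.2 fun h => hball (y := min η ρ / 2)
      (by rw [Real.dist_eq, sub_zero, abs_of_pos hε]; exact hlt.trans_le (min_le_left _ _))
      x hx hε h.symm
  refine ⟨γ, hγ, fun x hx t ht => ?_⟩
  rcases (abs_eq hε.le).1 ht with rfl | rfl
  · exact hle x hx
  · have := hle (φ (-(min η ρ / 2)) x) (mt hφ.apply_mem_fixSet_iff.1 hx)
    rwa [← hφ.2.2, add_neg_cancel, hφ.2.1, dist_comm] at this

lemma exists_forall_dist_apply_lt [MetricSpace Λ] [CompactSpace Λ] (hφ : IsFlow φ)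
    {r : ℝ} (hr : 0 < r) :
    ∃ ρ > 0, ∀ t : ℝ, |t| < ρ → ∀ x, dist (φ t x) x < r := by
  have hev := isCompact_univ.eventually_forall_of_forall_eventually (x₀ := (0 : ℝ))
    (P := fun t (x : Λ) => dist (φ t x) x < r) fun x _ => by
      refine (isOpen_lt (hφ.1.dist continuous_snd) continuous_const).mem_nhds ?_
      simpa [hφ.2.1] using hr
  obtain ⟨ρ, hρ, h⟩ := Metric.eventually_nhds_iff.1 hev
  exact ⟨ρ, hρ, fun t ht x => h (by simpa using ht) x (mem_univ x)⟩

end IsFlow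

lemma abs_lt_of_continuous_of_forall_abs_ne {u : ℝ → ℝ} {ε : ℝ} (hu : Continuous u)
    (h₀ : u 0 = 0) (hε : 0 < ε) (hne : ∀ t, |u t| ≠ ε) (t : ℝ) : |u t| < ε := by
  by_contra! h
  obtain ⟨a, ha⟩ := mem_range_of_exists_le_of_exists_ge hu.abs ⟨0, by simpa [h₀] using hε.le⟩
    ⟨t, h⟩
  exact hne a ha

lemma KHExpansive.separating {Λ : Type*} [MetricSpace Λ] {φ : ℝ → Λ → Λ}
    (h : KHExpansive φ) : Separating φ := by
  obtain ⟨δ, hδ, h⟩ := h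
  exact ⟨δ, hδ, fun x y hxy => h x id continuous_id rfl (by simpa using hδ) y hxy⟩

lemma KHExpansive.isOpen_fixSet {Λ : Type*} [MetricSpace Λ] {φ : ℝ → Λ → Λ}
    (hφ : IsFlow φ) (h : KHExpansive φ) : IsOpen (fixSet φ) := by
  obtain ⟨δ, hδ, h⟩ := h
  refine Metric.isOpen_iff.2 fun σ hσ => ⟨δ, hδ, fun y hy => ?_⟩
  obtain ⟨t, ht⟩ := h σ (fun _ => 0) continuous_const rfl
    (fun t => by simpa [hφ.2.1, hσ t] using hδ) y
    (fun t => by simpa [hφ.2.1, hσ t, dist_comm] using hy)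
  have hy : σ = y := by rw [← ht]; exact (hσ t).symm
  exact hy ▸ hσ

lemma Separating.khExpansive {Λ : Type*} [MetricSpace Λ] [CompactSpace Λ] {φ : ℝ → Λ → Λ}
    (hφ : IsFlow φ) (hs : Separating φ) (ho : IsOpen (fixSet φ)) : KHExpansive φ := by
  obtain ⟨δ, hδ, hsep⟩ := hs
  obtain ⟨ρ, hρ, hmove⟩ := hφ.exists_forall_dist_apply_lt (half_pos hδ)
  obtain ⟨ε, hε, hερ, γ, hγ, hfar⟩ := hφ.exists_le_dist_apply ho hρ
  obtain ⟨r, hr, hthick⟩ :=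
    hφ.isClosed_fixSet.isCompact.exists_thickening_subset_open ho subset_rfl
  refine ⟨min (δ / 2) (min γ r), by positivity, fun x s hcont hs₀ hx y hy => ?_⟩
  by_cases hfix : x ∈ fixSet φ
  · have hxy : dist x y < min (δ / 2) (min γ r) := by
      simpa [hφ.2.1, hs₀] using hy 0
    have hyfix : y ∈ fixSet φ := hthick <| Metric.mem_thickening_iff.2
      ⟨x, hfix, by rw [dist_comm]; exact hxy.trans_le (by simp)⟩
    refine hsep x y fun t => ?_
    rw [hfix t, hyfix t]
    exact (hxy.trans_le (min_le_left _ _)).trans (half_lt_self hδ)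
  · have hshift (z : Λ) (t : ℝ) : φ (s t) z = φ (s t - t) (φ t z) := by
      rw [← hφ.2.2, sub_add_cancel]
    have hclose := abs_lt_of_continuous_of_forall_abs_ne (u := fun t => s t - t)
      (hcont.sub continuous_id) (by simp [hs₀]) hε fun t ht => by
        have h₁ := hfar (φ t x) (mt hφ.apply_mem_fixSet_iff.1 hfix) (s t - t) ht
        rw [← hshift] at h₁
        exact h₁.not_gt ((hx t).trans_le ((min_le_right _ _).trans (min_le_left _ _)))
    refine hsep x y fun t => ?_
    have h₁ := (hy t).trans_le (min_le_left _ _)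
    have h₂ := hmove (s t - t) ((hclose t).trans hερ) (φ t y)
    rw [← hshift] at h₂
    linarith [dist_triangle (φ t x) (φ (s t) y) (φ t y)]

/-- A flow `φ` of a compact metric space `(Λ, dist)` is
KH-expansive if and only if it is separating and `fix(φ)` is an open subset of
`Λ`. -/
theorem khExpansive_iff_separating_and_isOpen_fixSet
    {Λ : Type*} [MetricSpace Λ] [CompactSpace Λ]
    (φ : ℝ → Λ → Λ) (hφ : IsFlow φ) :
    KHExpansive φ ↔ Separating φ ∧ IsOpen (fixSet φ) :=
  ⟨fun h => ⟨h.separating, h.isOpen_fixSet hφ⟩, fun h => h.1.khExpansive hφ h.2⟩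
end
end

section
/- Let M ⊂ ℝ^d be a compact C² manifold, φ a flow on M with C¹ velocity field X, and Λ ⊂ M a compact φ-invariant subset whose fixed points are all dynamically isolated. If φ|Λ is rescaling expansive then the following property (*) holds: for all β > 0 there is δ > 0 such that if x, y ∈ Λ, h ∈ H⁺₀(ℝ) and dist(φ_t(x), φ_{h(t)}(y)) ≤ δ‖X(φ_t(x))‖ for all t ∈ ℝ, then there is g ∈ H⁺(ℝ) such that φ_{h(t)}(y) = φ_{g(t)}(x) for all t ∈ ℝ and diam(φ_{[t,g(t)]}(x)) < β for all t ∈ ℝ. Conversely, if φ|Λ is efficient and satisfies (*), then φ|Λ is rescaling expansive. -/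
open Metric Set Function

noncomputable section

/-- A fixed point `σ` of the flow `φ` on `M` is dynamically isolated: there is
`r > 0` such that the only point of `M` whose whole orbit stays in `B(σ, r)` is
`σ` itself. -/
def DynIsolated {α : Type*} [MetricSpace α] (φ : ℝ → α → α) (M : Set α) (σ : α) : Prop :=
  ∃ r > (0 : ℝ), ∀ x ∈ M, orb φ x ⊆ Metric.ball σ r → x = σ

/-- Property (*): for all `β > 0` there is `δ > 0` such that if `x, y ∈ Λ`,
`h ∈ H⁺₀(ℝ)` and `dist (φ_t x) (φ_{h t} y) ≤ δ‖X (φ_t x)‖` for all `t`, then there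
is `g ∈ H⁺(ℝ)` with `φ_{h t} y = φ_{g t} x` and `diam (φ_{[t, g t]} x) < β` for
all `t`. -/
def StarProperty {d : ℕ} (φ : ℝ → Euc d → Euc d) (X : Euc d → Euc d)
    (Λ : Set (Euc d)) : Prop :=
  ∀ β > (0 : ℝ), ∃ δ > (0 : ℝ), ∀ x ∈ Λ, ∀ y ∈ Λ, ∀ h : ℝ → ℝ, IsHplus0 h →
    (∀ t : ℝ, dist (φ t x) (φ (h t) y) ≤ δ * ‖X (φ t x)‖) →
    ∃ g : ℝ → ℝ, IsHplus g ∧ (∀ t : ℝ, φ (h t) y = φ (g t) x) ∧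
      ∀ t : ℝ, Metric.diam (arc φ x t (g t)) < β

/-- An integral curve of a `K`-Lipschitz field deviates from its tangent line at `γ a` by at most half the
length of the tangent segment, as long as the elapsed time `T` satisfies `K * T ≤ 1 / 4`. -/
theorem norm_sub_sub_smul_le_half {E : Type*} [NormedAddCommGroup E] [NormedSpace ℝ E]
    {X : E → E} {s : Set E} {K : NNReal} (hX : LipschitzOnWith K X s) {γ : ℝ → E}
    (hγ : ∀ t, HasDerivAt γ (X (γ t)) t) (hγs : ∀ t, γ t ∈ s) {T : ℝ} (hT : 0 < T)
    (hKT : K * T ≤ 1 / 4) {a t : ℝ} (hat : |t - a| ≤ T) :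
    ‖γ t - γ a - (t - a) • X (γ a)‖ ≤ 1 / 2 * ‖X (γ a)‖ * |t - a| := by
  have hmem : ∀ u, u ∈ Icc (a - T) (a + T) ↔ |u - a| ≤ T := fun u => by
    rw [abs_le, mem_Icc]
    constructor <;> rintro ⟨h₁, h₂⟩ <;> constructor <;> linarith
  have ha : a ∈ Icc (a - T) (a + T) := by simp [hmem, hT.le]
  have hlip : ∀ u, ‖X (γ u) - X (γ a)‖ ≤ K * ‖γ u - γ a‖ := fun u =>
    hX.norm_sub_le (hγs u) (hγs a)
  have hcont : Continuous γ := continuous_iff_continuousAt.2 fun u => (hγ u).continuousAt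
  obtain ⟨b, hb, hmax⟩ := isCompact_Icc.exists_isMaxOn ⟨a, ha⟩
    (hcont.sub continuous_const).norm.continuousOn (f := fun u => ‖γ u - γ a‖)
  set m := ‖γ b - γ a‖ with hm
  have hbound : ∀ u ∈ Icc (a - T) (a + T), ‖X (γ u) - X (γ a)‖ ≤ K * m := fun u hu =>
    (hlip u).trans (mul_le_mul_of_nonneg_left (hmax hu) K.2)
  have hspeed : ∀ u ∈ Icc (a - T) (a + T), ‖X (γ u)‖ ≤ ‖X (γ a)‖ + K * m := fun u hu => by
    have := norm_le_insert' (X (γ u)) (X (γ a))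
    linarith [hbound u hu]
  have hm_le : m ≤ (‖X (γ a)‖ + K * m) * T := by
    refine ((convex_Icc (a - T) (a + T)).norm_image_sub_le_of_norm_hasDerivWithin_le
      (fun u _ => (hγ u).hasDerivWithinAt) hspeed ha hb).trans ?_
    exact mul_le_mul_of_nonneg_left ((hmem b).1 hb) (by positivity)
  have hKm : (K : ℝ) * m ≤ 1 / 2 * ‖X (γ a)‖ := by
    have h₁ : (K : ℝ) * m ≤ K * ((‖X (γ a)‖ + K * m) * T) :=
      mul_le_mul_of_nonneg_left hm_le K.2
    have h₂ : (K * T) * (‖X (γ a)‖ + K * m) ≤ 1 / 4 * (‖X (γ a)‖ + K * m) :=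
      mul_le_mul_of_nonneg_right hKT (by positivity)
    linarith [norm_nonneg (X (γ a))]
  have hderiv : ∀ u ∈ Icc (a - T) (a + T),
      HasDerivWithinAt (fun u => γ u - (u - a) • X (γ a)) (X (γ u) - X (γ a))
        (Icc (a - T) (a + T)) u := fun u _ => by
    simpa using ((hγ u).fun_sub (((hasDerivAt_id u).sub_const a).smul_const
      (X (γ a)))).hasDerivWithinAt
  have := (convex_Icc (a - T) (a + T)).norm_image_sub_le_of_norm_hasDerivWithin_le hderiv
    (fun u hu => (hbound u hu).trans hKm) ha ((hmem t).2 hat)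
  simpa [sub_right_comm] using this

/-- Over short times an integral curve moves at least at half its initial speed. -/
theorem half_norm_mul_abs_le_norm_sub {E : Type*} [NormedAddCommGroup E] [NormedSpace ℝ E]
    {X : E → E} {s : Set E} {K : NNReal} (hX : LipschitzOnWith K X s) {γ : ℝ → E}
    (hγ : ∀ t, HasDerivAt γ (X (γ t)) t) (hγs : ∀ t, γ t ∈ s) {T : ℝ} (hT : 0 < T)
    (hKT : K * T ≤ 1 / 4) {a t : ℝ} (hat : |t - a| ≤ T) :
    1 / 2 * ‖X (γ a)‖ * |t - a| ≤ ‖γ t - γ a‖ := by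
  have h₁ := norm_sub_sub_smul_le_half hX hγ hγs hT hKT hat
  have h₂ := norm_le_insert (γ t - γ a) ((t - a) • X (γ a))
  rw [norm_smul, Real.norm_eq_abs] at h₂
  linarith

/-- An integral curve whose velocity vanishes at one time is constant. -/
theorem eq_of_velocity_eq_zero {E : Type*} [NormedAddCommGroup E] [NormedSpace ℝ E]
    {X : E → E} {s : Set E} {K : NNReal} (hX : LipschitzOnWith K X s) {γ : ℝ → E}
    (hγ : ∀ t, HasDerivAt γ (X (γ t)) t) (hγs : ∀ t, γ t ∈ s) {a : ℝ} (ha : X (γ a) = 0)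
    (t : ℝ) : γ t = γ a := by
  have : γ = fun _ => γ a :=
    ODE_solution_unique_univ (v := fun _ => X) (s := fun _ => s) (t₀ := a) (fun _ => hX)
      (fun u => ⟨hγ u, hγs u⟩) (fun u => ⟨by simpa [ha] using hasDerivAt_const u (γ a), hγs a⟩)
      rfl
  exact congrFun this t

/-- A continuous real function that is small at `0` and avoids the values whose absolute value
lies in `(ε, T]` stays small. -/
theorem abs_le_of_gap {u : ℝ → ℝ} (hu : Continuous u) {ε T : ℝ} (hεT : ε < T)
    (h₀ : |u 0| ≤ ε) (hgap : ∀ t, |u t| ≤ T → |u t| ≤ ε) (t : ℝ) : |u t| ≤ ε := by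
  by_contra! hlt
  have hT : T ∈ uIcc |u 0| |u t| :=
    mem_uIcc.2 (Or.inl ⟨h₀.trans hεT.le, (lt_of_not_ge fun h => hlt.not_ge (hgap t h)).le⟩)
  obtain ⟨c, -, hc⟩ := intermediate_value_uIcc (f := fun t => |u t|) hu.abs.continuousOn hT
  exact absurd (hgap c hc.le) (by simpa [show |u c| = T from hc] using hεT)

/-- The data of a flow on an invariant set whose velocity field is Lipschitz and bounded there. -/
structure LipschitzFlow {d : ℕ} (φ : ℝ → Euc d → Euc d) (X : Euc d → Euc d)
    (Λ : Set (Euc d)) (K : NNReal) (C : ℝ) : Prop where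
  lipschitz : LipschitzOnWith K X Λ
  bound : ∀ x ∈ Λ, ‖X x‖ ≤ C
  deriv : ∀ x ∈ Λ, ∀ t, HasDerivAt (fun s => φ s x) (X (φ t x)) t
  mapsTo : ∀ t, MapsTo (φ t) Λ Λ
  map_zero : ∀ x ∈ Λ, φ 0 x = x
  map_add : ∀ s t, ∀ x ∈ Λ, φ (s + t) x = φ s (φ t x)

namespace LipschitzFlow

variable {d : ℕ} {φ : ℝ → Euc d → Euc d} {X : Euc d → Euc d} {Λ : Set (Euc d)} {K : NNReal}
  {C : ℝ}

/-- A point that shadows an equilibrium at the rescaled scale coincides with it. -/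
theorem eq_of_rescaled_dist_le (H : LipschitzFlow φ X Λ K C) {x y : Euc d} (hx : x ∈ Λ)
    (hy : y ∈ Λ) {h : ℝ → ℝ} (h₀ : h 0 = 0) {δ : ℝ}
    (hd : ∀ t, dist (φ t x) (φ (h t) y) ≤ δ * ‖X (φ t x)‖) (hx₀ : X x = 0) : y = x := by
  have := hd 0
  rw [h₀, H.map_zero x hx, H.map_zero y hy, hx₀, norm_zero, mul_zero] at this
  exact (dist_le_zero.1 this).symm

theorem eq_of_velocity_eq_zero (H : LipschitzFlow φ X Λ K C) {x : Euc d} (hx : x ∈ Λ) {a : ℝ}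
    (ha : X (φ a x) = 0) (t : ℝ) : φ t x = x := by
  have key := _root_.eq_of_velocity_eq_zero H.lipschitz (H.deriv x hx)
    (fun t => H.mapsTo t hx) ha
  rw [key t, ← key 0, H.map_zero x hx]

theorem half_norm_mul_abs_le_dist (H : LipschitzFlow φ X Λ K C) {x : Euc d} (hx : x ∈ Λ)
    {T : ℝ} (hT : 0 < T) (hKT : K * T ≤ 1 / 4) {a t : ℝ} (hat : |t - a| ≤ T) :
    1 / 2 * ‖X (φ a x)‖ * |t - a| ≤ dist (φ t x) (φ a x) := by
  rw [dist_eq_norm]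
  exact half_norm_mul_abs_le_norm_sub H.lipschitz (H.deriv x hx) (fun t => H.mapsTo t hx)
    hT hKT hat

/-- Regular orbits have no return times in `(0, T]`. -/
theorem injective_on_short_time (H : LipschitzFlow φ X Λ K C) {x : Euc d} (hx : x ∈ Λ)
    (hne : ∀ a, X (φ a x) ≠ 0) {T : ℝ} (hT : 0 < T) (hKT : K * T ≤ 1 / 4) {a t : ℝ}
    (hat : |t - a| ≤ T) (heq : φ t x = φ a x) : t = a := by
  have h := H.half_norm_mul_abs_le_dist hx hT hKT hat
  rw [heq, dist_self] at h
  have hpos : 0 < 1 / 2 * ‖X (φ a x)‖ := by have := norm_pos_iff.2 (hne a); positivity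
  exact sub_eq_zero.1 (abs_nonpos_iff.1 (nonpos_of_mul_nonpos_right h hpos))

theorem diam_arc_le (H : LipschitzFlow φ X Λ K C) (hC : 0 ≤ C) {x : Euc d} (hx : x ∈ Λ)
    (a b : ℝ) : Metric.diam (arc φ x a b) ≤ C * |b - a| := by
  refine Metric.diam_le_of_forall_dist_le (by positivity) ?_
  rintro _ ⟨s, hs, rfl⟩ _ ⟨t, ht, rfl⟩
  rw [dist_comm, dist_eq_norm]
  refine ((convex_univ (𝕜 := ℝ)).norm_image_sub_le_of_norm_hasDerivWithin_le
    (fun u _ => (H.deriv x hx u).hasDerivWithinAt)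
    (fun u _ => H.bound _ (H.mapsTo u hx)) (mem_univ s) (mem_univ t)).trans ?_
  exact mul_le_mul_of_nonneg_left (abs_sub_le_of_uIcc_subset_uIcc (uIcc_subset_uIcc hs ht)) hC

/-- Rescaling expansiveness implies property (*). -/
theorem starProperty (H : LipschitzFlow φ X Λ K C) (hC : 0 ≤ C) {T : ℝ} (hT : 0 < T)
    (hKT : K * T ≤ 1 / 4) (hexp : RescalingExpansive φ X Λ) : StarProperty φ X Λ := by
  intro β hβ
  obtain ⟨ε, hε, hεT, hεβ⟩ : ∃ ε > 0, ε < T / 2 ∧ C * ε < β := by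
    refine ⟨min (T / 4) (β / (2 * (C + 1))), by positivity,
      (min_le_left _ _).trans_lt (by linarith), ?_⟩
    calc C * min (T / 4) (β / (2 * (C + 1)))
        ≤ (C + 1) * (β / (2 * (C + 1))) :=
          mul_le_mul (by linarith) (min_le_right _ _) (by positivity) (by positivity)
      _ = β / 2 := by field_simp
      _ < β := half_lt_self hβ
  obtain ⟨δ, hδ, hshadow⟩ := hexp ε hε
  refine ⟨δ, hδ, fun x hx y hy h hh hd => ?_⟩
  by_cases hx₀ : ∃ a, X (φ a x) = 0
  · obtain ⟨a, ha⟩ := hx₀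
    have hfix := H.eq_of_velocity_eq_zero hx ha
    obtain rfl := H.eq_of_rescaled_dist_le hx hy hh.2 hd (hfix a ▸ ha)
    refine ⟨id, ⟨continuous_id, strictMono_id, surjective_id⟩,
      fun t => by rw [hfix, hfix], fun t => ?_⟩
    exact (H.diam_arc_le hC hx t (id t)).trans_lt (by simpa using hβ)
  · push Not at hx₀
    have hclose := hshadow x hx y hy h hh hd
    obtain ⟨c, hc, hcy⟩ := hclose 0
    have hcy : y = φ c x := by
      simpa only [hh.2, H.map_zero x hx, H.map_zero y hy] using hcy.symm
    have hy_eq : ∀ t, φ (h t) y = φ (h t + c) x := fun t => by rw [hcy, H.map_add _ _ _ hx]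
    have hball : ∀ {s}, s ∈ uIcc (-ε) ε → |s| ≤ ε := fun hs => by
      rwa [uIcc_of_le (by linarith), mem_Icc, ← abs_le] at hs
    have hsmall := abs_le_of_gap (u := fun t => h t + c - t)
      ((hh.1.1.add continuous_const).sub continuous_id) hεT
      (by simpa [hh.2] using hball hc) (fun t ht => by
        obtain ⟨s, hs, hsy⟩ := hclose t
        have hs := hball hs
        have heq : φ (h t + c) x = φ (s + t) x := by
          rw [← hy_eq, H.map_add _ _ _ hx]
          exact hsy.symm
        have hst : h t + c = s + t := by
          refine H.injective_on_short_time hx hx₀ hT hKT ?_ heq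
          rw [abs_le] at ht hs ⊢
          constructor <;> linarith
        rwa [show h t + c - t = s by linarith])
    refine ⟨fun t => h t + c, ⟨hh.1.1.add continuous_const, hh.1.2.1.add_const c,
      fun z => (hh.1.2.2 (z - c)).imp fun t ht => by simp [ht]⟩, hy_eq, fun t => ?_⟩
    exact ((H.diam_arc_le hC hx t _).trans (mul_le_mul_of_nonneg_left (hsmall t) hC)).trans_lt
      hεβ

/-- Efficiency and property (*) imply rescaling expansiveness. -/
theorem rescalingExpansive (H : LipschitzFlow φ X Λ K C) {T : ℝ} (hT : 0 < T)
    (hKT : K * T ≤ 1 / 4) (heff : Efficient φ X Λ) (hstar : StarProperty φ X Λ) :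
    RescalingExpansive φ X Λ := by
  intro ε hε
  obtain ⟨δs, hδs, heff⟩ := heff
  obtain ⟨δ₁, hδ₁, hstar⟩ := hstar δs hδs
  obtain ⟨τ, hτ, hτε, hτT⟩ : ∃ τ > 0, τ ≤ ε ∧ τ ≤ T :=
    ⟨min ε T, lt_min hε hT, min_le_left _ _, min_le_right _ _⟩
  obtain ⟨δ, hδ, hδδ₁, hδδs, hδτ⟩ : ∃ δ > 0, δ ≤ δ₁ ∧ 2 * δ < δs ∧ 4 * δ ≤ τ :=
    ⟨min δ₁ (min (δs / 4) (τ / 4)), by positivity, min_le_left _ _,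
      by linarith [(min_le_right δ₁ _).trans (min_le_left (δs / 4) (τ / 4))],
      by linarith [(min_le_right δ₁ _).trans (min_le_right (δs / 4) (τ / 4))]⟩
  refine ⟨δ, hδ, fun x hx y hy h hh hd t => ?_⟩
  by_cases hx₀ : ∃ a, X (φ a x) = 0
  · obtain ⟨a, ha⟩ := hx₀
    have hfix := H.eq_of_velocity_eq_zero hx ha
    obtain rfl := H.eq_of_rescaled_dist_le hx hy hh.2 hd (hfix a ▸ ha)
    exact ⟨0, by simp [hε.le], by simp only [hfix]⟩
  · push Not at hx₀
    obtain ⟨g, hg, hgy, hdiam⟩ := hstar x hx y hy h hh fun t =>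
      (hd t).trans (mul_le_mul_of_nonneg_right hδδ₁ (norm_nonneg _))
    have hnofix : ¬ ∀ t, φ t x = x := fun hfix => by
      refine hx₀ 0 ((H.deriv x hx 0).unique ?_)
      simpa only [hfix] using hasDerivAt_const (0 : ℝ) x
    have hball := heff (2 * δ) (by positivity) hδδs x hx hnofix g hg
      (fun t => by
        have := mul_pos hδ (norm_pos_iff.2 (hx₀ t))
        rw [← hgy]
        linarith [hd t]) hdiam t
    -- A point of the arc at time distance `τ` from `t` would lie outside the ball.
    have hfar : ∀ s ∈ uIcc t (g t), |s - t| ≠ τ := fun s hs hsτ => by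
      have h₁ : dist (φ s x) (φ t x) < 2 * δ * ‖X (φ t x)‖ := hball ⟨s, hs, rfl⟩
      have h₂ := H.half_norm_mul_abs_le_dist hx hT hKT (hsτ.le.trans hτT)
      rw [hsτ] at h₂
      nlinarith [norm_nonneg (X (φ t x))]
    have hclose : |g t - t| ≤ τ := by
      by_contra! hlt
      have hτ_mem : τ ∈ uIcc |t - t| |g t - t| := by
        rw [sub_self, abs_zero]
        exact mem_uIcc.2 (Or.inl ⟨hτ.le, hlt.le⟩)
      obtain ⟨s, hs, hsτ⟩ := intermediate_value_uIcc (f := fun s => |s - t|)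
        (continuous_id.sub continuous_const).abs.continuousOn hτ_mem
      exact hfar s hs hsτ
    refine ⟨g t - t, ?_, ?_⟩
    · rw [uIcc_of_le (by linarith)]
      exact abs_le.1 (hclose.trans hτε)
    · change φ (g t - t) (φ t x) = φ (h t) y
      rw [hgy, ← H.map_add _ _ _ hx, sub_add_cancel]

end LipschitzFlow

/-- Let `M ⊂ ℝ^d` be a compact C² manifold, `φ` a flow on `M` with
C¹ velocity field `X`, and `Λ ⊆ M` a compact `φ`-invariant subset whose fixed
points are all dynamically isolated. If `φ|Λ` is rescaling expansive then property
(*) holds; conversely, if `φ|Λ` is efficient and satisfies (*), then `φ|Λ` is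
rescaling expansive. -/
theorem rescaling_iff_starProperty {d : ℕ}
    (φ : ℝ → Euc d → Euc d) (X : Euc d → Euc d) (M Λ : Set (Euc d))
    (hMc : IsCompact M) (hflow : FlowOn φ M) (hX : ContDiff ℝ 1 X)
    (hvel : ∀ x ∈ M, ∀ t : ℝ, HasDerivAt (fun s : ℝ => φ s x) (X (φ t x)) t)
    (hΛM : Λ ⊆ M) (hΛc : IsCompact Λ) (hΛinv : ∀ t : ℝ, Set.MapsTo (φ t) Λ Λ)
    (hiso : ∀ σ ∈ fixOn φ Λ, DynIsolated φ Λ σ) :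
    (RescalingExpansive φ X Λ → StarProperty φ X Λ) ∧
    (Efficient φ X Λ → StarProperty φ X Λ → RescalingExpansive φ X Λ) := by
  have hlip := hX.locallyLipschitz.locallyLipschitzOn (s := Λ)
  obtain ⟨K, hK⟩ := hlip.exists_lipschitzOnWith_of_compact hΛc
  obtain ⟨C, hC⟩ := hΛc.exists_bound_of_continuousOn hX.continuous.continuousOn
  have H : LipschitzFlow φ X Λ K (max C 0) :=
    { lipschitz := hK
      bound := fun x hx => (hC x hx).trans (le_max_left _ _)
      deriv := fun x hx => hvel x (hΛM hx)
      mapsTo := hΛinv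
      map_zero := fun x hx => hflow.2.2.1 x (hΛM hx)
      map_add := fun s t x hx => hflow.2.2.2 s t x (hΛM hx) }
  have hT : 0 < 1 / (4 * ((K : ℝ) + 1)) := by positivity
  have hKT : K * (1 / (4 * ((K : ℝ) + 1))) ≤ 1 / 4 := by
    rw [mul_one_div, div_le_div_iff₀ (by positivity) (by positivity)]
    linarith
  exact ⟨H.starProperty (le_max_right _ _) hT hKT, H.rescalingExpansive hT hKT⟩
end
end

section
/- For a flow φ on a compact metric space (Λ, dist) the following statements are equivalent: (a) φ is k*-expansive; (b) for all β > 0 there is δ > 0 such that if x, y ∈ Λ, h ∈ H⁺₀(ℝ) and dist(φ_t(x), φ_{h(t)}(y)) ≤ δ for all t ∈ ℝ, then y = φ_u(x) for some u ∈ ℝ with diam(φ_{[0,u]}(x)) < β; (c) for all β > 0 there is δ > 0 such that if x, y ∈ Λ, h ∈ H⁺₀(ℝ) and dist(φ_t(x), φ_{h(t)}(y)) ≤ δ for all t ∈ ℝ, then there is g ∈ H⁺(ℝ) such that φ_{h(t)}(y) = φ_{g(t)}(x) for all t ∈ ℝ and diam(φ_{[t,g(t)]}(x)) < β for all t ∈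 ℝ. -/
open Metric Set Function

noncomputable section

/-- (a) `φ` is k*-expansive: for all `ε > 0` there is `δ > 0` such that if
`x, y ∈ Λ`, `h ∈ H⁺₀(ℝ)` and `dist (φ_t x) (φ_{h t} y) ≤ δ` for all `t`, then
`φ_{h t₀} y ∈ φ_{[-ε,ε]} (φ_{t₀} x)` for some `t₀`. -/
def KStarExpansive {α : Type*} [MetricSpace α] (φ : ℝ → α → α) : Prop :=
  ∀ ε > (0 : ℝ), ∃ δ > (0 : ℝ), ∀ x y : α, ∀ h : ℝ → ℝ, IsHplus0 h →
    (∀ t : ℝ, dist (φ t x) (φ (h t) y) ≤ δ) →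
    ∃ t₀ : ℝ, φ (h t₀) y ∈ arc φ (φ t₀ x) (-ε) ε

/-- (b) for all `β > 0` there is `δ > 0` such that if `x, y ∈ Λ`, `h ∈ H⁺₀(ℝ)` and
`dist (φ_t x) (φ_{h t} y) ≤ δ` for all `t`, then `y = φ_u x` for some `u` with
`diam (φ_{[0,u]} x) < β`. -/
def KStarPropB {α : Type*} [MetricSpace α] (φ : ℝ → α → α) : Prop :=
  ∀ β > (0 : ℝ), ∃ δ > (0 : ℝ), ∀ x y : α, ∀ h : ℝ → ℝ, IsHplus0 h →
    (∀ t : ℝ, dist (φ t x) (φ (h t) y) ≤ δ) →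
    ∃ u : ℝ, y = φ u x ∧ Metric.diam (arc φ x 0 u) < β

/-- (c) for all `β > 0` there is `δ > 0` such that if `x, y ∈ Λ`, `h ∈ H⁺₀(ℝ)` and
`dist (φ_t x) (φ_{h t} y) ≤ δ` for all `t`, then there is `g ∈ H⁺(ℝ)` such that
`φ_{h t} y = φ_{g t} x` for all `t`, with `diam (φ_{[t, g t]} x) < β` for all `t`. -/
def KStarPropC {α : Type*} [MetricSpace α] (φ : ℝ → α → α) : Prop :=
  ∀ β > (0 : ℝ), ∃ δ > (0 : ℝ), ∀ x y : α, ∀ h : ℝ → ℝ, IsHplus0 h →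
    (∀ t : ℝ, dist (φ t x) (φ (h t) y) ≤ δ) →
    ∃ g : ℝ → ℝ, IsHplus g ∧ (∀ t : ℝ, φ (h t) y = φ (g t) x) ∧
      ∀ t : ℝ, Metric.diam (arc φ x t (g t)) < β

open Filter Topology

/-- In a compact space every sequence converges along a given ultrafilter. -/
lemma Ultrafilter.exists_tendsto_of_compactSpace {ι X : Type*} [TopologicalSpace X]
    [CompactSpace X] (U : Ultrafilter ι) (f : ι → X) : ∃ z, Tendsto f U (𝓝 z) := by
  obtain ⟨z, -, hz⟩ := isCompact_univ.ultrafilter_le_nhds (U.map f) (by simp)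
  exact ⟨z, hz⟩

/-- Along an ultrafilter, a nonnegative real sequence converges or tends to infinity. -/
lemma Ultrafilter.tendsto_nhds_or_tendsto_atTop {ι : Type*} (U : Ultrafilter ι) {f : ι → ℝ}
    (hf : ∀ i, 0 ≤ f i) : (∃ a, Tendsto f U (𝓝 a)) ∨ Tendsto f U atTop := by
  by_cases h : ∃ M, ∀ᶠ i in (U : Filter ι), f i ≤ M
  · obtain ⟨M, hM⟩ := h
    obtain ⟨a, -, ha⟩ := (isCompact_Icc (a := (0 : ℝ)) (b := M)).ultrafilter_le_nhds (U.map f)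
      (by
        rw [le_principal_iff, Ultrafilter.coe_map, Filter.mem_map]
        filter_upwards [hM] with i hi using ⟨hf i, hi⟩)
    exact Or.inl ⟨a, ha⟩
  · push Not at h
    refine Or.inr (tendsto_atTop.2 fun M => ?_)
    filter_upwards [h M] with i hi using hi.le

namespace IsFlow

section Topological

variable {X : Type*} [TopologicalSpace X] {φ : ℝ → X → X}

lemma continuous_time (hφ : IsFlow φ) (x : X) : Continuous fun t => φ t x :=
  hφ.1.comp (by fun_prop : Continuous fun t : ℝ => (t, x))

lemma tendsto (hφ : IsFlow φ) {ι : Type*} {l : Filter ι} {t : ι → ℝ} {x : ι → X} {s : ℝ} {z : X}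
    (ht : Tendsto t l (𝓝 s)) (hx : Tendsto x l (𝓝 z)) :
    Tendsto (fun i => φ (t i) (x i)) l (𝓝 (φ s z)) :=
  (hφ.1.tendsto (s, z)).comp (ht.prodMk_nhds hx)

lemma periodic (hφ : IsFlow φ) {z : X} {u : ℝ} (h : φ u z = z) :
    Function.Periodic (fun t => φ t z) u := fun t => by
  simp only [hφ.2.2, h]

/-- A point that does not move during a time interval `[0, ε]` is fixed. -/
lemma mem_fixSet_of_forall_Icc (hφ : IsFlow φ) {z : X} {ε : ℝ} (hε : 0 < ε)
    (h : ∀ s ∈ Icc 0 ε, φ s z = z) : z ∈ fixSet φ := fun t => by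
  obtain ⟨s, hs, hst⟩ := (hφ.periodic (h ε ⟨hε.le, le_rfl⟩)).exists_mem_Ico₀ hε t
  exact hst.trans (h s ⟨hs.1, hs.2.le⟩)

/-- A point is fixed as soon as its time-`s` image is itself for all `s ∈ [-ε, 0]`. -/
lemma mem_fixSet_of_forall_Icc_neg (hφ : IsFlow φ) {z : X} {ε : ℝ} (hε : 0 < ε)
    (h : ∀ s ∈ Icc (-ε) 0, φ s z = z) : z ∈ fixSet φ :=
  hφ.mem_fixSet_of_forall_Icc hε fun s hs => by
    conv_lhs => rw [← h (-s) ⟨by linarith [hs.2], by linarith [hs.1]⟩]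
    rw [← hφ.2.2, add_neg_cancel, hφ.2.1]

end Topological

variable {X : Type*} [MetricSpace X] [CompactSpace X] {φ : ℝ → X → X}

/-- Small times move all points of a compact space a small amount. -/
lemma exists_forall_dist_lt (hφ : IsFlow φ) {ρ : ℝ} (hρ : 0 < ρ) :
    ∃ ε > 0, ∀ s : ℝ, |s| ≤ ε → ∀ z, dist z (φ s z) < ρ := by
  have hopen : IsOpen {p : ℝ × X | dist p.2 (φ p.1 p.2) < ρ} :=
    isOpen_lt (continuous_snd.dist hφ.1) continuous_const
  have hev : ∀ᶠ s in 𝓝 (0 : ℝ), ∀ z ∈ (univ : Set X), dist z (φ s z) < ρ := by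
    refine isCompact_univ.eventually_forall_of_forall_eventually fun z _ => ?_
    exact hopen.mem_nhds (by simpa [hφ.2.1] using hρ)
  obtain ⟨ε, hε, h⟩ := Metric.eventually_nhds_iff.1 hev
  refine ⟨ε / 2, by positivity, fun s hs z => h ?_ z (mem_univ z)⟩
  rw [Real.dist_eq, sub_zero]
  linarith

end IsFlow

/-- `r` is an isolation constant for the fixed points: the only orbit that stays within
distance `r` of a fixed point is that fixed point. -/
def IsFixIsolating {X : Type*} [MetricSpace X] (φ : ℝ → X → X) (r : ℝ) : Prop :=
  ∀ σ ∈ fixSet φ, ∀ y, (∀ t, dist σ (φ t y) ≤ r) → y = σ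

lemma isHplus0_id : IsHplus0 id := ⟨⟨continuous_id, strictMono_id, surjective_id⟩, rfl⟩

lemma IsHplus.shift {h : ℝ → ℝ} (hh : IsHplus h) (a b : ℝ) :
    IsHplus fun t => h (t + a) + b := by
  obtain ⟨hc, hm, hs⟩ := hh
  refine ⟨by fun_prop, fun s t hst => ?_, fun r => ?_⟩
  · have : h (s + a) < h (t + a) := hm (by linarith)
    simpa using this
  · obtain ⟨t, ht⟩ := hs (r - b)
    exact ⟨t - a, by simp [ht]⟩

section

variable {X : Type*} [MetricSpace X] {φ : ℝ → X → X}

lemma KStarExpansive.exists_isFixIsolating (hφ : IsFlow φ) (ha : KStarExpansive φ) :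
    ∃ r > 0, IsFixIsolating φ r := by
  obtain ⟨r, hr, h⟩ := ha 1 one_pos
  refine ⟨r, hr, fun σ hσ y hy => ?_⟩
  obtain ⟨t, s, -, hs⟩ := h σ y id isHplus0_id fun t => by rw [hσ t]; exact hy t
  simp only [hσ t, hσ s, id] at hs
  rw [← hφ.2.1 y, ← neg_add_cancel t, hφ.2.2, ← hs, hσ]

lemma KStarPropB.exists_isFixIsolating (hb : KStarPropB φ) :
    ∃ r > 0, IsFixIsolating φ r := by
  obtain ⟨r, hr, h⟩ := hb 1 one_pos
  refine ⟨r, hr, fun σ hσ y hy => ?_⟩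
  obtain ⟨u, hu, -⟩ := h σ y id isHplus0_id fun t => by rw [hσ t]; exact hy t
  rw [hu, hσ]

lemma IsFixIsolating.eq {r : ℝ} (hr : IsFixIsolating φ r) {σ τ : X} (hσ : σ ∈ fixSet φ)
    (hτ : τ ∈ fixSet φ) (h : dist σ τ ≤ r) : τ = σ :=
  hr σ hσ τ fun t => by rwa [hτ t]

/-- If the fixed points are isolated, an orbit contained in a small neighbourhood of the set of
fixed points is a fixed point. -/
lemma IsFixIsolating.mem_fixSet_of_orbit_near (hφ : IsFlow φ) {r : ℝ} (hr0 : 0 < r)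
    (hr : IsFixIsolating φ (3 * r)) {x : X} (hx : ∀ t, ∃ σ ∈ fixSet φ, dist (φ t x) σ < r) :
    x ∈ fixSet φ := by
  obtain ⟨σ, hσ, hσx⟩ := hx 0
  have hc : Continuous fun t => dist (φ t x) σ := (hφ.continuous_time x).dist continuous_const
  have heq : {t | dist (φ t x) σ < r} = {t | dist (φ t x) σ ≤ 2 * r} := by
    ext t
    refine ⟨fun h => by simp only [mem_ofPred_eq] at h ⊢; linarith, fun h => ?_⟩
    obtain ⟨τ, hτ, hτx⟩ := hx t
    have hστ : τ = σ := hr.eq hσ hτ <| by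
      have := dist_triangle_left σ τ (φ t x)
      simp only [mem_ofPred_eq] at h
      linarith
    simpa [← hστ] using hτx
  have huniv : {t | dist (φ t x) σ < r} = univ := IsClopen.eq_univ
    ⟨by rw [heq]; exact isClosed_le hc continuous_const, isOpen_lt hc continuous_const⟩ ⟨0, hσx⟩
  have : x = σ := hr σ hσ x fun t => by
    have ht : t ∈ {t | dist (φ t x) σ < r} := huniv ▸ mem_univ t
    simp only [mem_ofPred_eq] at ht
    rw [dist_comm]
    linarith
  exact this ▸ hσ

/-- Segments of a flow along continuously moving endpoints: if one segment has size less than `η`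
and segments of size at most `η` have size less than `η`, then all have size less than `η`. -/
lemma IsFlow.forall_uIcc_dist_lt_of_bootstrap (hφ : IsFlow φ) {g : ℝ → ℝ} (hg : Continuous g)
    {η : ℝ} {x : X} {t₀ : ℝ}
    (h₀ : ∀ p ∈ uIcc t₀ (g t₀), ∀ q ∈ uIcc t₀ (g t₀), dist (φ p x) (φ q x) < η)
    (hstep : ∀ t, (∀ p ∈ uIcc t (g t), ∀ q ∈ uIcc t (g t), dist (φ p x) (φ q x) ≤ η) →
      ∀ p ∈ uIcc t (g t), ∀ q ∈ uIcc t (g t), dist (φ p x) (φ q x) < η) (t : ℝ) :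
    ∀ p ∈ uIcc t (g t), ∀ q ∈ uIcc t (g t), dist (φ p x) (φ q x) < η := by
  let F : ℝ → ℝ × ℝ → ℝ := fun t c =>
    dist (φ (t + c.1 * (g t - t)) x) (φ (t + c.2 * (g t - t)) x)
  have hF : Continuous (uncurry F) :=
    ((hφ.continuous_time x).comp (by fun_prop)).dist ((hφ.continuous_time x).comp (by fun_prop))
  have himg : ∀ t, uIcc t (g t) = (fun c => t + c * (g t - t)) '' Icc (0 : ℝ) 1 := fun t => by
    rw [← segment_eq_uIcc, segment_eq_image']
    simp [smul_eq_mul]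
  have hpairs : ∀ (R : ℝ → Prop) t,
      (∀ p ∈ uIcc t (g t), ∀ q ∈ uIcc t (g t), R (dist (φ p x) (φ q x))) ↔
        ∀ c ∈ Icc (0 : ℝ) 1 ×ˢ Icc (0 : ℝ) 1, R (F t c) := fun R t => by
    simp only [himg, forall_mem_image, F, Prod.forall, mem_prod, and_imp]
    exact ⟨fun h a b ha hb => h ha hb, fun h a ha b hb => h a b ha hb⟩
  rw [hpairs (· < η)] at h₀ ⊢
  simp only [hpairs (· < η), hpairs (· ≤ η)] at hstep
  let K := Icc (0 : ℝ) 1 ×ˢ Icc (0 : ℝ) 1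
  have heq : {t | ∀ c ∈ K, F t c < η} = {t | ∀ c ∈ K, F t c ≤ η} :=
    Subset.antisymm (fun t ht c hc => (ht c hc).le) hstep
  have hopen : IsOpen {t | ∀ c ∈ K, F t c < η} := isOpen_iff_eventually.2 fun t ht =>
    (isCompact_Icc.prod isCompact_Icc).eventually_forall_of_forall_eventually fun c hc =>
      (isOpen_lt hF continuous_const).mem_nhds (ht c hc)
  have hclosed : IsClosed {t | ∀ c ∈ K, F t c < η} := by
    rw [heq]
    simp only [ofPred_forall]
    exact isClosed_biInter fun c _ =>
      isClosed_le (hF.comp (by fun_prop : Continuous fun t => (t, c))) continuous_const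
  have huniv := IsClopen.eq_univ ⟨hclosed, hopen⟩ ⟨t₀, h₀⟩
  exact eq_univ_iff_forall.1 huniv t

variable [CompactSpace X]

/-- If the fixed points are isolated, orbits of sufficiently small diameter are fixed points. -/
lemma IsFixIsolating.exists_small_orbit_fixed (hφ : IsFlow φ) {r : ℝ} (hr0 : 0 < r)
    (hr : IsFixIsolating φ r) :
    ∃ η > 0, ∀ z, (∀ s t, dist (φ s z) (φ t z) ≤ η) → z ∈ fixSet φ := by
  by_contra! hcon
  choose x hx hxf using fun n : ℕ => hcon (1 / ((n : ℝ) + 1)) Nat.one_div_pos_of_nat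
  let U : Ultrafilter ℕ := hyperfilter ℕ
  have hU : Tendsto (fun n : ℕ => 1 / ((n : ℝ) + 1)) U (𝓝 0) :=
    tendsto_one_div_add_atTop_nhds_zero_nat.mono_left Nat.hyperfilter_le_atTop
  obtain ⟨z, hz⟩ := U.exists_tendsto_of_compactSpace x
  have hzf : z ∈ fixSet φ := fun t => by
    have hlim := (hφ.tendsto (tendsto_const_nhds (x := t)) hz).dist hz
    refine dist_le_zero.1 (le_of_tendsto_of_tendsto' hlim hU fun n => ?_)
    simpa [hφ.2.1] using hx n t 0
  have h1 : ∀ᶠ n in (U : Filter ℕ), dist (x n) z < r / 2 :=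
    hz.eventually (Metric.ball_mem_nhds z (by positivity))
  have h2 : ∀ᶠ n : ℕ in (U : Filter ℕ), 1 / ((n : ℝ) + 1) < r / 2 :=
    hU.eventually_lt_const (by positivity)
  obtain ⟨n, hn1, hn2⟩ := (h1.and h2).exists
  refine hxf n ((hr z hzf (x n) fun t => ?_) ▸ hzf)
  have h3 := hx n 0 t
  rw [hφ.2.1] at h3
  have h4 := dist_triangle_left z (φ t (x n)) (x n)
  linarith

/-- Suppose that orbits of diameter at most `η` are fixed points, and that fixed points at distance
at most `η` coincide. Then almost closed orbit segments of diameter at most `η` are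
arbitrarily small. -/
lemma IsFlow.exists_forall_dist_lt_of_almost_closed (hφ : IsFlow φ) {η ρ : ℝ} (hρ : 0 < ρ)
    (hfix : ∀ z, (∀ s t, dist (φ s z) (φ t z) ≤ η) → z ∈ fixSet φ)
    (hiso : ∀ σ ∈ fixSet φ, ∀ τ ∈ fixSet φ, dist σ τ ≤ η → σ = τ) :
    ∃ δ > 0, ∀ x u, dist x (φ u x) ≤ δ →
      (∀ s ∈ Icc 0 u, ∀ t ∈ Icc 0 u, dist (φ s x) (φ t x) ≤ η) →
      ∀ s ∈ Icc 0 u, dist x (φ s x) < ρ := by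
  by_contra! hcon
  choose x u hxu hη a ha hρa using fun n : ℕ => hcon (1 / ((n : ℝ) + 1)) Nat.one_div_pos_of_nat
  let U : Ultrafilter ℕ := hyperfilter ℕ
  have hU : Tendsto (fun n : ℕ => 1 / ((n : ℝ) + 1)) U (𝓝 0) :=
    tendsto_one_div_add_atTop_nhds_zero_nat.mono_left Nat.hyperfilter_le_atTop
  have hu0 : ∀ n, 0 ≤ u n := fun n => (ha n).1.trans (ha n).2
  obtain ⟨z, hz⟩ := U.exists_tendsto_of_compactSpace x
  obtain ⟨w, hw⟩ := U.exists_tendsto_of_compactSpace fun n => φ (a n) (x n)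
  have hz' : Tendsto (fun n => φ (u n) (x n)) U (𝓝 z) := by
    rw [tendsto_iff_dist_tendsto_zero] at hz ⊢
    refine squeeze_zero (fun _ => dist_nonneg) (fun n => ?_) (by simpa only [add_zero] using hU.add hz)
    exact (dist_triangle_left _ _ (x n)).trans (by gcongr; exact hxu n)
  have hρzw : ρ ≤ dist z w := ge_of_tendsto' (hz.dist hw) hρa
  have hne : z ≠ w := fun h => by simp [h] at hρzw; linarith
  have hηzw : dist z w ≤ η := le_of_tendsto' (hz.dist hw) fun n => by
    simpa [hφ.2.1] using hη n 0 ⟨le_rfl, hu0 n⟩ (a n) (ha n)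
  -- pointwise limits of the given segments have diameter at most `η`
  have hlim : ∀ (p q : ℕ → ℝ) (v v' : X), Tendsto (fun n => φ (p n) (x n)) U (𝓝 v) →
      Tendsto (fun n => φ (q n) (x n)) U (𝓝 v') →
      (∀ᶠ n in (U : Filter ℕ), p n ∈ Icc 0 (u n)) →
      (∀ᶠ n in (U : Filter ℕ), q n ∈ Icc 0 (u n)) → dist v v' ≤ η := by
    intro p q v v' hp hq hpu hqu
    refine le_of_tendsto (hp.dist hq) ?_
    filter_upwards [hpu, hqu] with n h1 h2 using hη n _ h1 _ h2
  have hzf : z ∈ fixSet φ := by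
    rcases U.tendsto_nhds_or_tendsto_atTop hu0 with ⟨c, hc⟩ | hinf
    · have hc0 : 0 ≤ c := ge_of_tendsto' hc hu0
      have hcz : φ c z = z := tendsto_nhds_unique (hφ.tendsto hc hz) hz'
      rcases hc0.eq_or_lt with rfl | hcpos
      · have ha0 : Tendsto a U (𝓝 0) := squeeze_zero (fun n => (ha n).1) (fun n => (ha n).2) hc
        exact absurd (tendsto_nhds_unique (by simpa [hφ.2.1] using hφ.tendsto ha0 hz) hw) hne
      · refine hfix z fun s t => ?_
        obtain ⟨s', hs', hs⟩ := (hφ.periodic hcz).exists_mem_Ico₀ hcpos s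
        obtain ⟨t', ht', ht⟩ := (hφ.periodic hcz).exists_mem_Ico₀ hcpos t
        rw [hs, ht]
        refine hlim (fun _ => s') (fun _ => t') _ _ (hφ.tendsto tendsto_const_nhds hz)
          (hφ.tendsto tendsto_const_nhds hz) ?_ ?_
        · filter_upwards [hc.eventually_const_lt hs'.2] with n hn using ⟨hs'.1, hn.le⟩
        · filter_upwards [hc.eventually_const_lt ht'.2] with n hn using ⟨ht'.1, hn.le⟩
    · have key : ∀ s, ∃ p : ℕ → ℝ, Tendsto (fun n => φ (p n) (x n)) U (𝓝 (φ s z)) ∧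
          ∀ᶠ n in (U : Filter ℕ), p n ∈ Icc 0 (u n) := by
        intro s
        rcases le_total 0 s with hs | hs
        · refine ⟨fun _ => s, hφ.tendsto tendsto_const_nhds hz, ?_⟩
          filter_upwards [hinf.eventually_ge_atTop s] with n hn using ⟨hs, hn⟩
        · refine ⟨fun n => s + u n, ?_, ?_⟩
          · simp only [hφ.2.2]
            exact hφ.tendsto tendsto_const_nhds hz'
          · filter_upwards [hinf.eventually_ge_atTop (-s)] with n hn
            exact ⟨by linarith, by linarith⟩
      refine hfix z fun s t => ?_
      obtain ⟨p, hp, hpu⟩ := key s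
      obtain ⟨q, hq, hqu⟩ := key t
      exact hlim p q _ _ hp hq hpu hqu
  rcases U.tendsto_nhds_or_tendsto_atTop fun n => (ha n).1 with ⟨c, hc⟩ | hainf
  · exact hne (tendsto_nhds_unique (by simpa only [hzf c] using hφ.tendsto hc hz) hw)
  rcases U.tendsto_nhds_or_tendsto_atTop fun n => sub_nonneg.2 (ha n).2 with ⟨c, hc⟩ | hinf
  · refine hne (tendsto_nhds_unique ?_ hw)
    have := hφ.tendsto hc.neg hz'
    simpa only [hzf (-c), ← hφ.2.2, neg_sub, sub_add_cancel] using this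
  · have hwf : w ∈ fixSet φ := by
      have key : ∀ s, ∀ᶠ n in (U : Filter ℕ), s + a n ∈ Icc 0 (u n) := fun s => by
        filter_upwards [hainf.eventually_ge_atTop (-s), hinf.eventually_ge_atTop s] with n h1 h2
        exact ⟨by linarith, by linarith⟩
      have hlimw : ∀ s, Tendsto (fun n => φ (s + a n) (x n)) U (𝓝 (φ s w)) := fun s => by
        simp only [hφ.2.2]
        exact hφ.tendsto tendsto_const_nhds hw
      exact hfix w fun s t => hlim _ _ _ _ (hlimw s) (hlimw t) (key s) (key t)
    exact hne (hiso z hzf w hwf hηzw)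

/-- Version of `IsFlow.exists_forall_dist_lt_of_almost_closed` for segments with arbitrary
endpoints. -/
lemma IsFlow.exists_forall_uIcc_dist_lt (hφ : IsFlow φ) {η ρ : ℝ} (hρ : 0 < ρ)
    (hfix : ∀ z, (∀ s t, dist (φ s z) (φ t z) ≤ η) → z ∈ fixSet φ)
    (hiso : ∀ σ ∈ fixSet φ, ∀ τ ∈ fixSet φ, dist σ τ ≤ η → σ = τ) :
    ∃ δ > 0, ∀ x a b, dist (φ a x) (φ b x) ≤ δ →
      (∀ s ∈ uIcc a b, ∀ t ∈ uIcc a b, dist (φ s x) (φ t x) ≤ η) →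
      ∀ s ∈ uIcc a b, ∀ t ∈ uIcc a b, dist (φ s x) (φ t x) < ρ := by
  obtain ⟨δ, hδ, h⟩ := hφ.exists_forall_dist_lt_of_almost_closed (half_pos hρ) hfix hiso
  refine ⟨δ, hδ, fun x a b hab hη => ?_⟩
  wlog hle : a ≤ b generalizing a b
  · rw [uIcc_comm] at hη ⊢
    exact this b a (by rwa [dist_comm]) hη (le_of_not_ge hle)
  rw [uIcc_of_le hle] at hη ⊢
  have key : ∀ s ∈ Icc a b, dist (φ a x) (φ s x) < ρ / 2 := fun s hs => by
    have := h (φ a x) (b - a) (by rwa [← hφ.2.2, sub_add_cancel]) (fun s hs t ht => by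
      rw [← hφ.2.2, ← hφ.2.2]
      exact hη _ ⟨by linarith [hs.1], by linarith [hs.2]⟩ _
        ⟨by linarith [ht.1], by linarith [ht.2]⟩) (s - a)
        ⟨by linarith [hs.1], by linarith [hs.2]⟩
    rwa [← hφ.2.2, sub_add_cancel] at this
  intro s hs t ht
  have := dist_triangle_left (φ s x) (φ t x) (φ a x)
  linarith [key s hs, key t ht]

lemma KStarExpansive.kStarPropC (hφ : IsFlow φ) (ha : KStarExpansive φ) : KStarPropC φ := by
  intro β hβ
  obtain ⟨r, hr0, hr⟩ := ha.exists_isFixIsolating hφ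
  obtain ⟨η₀, hη₀, hfix⟩ := hr.exists_small_orbit_fixed hφ hr0
  obtain ⟨η, hη, hηη₀, hηr, hηβ⟩ : ∃ η > 0, η ≤ η₀ ∧ η ≤ r ∧ η < β :=
    ⟨min (min η₀ r) (β / 2), by positivity, (min_le_left _ _).trans (min_le_left _ _),
      (min_le_left _ _).trans (min_le_right _ _), (min_le_right _ _).trans_lt (by linarith)⟩
  obtain ⟨ε, hε, hsmall⟩ := hφ.exists_forall_dist_lt (half_pos hη)
  obtain ⟨δ₁, hδ₁, hclose⟩ := hφ.exists_forall_uIcc_dist_lt hη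
    (fun z hz => hfix z fun s t => (hz s t).trans hηη₀)
    (fun σ hσ τ hτ h => (hr.eq hσ hτ (h.trans hηr)).symm)
  obtain ⟨δ₂, hδ₂, hexp⟩ := ha ε hε
  refine ⟨min δ₁ δ₂, by positivity, fun x y h hh hxy => ?_⟩
  obtain ⟨t₀, s, hs, hst⟩ := hexp x y h hh fun t => (hxy t).trans (min_le_right _ _)
  rw [uIcc_of_le (by linarith)] at hs
  simp only [← hφ.2.2] at hst
  let g : ℝ → ℝ := fun t => h (t + 0) + (s + t₀ - h t₀)
  have hg : IsHplus g := hh.1.shift 0 _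
  have hgy : ∀ t, φ (h t) y = φ (g t) x := fun t => by
    have : g t = (h t - h t₀) + (s + t₀) := by simp only [g, add_zero]; ring
    rw [this, hφ.2.2, hst, ← hφ.2.2, sub_add_cancel]
  refine ⟨g, hg, hgy, fun t => ?_⟩
  have hall := hφ.forall_uIcc_dist_lt_of_bootstrap (η := η) (x := x) (t₀ := t₀) hg.1 ?_
    (fun t => hclose x t (g t) (by rw [← hgy]; exact (hxy t).trans (min_le_left _ _))) t
  · refine (Metric.diam_le_of_forall_dist_le hη.le ?_).trans_lt hηβ
    rintro _ ⟨p, hp, rfl⟩ _ ⟨q, hq, rfl⟩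
    exact (hall p hp q hq).le
  · have hgt : g t₀ = t₀ + s := by simp only [g, add_zero]; ring
    have key : ∀ p ∈ uIcc t₀ (g t₀), dist (φ t₀ x) (φ p x) < η / 2 := fun p hp => by
      have hp' : |p - t₀| ≤ ε := by
        have := abs_sub_left_of_mem_uIcc hp
        rw [hgt, add_sub_cancel_left] at this
        exact this.trans (abs_le.2 hs)
      have := hsmall (p - t₀) hp' (φ t₀ x)
      rwa [← hφ.2.2, sub_add_cancel] at this
    intro p hp q hq
    have := dist_triangle_left (φ p x) (φ q x) (φ t₀ x)
    linarith [key p hp, key q hq]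

/-- Away from the fixed points, orbit segments of small diameter last a short time. -/
lemma IsFlow.exists_forall_abs_le_of_diam_lt (hφ : IsFlow φ) {r ε : ℝ} (hr : 0 < r)
    (hε : 0 < ε) : ∃ β > 0, ∀ z u, (∀ σ ∈ fixSet φ, r ≤ dist z σ) →
      Metric.diam (arc φ z 0 u) < β → |u| ≤ ε := by
  by_contra! hcon
  choose x u hx hdiam hu using fun n : ℕ => hcon (1 / ((n : ℝ) + 1)) Nat.one_div_pos_of_nat
  let U : Ultrafilter ℕ := hyperfilter ℕ
  have hU : Tendsto (fun n : ℕ => 1 / ((n : ℝ) + 1)) U (𝓝 0) :=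
    tendsto_one_div_add_atTop_nhds_zero_nat.mono_left Nat.hyperfilter_le_atTop
  obtain ⟨z, hz⟩ := U.exists_tendsto_of_compactSpace x
  have hstay : ∀ s, (∀ᶠ n in (U : Filter ℕ), s ∈ uIcc 0 (u n)) → φ s z = z := fun s hs => by
    have hlim := (hφ.tendsto (tendsto_const_nhds (x := s)) hz).dist hz
    refine dist_le_zero.1 (le_of_tendsto_of_tendsto hlim hU ?_)
    filter_upwards [hs] with n hn
    refine le_trans ?_ (hdiam n).le
    exact Metric.dist_le_diam_of_mem isBounded_of_compactSpace ⟨s, hn, rfl⟩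
      ⟨0, left_mem_uIcc, hφ.2.1 _⟩
  have hzf : z ∈ fixSet φ := by
    have hor : ∀ᶠ n in (U : Filter ℕ), ε < u n ∨ ε < -u n :=
      Eventually.of_forall fun n => lt_abs.1 (hu n)
    rcases Ultrafilter.eventually_or.1 hor with h | h
    · refine hφ.mem_fixSet_of_forall_Icc hε fun s hs => hstay s ?_
      filter_upwards [h] with n hn
      rw [mem_uIcc]
      exact Or.inl ⟨hs.1, by linarith [hs.2]⟩
    · refine hφ.mem_fixSet_of_forall_Icc_neg hε fun s hs => hstay s ?_
      filter_upwards [h] with n hn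
      rw [mem_uIcc]
      exact Or.inr ⟨by linarith [hs.1], hs.2⟩
  have : r ≤ dist z z := ge_of_tendsto' (hz.dist tendsto_const_nhds) fun n => hx n z hzf
  rw [dist_self] at this
  linarith

lemma KStarPropB.kStarExpansive (hφ : IsFlow φ) (hb : KStarPropB φ) : KStarExpansive φ := by
  intro ε hε
  obtain ⟨r, hr0, hr⟩ := hb.exists_isFixIsolating
  obtain ⟨β, hβ, hshort⟩ := hφ.exists_forall_abs_le_of_diam_lt (r := r / 3) (by positivity) hε
  obtain ⟨δ, hδ, h⟩ := hb β hβ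
  refine ⟨δ, hδ, fun x y k hk hxy => ?_⟩
  by_cases hfar : ∃ t₀, ∀ σ ∈ fixSet φ, r / 3 ≤ dist (φ t₀ x) σ
  · obtain ⟨t₀, ht₀⟩ := hfar
    obtain ⟨u, hu, hdiam⟩ := h (φ t₀ x) (φ (k t₀) y) (fun t => k (t + t₀) + -k t₀)
      ⟨hk.1.shift _ _, by simp⟩ fun t => by
        simpa only [← hφ.2.2, neg_add_cancel_right] using hxy (t + t₀)
    refine ⟨t₀, u, ?_, hu.symm⟩
    rw [uIcc_of_le (by linarith)]
    exact abs_le.1 (hshort _ u ht₀ hdiam)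
  · push Not at hfar
    have hx : x ∈ fixSet φ := IsFixIsolating.mem_fixSet_of_orbit_near hφ (r := r / 3)
      (by positivity) (by rwa [mul_div_cancel₀ r three_ne_zero]) hfar
    obtain ⟨u, hu, -⟩ := h x y k hk hxy
    refine ⟨0, 0, by rw [uIcc_of_le (by linarith)]; exact ⟨by linarith, hε.le⟩, ?_⟩
    simp only [hφ.2.1, hk.2, hu, hx u]

end

lemma KStarPropC.kStarPropB {X : Type*} [MetricSpace X] {φ : ℝ → X → X} (hφ : IsFlow φ)
    (hc : KStarPropC φ) : KStarPropB φ := by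
  intro β hβ
  obtain ⟨δ, hδ, h⟩ := hc β hβ
  refine ⟨δ, hδ, fun x y k hk hxy => ?_⟩
  obtain ⟨g, -, hg, hdiam⟩ := h x y k hk hxy
  exact ⟨g 0, by rw [← hg 0, hk.2, hφ.2.1], hdiam 0⟩

/-- For a flow `φ` on a compact metric space `(Λ, dist)` the
statements (a), (b), (c) above are equivalent. -/
theorem kStarExpansive_tfae
    {Λ : Type*} [MetricSpace Λ] [CompactSpace Λ]
    (φ : ℝ → Λ → Λ) (hφ : IsFlow φ) :
    (KStarExpansive φ ↔ KStarPropB φ) ∧ (KStarExpansive φ ↔ KStarPropC φ) := by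
  have hac := KStarExpansive.kStarPropC hφ
  have hcb := KStarPropC.kStarPropB hφ
  have hba := KStarPropB.kStarExpansive hφ
  exact ⟨⟨fun h => hcb (hac h), hba⟩, ⟨hac, fun h => hba (hcb h)⟩⟩
end
end

section
/- Let M ⊂ ℝ^d be a compact C² manifold, φ a flow on M with C¹ velocity field X such that every fixed point of φ is hyperbolic, and Λ ⊂ M a compact φ-invariant subset. If φ|Λ is k*-expansive then φ|Λ is rescaling expansive. -/
open Metric Set Function

noncomputable section

/-- A fixed point `σ` is hyperbolic: the (complexified) derivative `d_σX` has no
eigenvalue with zero real part. -/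
def HyperbolicFixed {d : ℕ} (X : Euc d → Euc d) (σ : Euc d) : Prop :=
  ∀ μ : ℂ, Module.End.HasEigenvalue
      (LinearMap.baseChange ℂ (fderiv ℝ X σ).toLinearMap) μ → μ.re ≠ 0

/-- Two-sided displacement estimate: if `X` is `K`-Lipschitz on `M`, then over times at most `r`
with `K * r ≤ 1 / 4` the displacement along an orbit is comparable to `|s| * ‖X z‖`. -/
theorem displacement_bounds {E : Type*} [NormedAddCommGroup E] [NormedSpace ℝ E]
    {X : E → E} {M : Set E} {K : NNReal} (hK : LipschitzOnWith K X M)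
    {u : ℝ → E} (hu : ∀ s, u s ∈ M) (hd : ∀ s, HasDerivAt u (X (u s)) s)
    {r : ℝ} (hr : 0 < r) (hKr : K * r ≤ 1 / 4) {s : ℝ} (hs : |s| ≤ r) :
    |s| / 2 * ‖X (u 0)‖ ≤ ‖u s - u 0‖ ∧ ‖u s - u 0‖ ≤ 2 * r * ‖X (u 0)‖ := by
  have hcont : Continuous u := continuous_iff_continuousAt.2 fun s => (hd s).continuousAt
  obtain ⟨c, hc, hmax⟩ := (isCompact_Icc (a := -r) (b := r)).exists_isMaxOn
    ⟨0, by constructor <;> linarith⟩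
    (f := fun s => ‖u s - u 0‖) (by fun_prop)
  set m := ‖u c - u 0‖ with hm
  have hm0 : 0 ≤ m := norm_nonneg _
  have hle : ∀ s ∈ Icc (-r) r, ‖u s - u 0‖ ≤ m := fun s hs => hmax hs
  have key : ∀ s ∈ Icc (-r) r, ‖u s - u 0 - s • X (u 0)‖ ≤ K * m * |s| := by
    intro s hs
    have := (convex_Icc (-r) r).norm_image_sub_le_of_norm_hasDerivWithin_le
      (f := fun s => u s - s • X (u 0)) (f' := fun s => X (u s) - X (u 0)) (C := K * m)
      (x := 0) (y := s) (fun t _ => by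
        have h1 := (hd t).fun_sub ((hasDerivAt_id t).smul_const (X (u 0)))
        simpa using h1.hasDerivWithinAt)
      (fun t ht => (hK.norm_sub_le (hu t) (hu 0)).trans
        (mul_le_mul_of_nonneg_left (hle t ht) K.2))
      (by constructor <;> linarith) hs
    simpa [sub_right_comm] using this
  set a := ‖X (u 0)‖ with ha
  have ha0 : 0 ≤ a := norm_nonneg _
  have hK0 : (0 : ℝ) ≤ K := K.2
  have hmb : m ≤ r * a + 1 / 4 * m := by
    have h1 := key c hc
    have h2 : ‖c • X (u 0)‖ = |c| * a := by rw [norm_smul, Real.norm_eq_abs]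
    have h3 := norm_le_norm_sub_add (u c - u 0) (c • X (u 0))
    have h4 : |c| ≤ r := abs_le.2 hc
    have h5 : |c| * a ≤ r * a := mul_le_mul_of_nonneg_right h4 ha0
    have h6 : K * m * |c| ≤ K * m * r := mul_le_mul_of_nonneg_left h4 (by positivity)
    have h7 : K * r * m ≤ 1 / 4 * m := mul_le_mul_of_nonneg_right hKr hm0
    linarith
  have hs' : s ∈ Icc (-r) r := abs_le.1 hs
  refine ⟨?_, (hle s hs').trans (by nlinarith)⟩
  have h1 := key s hs'
  have h2 : ‖s • X (u 0)‖ = |s| * a := by rw [norm_smul, Real.norm_eq_abs]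
  have h3 := norm_le_norm_sub_add (s • X (u 0)) (u s - u 0)
  rw [norm_sub_rev] at h3
  have h4 : K * m ≤ 1 / 2 * a := by
    have h5 : K * m ≤ K * (2 * r * a) := mul_le_mul_of_nonneg_left (by nlinarith) hK0
    have h6 : K * r * a ≤ 1 / 4 * a := mul_le_mul_of_nonneg_right hKr ha0
    linarith
  have h5 : K * m * |s| ≤ 1 / 2 * a * |s| := mul_le_mul_of_nonneg_right h4 (abs_nonneg s)
  linarith

/-- A point of a flow that does not move for all small times is fixed. -/
theorem FlowOn.fixed_of_fixed_small {α : Type*} [TopologicalSpace α] {φ : ℝ → α → α} {M : Set α}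
    (hflow : FlowOn φ M) {z : α} (hz : z ∈ M) {r : ℝ} (hr : 0 < r)
    (hfix : ∀ s, |s| ≤ r → φ s z = z) (t : ℝ) : φ t z = z := by
  obtain ⟨-, -, h0, hadd⟩ := hflow
  obtain ⟨n, hn⟩ := exists_nat_gt (|t| / r)
  have hn0 : (0 : ℝ) < n := lt_of_le_of_lt (by positivity) hn
  have hsmall : |t / n| ≤ r := by
    rw [abs_div, abs_of_pos hn0, div_le_iff₀ hn0]
    rw [div_lt_iff₀ hr] at hn
    linarith
  have hiter : ∀ k : ℕ, φ (k * (t / n)) z = z := by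
    intro k
    induction k with
    | zero => simpa using h0 z hz
    | succ k ih =>
      rw [Nat.cast_succ, add_mul, one_mul, hadd _ _ z hz, hfix _ hsmall, ih]
  simpa [mul_div_cancel₀ t hn0.ne'] using hiter n

/-- Let `M ⊂ ℝ^d` be a compact C² manifold, `φ` a flow on `M` with
C¹ velocity field `X` such that every fixed point of `φ` is hyperbolic, and
`Λ ⊆ M` a compact `φ`-invariant subset. If `φ|Λ` is k*-expansive then `φ|Λ` is
rescaling expansive. -/
theorem kstar_imp_rescaling_of_hyperbolic_fixed {d : ℕ}
    (φ : ℝ → Euc d → Euc d) (X : Euc d → Euc d) (M Λ : Set (Euc d))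
    (hMc : IsCompact M) (hflow : FlowOn φ M) (hX : ContDiff ℝ 1 X)
    (hvel : ∀ x ∈ M, ∀ t : ℝ, HasDerivAt (fun s : ℝ => φ s x) (X (φ t x)) t)
    (hhyp : ∀ σ ∈ fixOn φ M, HyperbolicFixed X σ)
    (hΛM : Λ ⊆ M) (hΛc : IsCompact Λ) (hΛinv : ∀ t : ℝ, Set.MapsTo (φ t) Λ Λ)
    (hks : KStarExpansiveOn φ Λ) :
    RescalingExpansive φ X Λ := by
  obtain ⟨K, hK⟩ := (hX.locallyLipschitz.locallyLipschitzOn (s := M)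
    ).exists_lipschitzOnWith_of_compact hMc
  obtain ⟨B, hB⟩ := hΛc.exists_bound_of_continuousOn hX.continuous.continuousOn
  have hK0 : (0 : ℝ) ≤ K := K.2
  obtain ⟨-, hmaps, h0, hadd⟩ := id hflow
  set r : ℝ := 1 / (4 * (K + 1)) with hr
  have hr0 : 0 < r := by positivity
  have hKr : K * r ≤ 1 / 4 := by
    rw [hr, mul_one_div, div_le_div_iff₀ (by positivity) (by norm_num)]
    linarith
  have hdisp : ∀ z ∈ M, ∀ s : ℝ, |s| ≤ r →
      |s| / 2 * ‖X z‖ ≤ ‖φ s z - z‖ ∧ ‖φ s z - z‖ ≤ 2 * r * ‖X z‖ := by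
    intro z hz s hs
    have := displacement_bounds hK (u := fun s => φ s z) (fun s => hmaps s hz) (hvel z hz)
      hr0 hKr hs
    simpa only [h0 z hz] using this
  intro ε hε
  set η : ℝ := min ε (r / 2) with hη
  have hη0 : 0 < η := lt_min hε (by linarith)
  have hηε : η ≤ ε := min_le_left _ _
  have hηr : η < r := (min_le_right _ _).trans_lt (by linarith)
  obtain ⟨δ', hδ', hexp⟩ := hks η hη0
  refine ⟨min (η / 4) (δ' / (|B| + 1)), lt_min (by linarith) (by positivity), ?_⟩
  intro x hx y hy h hh hclose t
  have hxM := hΛM hx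
  have hyM := hΛM hy
  obtain ⟨t₀, s₀, hs₀, hy₀⟩ := hexp x hx y hy h hh fun t => by
    refine (hclose t).trans ?_
    have h1 : ‖X (φ t x)‖ ≤ |B| + 1 := by
      linarith [hB _ (hΛinv t hx), le_abs_self B]
    calc min (η / 4) (δ' / (|B| + 1)) * ‖X (φ t x)‖
        ≤ δ' / (|B| + 1) * (|B| + 1) :=
          mul_le_mul (min_le_right _ _) h1 (norm_nonneg _) (by positivity)
      _ = δ' := div_mul_cancel₀ _ (by positivity)
  rw [uIcc_of_le (by linarith)] at hs₀
  set g : ℝ → ℝ := fun t => h t - h t₀ + s₀ + t₀ - t with hg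
  have hgc : Continuous g := by
    have := hh.1.1
    fun_prop
  have hgy : ∀ t, φ (h t) y = φ (g t) (φ t x) := by
    intro t
    rw [← hadd _ _ x hxM, show h t = (h t - h t₀) + h t₀ by ring, hadd _ _ y hyM, ← hy₀]
    simp only
    rw [← hadd _ _ x hxM, ← hadd _ _ x hxM]
    congr 1
    simp only [hg]
    ring
  have hg0 : |g t₀| ≤ η := by
    have : g t₀ = s₀ := by simp only [hg]; ring
    rw [this]
    exact abs_le.2 hs₀
  by_cases hgt : |g t| ≤ η
  · refine ⟨g t, ?_, (hgy t).symm⟩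
    rw [uIcc_of_le (by linarith)]
    exact abs_le.1 (hgt.trans hηε)
  push Not at hgt
  obtain ⟨t₁, ht₁, ht₁r⟩ : ∃ t₁, η < |g t₁| ∧ |g t₁| ≤ r := by
    rcases le_total |g t| r with h1 | h1
    · exact ⟨t, hgt, h1⟩
    · obtain ⟨t₁, h2⟩ := mem_range_of_exists_le_of_exists_ge (c := r) hgc.abs
        ⟨t₀, hg0.trans hηr.le⟩ ⟨t, h1⟩
      exact ⟨t₁, hηr.trans_eq h2.symm, h2.le⟩
  have hzM := hmaps t₁ hxM
  have hX0 : ‖X (φ t₁ x)‖ = 0 := by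
    by_contra hne
    have hpos : 0 < ‖X (φ t₁ x)‖ := lt_of_le_of_ne (norm_nonneg _) (Ne.symm hne)
    have h1 := (hdisp _ hzM _ ht₁r).1
    have h2 := hclose t₁
    rw [hgy t₁, dist_comm, dist_eq_norm] at h2
    have h3 := le_of_mul_le_mul_right (h1.trans h2) hpos
    have h4 := h3.trans (min_le_left _ _)
    linarith
  have hfix := hflow.fixed_of_fixed_small hzM hr0 fun s hs => by
    have h1 := (hdisp _ hzM s hs).2
    rw [hX0, mul_zero] at h1
    exact sub_eq_zero.1 (norm_le_zero_iff.1 h1)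
  have hconst : φ t x = φ t₁ x := by
    rw [← hfix (t - t₁), ← hadd _ _ x hxM, sub_add_cancel]
  refine ⟨0, ?_, ?_⟩
  · rw [uIcc_of_le (by linarith)]
    constructor <;> linarith
  · simp only
    rw [hgy t, hconst, hfix, hfix]
end
end

section
/- Let φ be a flow on a compact C² manifold M ⊂ ℝ^d with C¹ velocity field X. If every fixed point of φ is hyperbolic, then φ is efficient. -/
open Metric Set Function

noncomputable section

open InnerProductSpace TensorProduct

section
variable {E : Type*} [NormedAddCommGroup E] [InnerProductSpace ℝ E]

theorem ContinuousLinearMap.IsPositive.apply_eq_zero_of_inner_eq_zero {P : E →L[ℝ] E}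
    (hP : P.IsPositive) {x : E} (hx : inner ℝ (P x) x = 0) : P x = 0 := by
  have h : ∀ t : ℝ, 0 ≤ inner ℝ (P (P x)) (P x) * (t * t) + (2 * ‖P x‖ ^ 2) * t + 0 := by
    intro t
    have h1 := hP.inner_nonneg_left (x + t • P x)
    have h2 : inner ℝ (P (P x)) x = ‖P x‖ ^ 2 := by
      rw [hP.inner_left_eq_inner_right, real_inner_self_eq_norm_sq]
    simp only [map_add, map_smul, inner_add_left, inner_add_right, inner_smul_left,
      inner_smul_right, real_inner_self_eq_norm_sq, hx, h2, conj_trivial] at h1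
    linarith
  have h3 := discrim_le_zero h
  simp only [discrim] at h3
  have h4 : (2 * ‖P x‖ ^ 2) ^ 2 = 0 := le_antisymm (by linarith) (sq_nonneg _)
  simpa using h4

theorem exists_eq_one_tmul_add_I_tmul {V : Type*} [AddCommGroup V] [Module ℝ V] (w : ℂ ⊗[ℝ] V) :
    ∃ a b : V, w = (1 : ℂ) ⊗ₜ[ℝ] a + Complex.I ⊗ₜ[ℝ] b := by
  induction w with
  | zero => exact ⟨0, 0, by simp⟩
  | tmul z v =>
    refine ⟨z.re • v, z.im • v, ?_⟩
    rw [← TensorProduct.smul_tmul, ← TensorProduct.smul_tmul, ← TensorProduct.add_tmul]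
    congr 1
    apply Complex.ext <;> simp
  | add x y hx hy =>
    obtain ⟨a, b, rfl⟩ := hx
    obtain ⟨c, e, rfl⟩ := hy
    exact ⟨a + c, b + e, by simp only [TensorProduct.tmul_add]; abel⟩

theorem one_tmul_add_I_tmul_inj {V : Type*} [AddCommGroup V] [Module ℝ V] {a b c e : V}
    (h : (1 : ℂ) ⊗ₜ[ℝ] a + Complex.I ⊗ₜ[ℝ] b = (1 : ℂ) ⊗ₜ[ℝ] c + Complex.I ⊗ₜ[ℝ] e) :
    a = c ∧ b = e := by
  constructor
  · simpa using congrArg (fun w => TensorProduct.lid ℝ V (LinearMap.rTensor V Complex.reLm w)) h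
  · simpa using congrArg (fun w => TensorProduct.lid ℝ V (LinearMap.rTensor V Complex.imLm w)) h

/-- If `A P` is skew-adjoint for a nonzero positive operator `P`, then `A` has an eigenvalue on
the imaginary axis. -/
theorem exists_hasEigenvalue_baseChange_re_eq_zero [FiniteDimensional ℝ E] {A P : E →L[ℝ] E}
    (hP : P.IsPositive) (hP0 : P ≠ 0) (hAP : A ∘L P + P ∘L A.adjoint = 0) :
    ∃ μ : ℂ, Module.End.HasEigenvalue (LinearMap.baseChange ℂ A.toLinearMap) μ ∧ μ.re = 0 := by
  have hAPx : ∀ x, A (P x) = - P (A.adjoint x) := fun x =>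
    eq_neg_of_add_eq_zero_left (by simpa using DFunLike.congr_fun hAP x)
  set AC := LinearMap.baseChange ℂ A.toLinearMap with hAC
  set PC := LinearMap.baseChange ℂ P.toLinearMap with hPC
  have hinv : ∀ v ∈ LinearMap.range PC, AC v ∈ LinearMap.range PC := by
    rintro _ ⟨w, rfl⟩
    obtain ⟨c, e, rfl⟩ := exists_eq_one_tmul_add_I_tmul w
    refine ⟨-((1 : ℂ) ⊗ₜ[ℝ] A.adjoint c + Complex.I ⊗ₜ[ℝ] A.adjoint e), ?_⟩
    simp [hAC, hPC, hAPx, TensorProduct.tmul_neg]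
    abel
  obtain ⟨x, hx⟩ : ∃ x, P x ≠ 0 := by
    by_contra! h
    exact hP0 (ContinuousLinearMap.ext h)
  have : Nontrivial (LinearMap.range PC) := by
    refine ⟨⟨⟨PC ((1 : ℂ) ⊗ₜ[ℝ] x), ⟨_, rfl⟩⟩, 0, fun h => hx ?_⟩⟩
    have h' : PC ((1 : ℂ) ⊗ₜ[ℝ] x) = 0 := congrArg Subtype.val h
    refine (one_tmul_add_I_tmul_inj (b := (0 : E)) (c := 0) (e := 0) ?_).1
    simpa [hPC] using h'
  obtain ⟨μ, hμ⟩ := Module.End.exists_eigenvalue (AC.restrict hinv)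
  obtain ⟨⟨v, w, rfl⟩, hv⟩ := hμ.exists_hasEigenvector
  have hv0 : PC w ≠ 0 := fun h => hv.2 (Subtype.ext h)
  have hv1 : AC (PC w) = μ • PC w := congrArg Subtype.val hv.apply_eq_smul
  refine ⟨μ, Module.End.hasEigenvalue_of_hasEigenvector
    ⟨Module.End.mem_eigenspace_iff.2 hv1, hv0⟩, ?_⟩
  obtain ⟨c, e, rfl⟩ := exists_eq_one_tmul_add_I_tmul w
  have h1 : (1 : ℂ) ⊗ₜ[ℝ] A (P c) + Complex.I ⊗ₜ[ℝ] A (P e) =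
      (1 : ℂ) ⊗ₜ[ℝ] (μ.re • P c - μ.im • P e) +
      Complex.I ⊗ₜ[ℝ] (μ.im • P c + μ.re • P e) := by
    have e1 : μ = ((μ.re : ℝ) • (1 : ℂ)) + (μ.im : ℝ) • Complex.I := by
      apply Complex.ext <;> simp
    have e2 : μ * Complex.I = (-(μ.im) : ℝ) • (1 : ℂ) + (μ.re : ℝ) • Complex.I := by
      apply Complex.ext <;> simp
    have h2 : (1 : ℂ) ⊗ₜ[ℝ] A (P c) + Complex.I ⊗ₜ[ℝ] A (P e) =
        μ ⊗ₜ[ℝ] P c + (μ * Complex.I) ⊗ₜ[ℝ] P e := by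
      simpa [hAC, hPC, TensorProduct.smul_tmul'] using hv1
    rw [h2, e2]
    nth_rewrite 1 [e1]
    simp only [TensorProduct.add_tmul, TensorProduct.smul_tmul, TensorProduct.tmul_add,
      TensorProduct.tmul_sub, neg_smul, TensorProduct.neg_tmul]
    abel
  obtain ⟨hc, he⟩ := one_tmul_add_I_tmul_inj h1
  have hskew : ∀ x, inner ℝ (A (P x)) x = 0 := by
    intro x
    have h3 : inner ℝ (A (P x)) x = - inner ℝ (A (P x)) x := by
      nth_rewrite 1 [hAPx]
      rw [inner_neg_left, hP.inner_left_eq_inner_right, ContinuousLinearMap.adjoint_inner_left,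
        real_inner_comm]
    linarith
  have hc' := hskew c
  have he' := hskew e
  rw [hc] at hc'
  rw [he] at he'
  simp only [inner_sub_left, inner_add_left, inner_smul_left, conj_trivial] at hc' he'
  have hsym : inner ℝ (P e) c = inner ℝ (P c) e := by
    rw [hP.inner_left_eq_inner_right, real_inner_comm]
  have hpc := hP.inner_nonneg_left c
  have hpe := hP.inner_nonneg_left e
  by_contra hre
  have hsum : μ.re * (inner ℝ (P c) c + inner ℝ (P e) e) = 0 := by
    rw [hsym] at hc'
    linarith
  have hsum' := (mul_eq_zero.1 hsum).resolve_left hre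
  have hPc := hP.apply_eq_zero_of_inner_eq_zero (x := c) (by linarith)
  have hPe := hP.apply_eq_zero_of_inner_eq_zero (x := e) (by linarith)
  exact hv0 (by simp [hPC, hPc, hPe])

/-- A hyperbolic linear vector field admits a quadratic form that strictly increases along its
nonzero orbits. -/
theorem exists_bilin_pos_of_hyperbolic [FiniteDimensional ℝ E] (A : E →L[ℝ] E)
    (hA : ∀ μ : ℂ, Module.End.HasEigenvalue (LinearMap.baseChange ℂ A.toLinearMap) μ →
      μ.re ≠ 0) :
    ∃ b : E →L[ℝ] E →L[ℝ] ℝ, ∃ c > 0, ∀ y, c * ‖y‖ ^ 2 ≤ b (A y) y + b y (A y) := by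
  have : ProperSpace (E →L[ℝ] E) := FiniteDimensional.proper ℝ _
  set S : Set (E →L[ℝ] E) := (fun y => rankOne ℝ y y) '' sphere (0 : E) 1 with hS
  set K := closure (convexHull ℝ S) with hK
  have hKc : IsCompact K := by
    refine Metric.isCompact_of_isClosed_isBounded isClosed_closure (Bornology.IsBounded.closure ?_)
    rw [isBounded_convexHull]
    refine (Metric.isBounded_closedBall (x := (0 : E →L[ℝ] E)) (r := 1)).subset ?_
    rintro _ ⟨y, hy, rfl⟩
    have : ‖y‖ = 1 := by simpa using hy
    simp [this]
  have hpos : K ⊆ {P | P.IsPositive} := by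
    have hset : {P : E →L[ℝ] E | P.IsPositive} =
        (⋂ x, ⋂ z, {P | inner ℝ (P x) z = inner ℝ x (P z)}) ∩ ⋂ x, {P | 0 ≤ inner ℝ (P x) x} := by
      ext P
      simp [ContinuousLinearMap.isPositive_iff, LinearMap.IsSymmetric]
    refine closure_minimal (convexHull_min ?_ ?_) ?_
    · rintro _ ⟨y, hy, rfl⟩
      exact isPositive_rankOne_self y
    · intro P hP Q hQ s t hs ht _
      exact (hP.smul_of_nonneg hs).add (hQ.smul_of_nonneg ht)
    · rw [hset]
      refine (isClosed_iInter fun x => isClosed_iInter fun z => isClosed_eq ?_ ?_).inter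
        (isClosed_iInter fun x => isClosed_le ?_ ?_) <;> fun_prop
  let tr : (E →L[ℝ] E) →ₗ[ℝ] ℝ :=
    LinearMap.trace ℝ E ∘ₗ ContinuousLinearMap.coeLM ℝ
  have htr : K ⊆ {P | tr P = 1} := by
    refine closure_minimal (convexHull_min ?_ ?_) ?_
    · rintro _ ⟨y, hy, rfl⟩
      have : ‖y‖ = 1 := by simpa using hy
      change LinearMap.trace ℝ E (rankOne ℝ y y : E →L[ℝ] E) = 1
      rw [trace_rankOne, real_inner_self_eq_norm_sq, this, one_pow]
    · exact convex_hyperplane tr.isLinear 1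
    · exact isClosed_eq tr.continuous_of_finiteDimensional continuous_const
  let Ψ : (E →L[ℝ] E) →ₗ[ℝ] (E →L[ℝ] E) :=
    { toFun := fun P => A ∘L P + P ∘L A.adjoint
      map_add' := fun P Q => by ext; simp; abel
      map_smul' := fun r P => by ext; simp }
  have h0 : (0 : E →L[ℝ] E) ∉ Ψ '' K := by
    rintro ⟨P, hP, hP0⟩
    obtain ⟨μ, hμ, hμ0⟩ := exists_hasEigenvalue_baseChange_re_eq_zero (hpos hP)
      (by rintro rfl; simpa using htr hP) hP0
    exact hA μ hμ hμ0
  obtain ⟨f, u, hu, hf⟩ := geometric_hahn_banach_point_closed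
    ((convex_convexHull ℝ S).closure.linear_image Ψ)
    (hKc.image Ψ.continuous_of_finiteDimensional).isClosed h0
  rw [map_zero] at hu
  let b : E →ₗ[ℝ] E →ₗ[ℝ] ℝ := LinearMap.mk₂ ℝ (fun y z => f (rankOne ℝ y z))
    (by simp) (by simp) (by simp) (by simp)
  refine ⟨b.toContinuousBilinearMap, u, hu, fun y => ?_⟩
  rcases eq_or_ne y 0 with rfl | hy
  · simp
  set z := ‖y‖⁻¹ • y with hz
  have hyz : y = ‖y‖ • z := by simp [hz, hy]
  have hz1 : ‖z‖ = 1 := by simp [hz, norm_smul, hy]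
  have hmem : rankOne ℝ z z ∈ K :=
    subset_closure (subset_convexHull ℝ S ⟨z, by simpa using hz1, rfl⟩)
  have hlt : u < b (A z) z + b z (A z) := by
    have := hf _ ⟨_, hmem, rfl⟩
    simpa [Ψ, b, comp_rankOne, rankOne_comp] using this
  have heq : b (A y) y + b y (A y) = (b (A z) z + b z (A z)) * ‖y‖ ^ 2 := by
    rw [hyz]
    simp only [map_smul, LinearMap.smul_apply, norm_smul, hz1, smul_eq_mul, norm_norm]
    ring
  change u * ‖y‖ ^ 2 ≤ b (A y) y + b y (A y)
  rw [heq]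
  gcongr

end

section
variable {E : Type*} [NormedAddCommGroup E]

section
variable [NormedSpace ℝ E]

/-- Over times `s ≤ τ` with `exp (L τ) ≤ 5 / 4`, an integral curve of an `L`-Lipschitz vector field
stays so close to its starting point that the velocity is nearly constant. -/
theorem norm_sub_le_of_integralCurve {X : E → E} {M : Set E} {L τ : ℝ} (hL : 0 < L)
    (hLip : ∀ x ∈ M, ∀ y ∈ M, ‖X x - X y‖ ≤ L * ‖x - y‖) (hτ : Real.exp (L * τ) ≤ 5 / 4)
    {γ : ℝ → E} (hγM : ∀ t, γ t ∈ M) (hγ : ∀ t, HasDerivAt γ (X (γ t)) t)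
    {s : ℝ} (hs : s ∈ Icc 0 τ) :
    L * ‖γ s - γ 0‖ ≤ ‖X (γ 0)‖ / 4 := by
  have hder : ∀ t, HasDerivAt (fun t => γ t - γ 0) (X (γ t)) t := fun t => (hγ t).sub_const _
  have h := norm_le_gronwallBound_of_norm_deriv_right_le (f := fun t => γ t - γ 0)
    (f' := fun t => X (γ t)) (δ := 0) (K := L) (ε := ‖X (γ 0)‖) (a := 0) (b := τ)
    (fun t _ => (hder t).continuousAt.continuousWithinAt)
    (fun t _ => (hder t).hasDerivWithinAt) (by simp)
    (fun t _ => by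
      have h1 := hLip _ (hγM t) _ (hγM 0)
      have h2 := norm_le_norm_sub_add (X (γ t)) (X (γ 0))
      linarith) s hs
  rw [gronwallBound_of_K_ne_0 hL.ne'] at h
  simp only [zero_mul, zero_add, sub_zero] at h
  have h1 : Real.exp (L * s) ≤ 5 / 4 :=
    (Real.exp_le_exp.2 (mul_le_mul_of_nonneg_left hs.2 hL.le)).trans hτ
  calc L * ‖γ s - γ 0‖ ≤ L * (‖X (γ 0)‖ / L * (Real.exp (L * s) - 1)) := by gcongr
    _ = ‖X (γ 0)‖ * (Real.exp (L * s) - 1) := by field_simp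
    _ ≤ ‖X (γ 0)‖ * (1 / 4) := by gcongr; linarith
    _ = _ := by ring

theorem norm_sub_sub_smul_le_of_integralCurve {X : E → E} {M : Set E} {L τ : ℝ} (hL : 0 < L)
    (hLip : ∀ x ∈ M, ∀ y ∈ M, ‖X x - X y‖ ≤ L * ‖x - y‖) (hτ : Real.exp (L * τ) ≤ 5 / 4)
    {γ : ℝ → E} (hγM : ∀ t, γ t ∈ M) (hγ : ∀ t, HasDerivAt γ (X (γ t)) t)
    {s : ℝ} (hs : s ∈ Icc 0 τ) :
    ‖γ s - γ 0 - s • X (γ 0)‖ ≤ ‖X (γ 0)‖ / 4 * s := by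
  have hder : ∀ t, HasDerivAt (fun t => γ t - t • X (γ 0)) (X (γ t) - X (γ 0)) t := fun t => by
    simpa using (hγ t).fun_sub ((hasDerivAt_id t).smul_const (X (γ 0)))
  have h := norm_image_sub_le_of_norm_deriv_le_segment' (a := 0) (b := τ) (C := ‖X (γ 0)‖ / 4)
    (fun t _ => (hder t).hasDerivWithinAt)
    (fun t ht => (hLip _ (hγM t) _ (hγM 0)).trans
      (norm_sub_le_of_integralCurve hL hLip hτ hγM hγ (Ico_subset_Icc_self ht))) s hs
  simp only [zero_smul, sub_zero] at h
  rwa [sub_right_comm] at h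

/-- If the derivative of `X` at a zero `σ` admits a strictly increasing quadratic form, then
integral curves near `σ` do not return close to their starting point. -/
theorem exists_radius_le_norm_sub_of_integralCurve {X : E → E} {M : Set E} {L τ : ℝ} (hL : 0 < L)
    (hLip : ∀ x ∈ M, ∀ y ∈ M, ‖X x - X y‖ ≤ L * ‖x - y‖) (hτ : Real.exp (L * τ) ≤ 5 / 4)
    (hτ0 : 0 < τ) {σ : E} (hσM : σ ∈ M) (hσ : X σ = 0) {A : E →L[ℝ] E} (hA : HasFDerivAt X A σ)
    {b : E →L[ℝ] E →L[ℝ] ℝ} {c : ℝ} (hc : 0 < c)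
    (hb : ∀ y, c * ‖y‖ ^ 2 ≤ b (A y) y + b y (A y)) :
    ∃ r > 0, ∃ η > 0, ∀ γ : ℝ → E, (∀ t, γ t ∈ M) → (∀ t, HasDerivAt γ (X (γ t)) t) →
      ∀ T, τ ≤ T → (∀ t ∈ Icc 0 T, ‖γ t - σ‖ < r) → η * ‖X (γ 0)‖ ≤ ‖γ T - γ 0‖ := by
  set N := ‖b‖ + 1 with hN
  have hN0 : 0 < N := by positivity
  have hbN : ∀ y z, |b y z| ≤ N * ‖y‖ * ‖z‖ := fun y z =>
    (b.le_opNorm₂ y z).trans (by gcongr; linarith)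
  obtain ⟨r, hr, hrX⟩ : ∃ r > 0, ∀ y, ‖y - σ‖ < r → ‖X y - A (y - σ)‖ ≤ c / (4 * N) * ‖y - σ‖ := by
    have h := hA.isLittleO.def (c := c / (4 * N)) (by positivity)
    obtain ⟨r, hr, h⟩ := Metric.eventually_nhds_iff.1 h
    exact ⟨r, hr, fun y hy => by simpa [hσ] using h (by rwa [dist_eq_norm])⟩
  refine ⟨r, hr, min (1 / L) (c * τ / (12 * N * L)), by positivity, ?_⟩
  intro γ hγM hγ T hT hball
  set η := min (1 / L) (c * τ / (12 * N * L)) with hη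
  set w : ℝ → E := fun t => γ t - σ with hw
  have hw' : ∀ t, HasDerivAt w (X (γ t)) t := fun t => (hγ t).sub_const _
  have hQ : ∀ t, HasDerivAt (fun t => b (w t) (w t)) (b (X (γ t)) (w t) + b (w t) (X (γ t))) t := by
    intro t
    have := (b.hasFDerivAt.comp_hasDerivAt t (hw' t)).clm_apply (hw' t)
    simpa [add_comm] using this
  have hXw : ‖X (γ 0)‖ ≤ L * ‖w 0‖ := by
    simpa [hσ] using hLip _ (hγM 0) _ hσM
  have hQ' : ∀ t ∈ Icc 0 T, c / 2 * ‖w t‖ ^ 2 ≤ b (X (γ t)) (w t) + b (w t) (X (γ t)) := by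
    intro t ht
    have h1 := hrX _ (hball t ht)
    have h2 := hb (w t)
    have h3 := hbN (X (γ t) - A (w t)) (w t)
    have h4 := hbN (w t) (X (γ t) - A (w t))
    have h5 : N * ‖X (γ t) - A (w t)‖ * ‖w t‖ ≤ c / 4 * ‖w t‖ ^ 2 := by
      calc _ ≤ N * (c / (4 * N) * ‖w t‖) * ‖w t‖ := by gcongr
        _ = _ := by field_simp
    have h6 : N * ‖w t‖ * ‖X (γ t) - A (w t)‖ = N * ‖X (γ t) - A (w t)‖ * ‖w t‖ := by ring
    simp only [map_sub, sub_apply] at h3 h4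
    have h7 := (abs_le.1 h3).1
    have h8 := (abs_le.1 h4).1
    linarith
  have hlow : ∀ t ∈ Icc 0 τ, 3 / 4 * ‖w 0‖ ≤ ‖w t‖ := by
    intro t ht
    have h1 := norm_sub_le_of_integralCurve hL hLip hτ hγM hγ ht
    have h2 : ‖γ t - γ 0‖ ≤ ‖w 0‖ / 4 := by
      refine le_of_mul_le_mul_left ?_ hL
      linarith
    have h3 : ‖w 0‖ ≤ ‖w t‖ + ‖γ t - γ 0‖ := by
      calc ‖w 0‖ = ‖w t - (γ t - γ 0)‖ := by simp [hw]
        _ ≤ _ := norm_sub_le _ _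
    linarith
  have hcont : Continuous fun t => b (w t) (w t) :=
    continuous_iff_continuousAt.2 fun t => (hQ t).continuousAt
  have hdiff : Differentiable ℝ fun t => b (w t) (w t) := fun t => (hQ t).differentiableAt
  have hgrow : c / 4 * ‖w 0‖ ^ 2 * τ ≤ b (w τ) (w τ) - b (w 0) (w 0) := by
    have := (convex_Icc (0 : ℝ) τ).mul_sub_le_image_sub_of_le_deriv hcont.continuousOn
      hdiff.differentiableOn (C := c / 4 * ‖w 0‖ ^ 2) (fun t ht => by
        rw [(hQ t).deriv]
        have ht' := interior_subset ht
        refine le_trans ?_ (hQ' t ⟨ht'.1, ht'.2.trans hT⟩)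
        have h1 := hlow t ht'
        have h2 : (3 / 4 * ‖w 0‖) ^ 2 ≤ ‖w t‖ ^ 2 := by gcongr
        nlinarith [sq_nonneg ‖w 0‖]) 0 ⟨le_rfl, hτ0.le⟩ τ ⟨hτ0.le, le_rfl⟩ hτ0.le
    simpa using this
  have hmono : b (w τ) (w τ) ≤ b (w T) (w T) :=
    monotoneOn_of_deriv_nonneg (convex_Icc (0 : ℝ) T) hcont.continuousOn hdiff.differentiableOn
      (fun t ht => by
        rw [(hQ t).deriv]
        exact le_trans (by positivity) (hQ' t (interior_subset ht)))
      ⟨hτ0.le, hT⟩ ⟨hτ0.le.trans hT, le_rfl⟩ hT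
  by_contra! hlt
  set D := ‖γ T - γ 0‖ with hD
  have hηL : η * L ≤ 1 := by
    calc η * L ≤ 1 / L * L := by gcongr; exact min_le_left _ _
      _ = 1 := by field_simp
  have hηL' : η * L ≤ c * τ / (12 * N) := by
    calc η * L ≤ c * τ / (12 * N * L) * L := by gcongr; exact min_le_right _ _
      _ = _ := by field_simp
  have hη0 : 0 < η := by positivity
  have hDw : D < η * L * ‖w 0‖ := by
    calc D < η * ‖X (γ 0)‖ := hlt
      _ ≤ η * (L * ‖w 0‖) := by gcongr
      _ = _ := by ring
  have hw0 : 0 < ‖w 0‖ := by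
    by_contra h
    have : ‖w 0‖ = 0 := le_antisymm (not_lt.1 h) (norm_nonneg _)
    rw [this, mul_zero] at hDw
    exact absurd hDw (not_lt.2 (norm_nonneg _))
  have hDw1 : D ≤ ‖w 0‖ := hDw.le.trans (by nlinarith)
  have hdiffw : w T - w 0 = γ T - γ 0 := by simp [hw]
  have hwT : ‖w T‖ ≤ 2 * ‖w 0‖ := by
    have := norm_le_norm_sub_add (w T) (w 0)
    rw [hdiffw] at this
    linarith
  have hup : b (w T) (w T) - b (w 0) (w 0) ≤ 3 * N * D * ‖w 0‖ := by
    have h1 := (le_abs_self _).trans (hbN (w T - w 0) (w T))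
    have h2 := (le_abs_self _).trans (hbN (w 0) (w T - w 0))
    have h3 : N * D * ‖w T‖ ≤ N * D * (2 * ‖w 0‖) := by gcongr
    have h4 : b (w T) (w T) - b (w 0) (w 0) = b (w T - w 0) (w T) + b (w 0) (w T - w 0) := by
      simp
    rw [h4]
    rw [hdiffw] at h1 h2 ⊢
    linarith
  have hfin : 3 * N * D * ‖w 0‖ < c / 4 * ‖w 0‖ ^ 2 * τ := by
    have h1 : D < c * τ / (12 * N) * ‖w 0‖ := hDw.trans_le (by gcongr)
    calc 3 * N * D * ‖w 0‖ < 3 * N * (c * τ / (12 * N) * ‖w 0‖) * ‖w 0‖ := by gcongr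
      _ = _ := by field_simp; ring
  linarith

/-- An integral curve in `M` whose trace has small diameter cannot return close to its starting
point after a time at least `τ`. -/
theorem exists_le_norm_sub_of_integralCurve {X : E → E} {M : Set E} (hM : IsCompact M)
    (hX : ContDiff ℝ 1 X) {L τ : ℝ} (hL : 0 < L)
    (hLip : ∀ x ∈ M, ∀ y ∈ M, ‖X x - X y‖ ≤ L * ‖x - y‖) (hτ : Real.exp (L * τ) ≤ 5 / 4)
    (hτ0 : 0 < τ)
    (hhyp : ∀ σ ∈ M, X σ = 0 → ∃ b : E →L[ℝ] E →L[ℝ] ℝ, ∃ c > 0,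
      ∀ y, c * ‖y‖ ^ 2 ≤ b (fderiv ℝ X σ y) y + b y (fderiv ℝ X σ y)) :
    ∃ η > 0, ∀ γ : ℝ → E, (∀ t, γ t ∈ M) → (∀ t, HasDerivAt γ (X (γ t)) t) →
      ∀ T, τ ≤ T → diam (γ '' Icc 0 T) < η → η * ‖X (γ 0)‖ ≤ ‖γ T - γ 0‖ := by
  suffices h : ∃ η > 0, ∀ γ : ℝ → E, γ 0 ∈ M → (∀ t, γ t ∈ M) →
      (∀ t, HasDerivAt γ (X (γ t)) t) → ∀ T, τ ≤ T → diam (γ '' Icc 0 T) < η →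
      η * ‖X (γ 0)‖ ≤ ‖γ T - γ 0‖ by
    obtain ⟨η, hη, h⟩ := h
    exact ⟨η, hη, fun γ hγM => h γ (hγM 0) hγM⟩
  have hdiam : ∀ γ : ℝ → E, (∀ t, HasDerivAt γ (X (γ t)) t) → ∀ T, ∀ t ∈ Icc 0 T,
      ‖γ t - γ 0‖ ≤ diam (γ '' Icc 0 T) := by
    intro γ hγ T t ht
    have hcont : Continuous γ := continuous_iff_continuousAt.2 fun t => (hγ t).continuousAt
    rw [← dist_eq_norm]
    exact dist_le_diam_of_mem (isCompact_Icc.image hcont).isBounded (mem_image_of_mem _ ht)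
      (mem_image_of_mem _ ⟨le_rfl, ht.1.trans ht.2⟩)
  refine hM.induction_on (p := fun S => ∃ η > 0, ∀ γ : ℝ → E, γ 0 ∈ S → (∀ t, γ t ∈ M) →
      (∀ t, HasDerivAt γ (X (γ t)) t) → ∀ T, τ ≤ T → diam (γ '' Icc 0 T) < η →
      η * ‖X (γ 0)‖ ≤ ‖γ T - γ 0‖) ⟨1, one_pos, by simp⟩ ?_ ?_ ?_
  · rintro S S' hS ⟨η, hη, h⟩
    exact ⟨η, hη, fun γ hγ => h γ (hS hγ)⟩
  · rintro S S' ⟨η, hη, h⟩ ⟨η', hη', h'⟩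
    refine ⟨min η η', lt_min hη hη', ?_⟩
    rintro γ (hγS | hγS) hγM hγ T hT hd
    · exact (mul_le_mul_of_nonneg_right (min_le_left _ _) (norm_nonneg _)).trans
        (h γ hγS hγM hγ T hT (hd.trans_le (min_le_left _ _)))
    · exact (mul_le_mul_of_nonneg_right (min_le_right _ _) (norm_nonneg _)).trans
        (h' γ hγS hγM hγ T hT (hd.trans_le (min_le_right _ _)))
  · intro y hy
    by_cases hXy : X y = 0
    · obtain ⟨b, c, hc, hb⟩ := hhyp y hy hXy
      obtain ⟨r, hr, η, hη, h⟩ := exists_radius_le_norm_sub_of_integralCurve hL hLip hτ hτ0 hy hXy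
        (hX.differentiable one_ne_zero y).hasFDerivAt hc hb
      refine ⟨ball y (r / 2), mem_nhdsWithin_of_mem_nhds (ball_mem_nhds y (by positivity)),
        min η (r / 2), by positivity, fun γ hγy hγM hγ T hT hd => ?_⟩
      refine (mul_le_mul_of_nonneg_right (min_le_left _ _) (norm_nonneg _)).trans
        (h γ hγM hγ T hT fun t ht => ?_)
      have h1 := (hdiam γ hγ T t ht).trans_lt (hd.trans_le (min_le_right _ _))
      rw [mem_ball, dist_eq_norm] at hγy
      calc ‖γ t - y‖ ≤ ‖γ t - γ 0‖ + ‖γ 0 - y‖ := norm_sub_le_norm_sub_add_norm_sub _ _ _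
        _ < r := by linarith
    · have hm : 0 < ‖X y‖ := norm_pos_iff.2 hXy
      refine ⟨{z | ‖X y‖ / 2 < ‖X z‖}, mem_nhdsWithin_of_mem_nhds
        ((isOpen_lt continuous_const hX.continuous.norm).mem_nhds (half_lt_self hm)),
        3 / 4 * τ * (‖X y‖ / 2), by positivity, fun γ hγy hγM hγ T hT hd => ?_⟩
      exfalso
      have h1 := norm_sub_sub_smul_le_of_integralCurve hL hLip hτ hγM hγ ⟨hτ0.le, le_rfl⟩
      have h2 := (hdiam γ hγ T τ ⟨hτ0.le, hT⟩).trans_lt hd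
      have h3 : τ * ‖X (γ 0)‖ ≤ ‖γ τ - γ 0‖ + ‖γ τ - γ 0 - τ • X (γ 0)‖ := by
        calc τ * ‖X (γ 0)‖ = ‖τ • X (γ 0)‖ := by rw [norm_smul, Real.norm_of_nonneg hτ0.le]
          _ = ‖(γ τ - γ 0) - (γ τ - γ 0 - τ • X (γ 0))‖ := by congr 1; abel
          _ ≤ _ := norm_sub_le _ _
      have h4 : τ * (‖X y‖ / 2) < τ * ‖X (γ 0)‖ := mul_lt_mul_of_pos_left hγy hτ0
      linarith

end

variable [InnerProductSpace ℝ E]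

/-- Over short times, the distance from the starting point of an integral curve is monotone. -/
theorem norm_sub_le_norm_sub_of_integralCurve {X : E → E} {M : Set E} {L τ : ℝ} (hL : 0 < L)
    (hLip : ∀ x ∈ M, ∀ y ∈ M, ‖X x - X y‖ ≤ L * ‖x - y‖) (hτ : Real.exp (L * τ) ≤ 5 / 4)
    {γ : ℝ → E} (hγM : ∀ t, γ t ∈ M) (hγ : ∀ t, HasDerivAt γ (X (γ t)) t)
    {s T : ℝ} (hs : 0 ≤ s) (hsT : s ≤ T) (hT : T ≤ τ) :
    ‖γ s - γ 0‖ ≤ ‖γ T - γ 0‖ := by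
  have hder : ∀ t, HasDerivAt (fun t => ‖γ t - γ 0‖ ^ 2)
      (2 * inner ℝ (γ t - γ 0) (X (γ t))) t := fun t => ((hγ t).sub_const (γ 0)).norm_sq
  have hmono : MonotoneOn (fun t => ‖γ t - γ 0‖ ^ 2) (Icc 0 τ) := by
    refine monotoneOn_of_deriv_nonneg (convex_Icc 0 τ)
      (fun t _ => (hder t).continuousAt.continuousWithinAt)
      (fun t _ => (hder t).differentiableAt.differentiableWithinAt) fun t ht => ?_
    rw [(hder t).deriv]
    have ht' := interior_subset ht
    set v := X (γ 0)
    have h1 := norm_sub_sub_smul_le_of_integralCurve hL hLip hτ hγM hγ ht'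
    have h2 : ‖X (γ t) - v‖ ≤ ‖v‖ / 4 := (hLip _ (hγM t) _ (hγM 0)).trans
      (norm_sub_le_of_integralCurve hL hLip hτ hγM hγ ht')
    set e := γ t - γ 0 - t • v
    set e' := X (γ t) - v
    have h3 : γ t - γ 0 = t • v + e := by simp [e]
    have h4 : X (γ t) = v + e' := by simp [e']
    have h5 : inner ℝ (t • v + e) (v + e') =
        t * ‖v‖ ^ 2 + t * inner ℝ v e' + inner ℝ e v + inner ℝ e e' := by
      simp only [inner_add_left, inner_add_right, inner_smul_left, real_inner_self_eq_norm_sq,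
        conj_trivial]
      ring
    have ht0 : 0 ≤ t := ht'.1
    have h6 : -(‖v‖ * (‖v‖ / 4)) ≤ inner ℝ v e' :=
      (neg_le_neg (by gcongr)).trans (abs_le.1 (abs_real_inner_le_norm v e')).1
    have h7 : -(‖v‖ / 4 * t * ‖v‖) ≤ inner ℝ e v :=
      (neg_le_neg (by gcongr)).trans (abs_le.1 (abs_real_inner_le_norm e v)).1
    have h8 : -(‖v‖ / 4 * t * (‖v‖ / 4)) ≤ inner ℝ e e' :=
      (neg_le_neg (by gcongr)).trans (abs_le.1 (abs_real_inner_le_norm e e')).1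
    have h9 := mul_le_mul_of_nonneg_left h6 ht0
    have h10 : 0 ≤ t * ‖v‖ ^ 2 := by positivity
    rw [h3, h4, h5]
    nlinarith
  exact (sq_le_sq₀ (norm_nonneg _) (norm_nonneg _)).1
    (hmono ⟨hs, hsT.trans hT⟩ ⟨hs.trans hsT, hT⟩ hsT)

/-- Forward-time efficiency of integral curves in a compact set. -/
theorem exists_norm_sub_lt_of_integralCurve {X : E → E} {M : Set E} (hM : IsCompact M)
    (hX : ContDiff ℝ 1 X)
    (hhyp : ∀ σ ∈ M, X σ = 0 → ∃ b : E →L[ℝ] E →L[ℝ] ℝ, ∃ c > 0,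
      ∀ y, c * ‖y‖ ^ 2 ≤ b (fderiv ℝ X σ y) y + b y (fderiv ℝ X σ y)) :
    ∃ η > 0, ∀ γ : ℝ → E, (∀ t, γ t ∈ M) → (∀ t, HasDerivAt γ (X (γ t)) t) →
      ∀ T, diam (γ '' Icc 0 T) < η → ∀ δ < η, ‖γ T - γ 0‖ < δ * ‖X (γ 0)‖ →
      ∀ s ∈ Icc 0 T, ‖γ s - γ 0‖ < δ * ‖X (γ 0)‖ := by
  obtain ⟨K, hK⟩ := (hX.locallyLipschitz.locallyLipschitzOn
    (s := M)).exists_lipschitzOnWith_of_compact hM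
  set L : ℝ := K + 1 with hLdef
  have hL : 0 < L := by positivity
  have hLip : ∀ x ∈ M, ∀ y ∈ M, ‖X x - X y‖ ≤ L * ‖x - y‖ := fun x hx y hy =>
    (hK.norm_sub_le hx hy).trans (by gcongr; linarith)
  set τ := Real.log (5 / 4) / L with hτdef
  have hτ0 : 0 < τ := div_pos (Real.log_pos (by norm_num)) hL
  have hτ : Real.exp (L * τ) ≤ 5 / 4 := by
    rw [hτdef, mul_div_cancel₀ _ hL.ne', Real.exp_log (by norm_num)]
  obtain ⟨η, hη, h⟩ := exists_le_norm_sub_of_integralCurve hM hX hL hLip hτ hτ0 hhyp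
  refine ⟨η, hη, fun γ hγM hγ T hd δ hδ hlt s hs => ?_⟩
  have hTτ : T ≤ τ := by
    by_contra! hTτ
    have h1 := h γ hγM hγ T hTτ.le hd
    have h2 := mul_le_mul_of_nonneg_right hδ.le (norm_nonneg (X (γ 0)))
    linarith
  exact (norm_sub_le_norm_sub_of_integralCurve hL hLip hτ hγM hγ hs.1 hs.2 hTτ).trans_lt hlt

end

/-- Let `φ` be a flow on a compact C² manifold `M ⊂ ℝ^d` with C¹
velocity field `X`. If every fixed point of `φ` is hyperbolic, then `φ` is
efficient. -/
theorem efficient_of_hyperbolic_fixed {d : ℕ}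
    (φ : ℝ → Euc d → Euc d) (X : Euc d → Euc d) (M : Set (Euc d))
    (hMc : IsCompact M) (hflow : FlowOn φ M) (hX : ContDiff ℝ 1 X)
    (hvel : ∀ x ∈ M, ∀ t : ℝ, HasDerivAt (fun s : ℝ => φ s x) (X (φ t x)) t)
    (hhyp : ∀ σ ∈ fixOn φ M, HyperbolicFixed X σ) :
    Efficient φ X M := by
  have hfix : ∀ σ ∈ M, X σ = 0 → σ ∈ fixOn φ M := by
    intro σ hσ hXσ
    refine ⟨hσ, fun t => ?_⟩
    obtain ⟨K, hK⟩ := (hX.locallyLipschitz.locallyLipschitzOn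
      (s := M)).exists_lipschitzOnWith_of_compact hMc
    exact congrFun (ODE_solution_unique_univ (v := fun _ => X) (s := fun _ => M) (t₀ := 0)
      (f := fun t => φ t σ) (g := fun _ => σ) (fun _ => hK)
      (fun t => ⟨hvel σ hσ t, hflow.2.1 t hσ⟩)
      (fun t => ⟨by simpa [hXσ] using hasDerivAt_const t σ, hσ⟩) (hflow.2.2.1 σ hσ)) t
  have hquad : ∀ σ ∈ M, X σ = 0 → ∃ b : Euc d →L[ℝ] Euc d →L[ℝ] ℝ, ∃ c > 0,
      ∀ y, c * ‖y‖ ^ 2 ≤ b (fderiv ℝ X σ y) y + b y (fderiv ℝ X σ y) := fun σ hσ hXσ =>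
    exists_bilin_pos_of_hyperbolic _ (hhyp σ (hfix σ hσ hXσ))
  obtain ⟨η₁, hη₁, hfwd⟩ := exists_norm_sub_lt_of_integralCurve hMc hX hquad
  obtain ⟨η₂, hη₂, hbwd⟩ := exists_norm_sub_lt_of_integralCurve hMc hX.neg (fun σ hσ hXσ => by
    obtain ⟨b, c, hc, hb⟩ := hquad σ hσ (by simpa using hXσ)
    refine ⟨-b, c, hc, fun y => ?_⟩
    simpa [fderiv_fun_neg] using hb y)
  refine ⟨min η₁ η₂, lt_min hη₁ hη₂, fun δ _ hδ x hx _ g _ hdist hdiam t => ?_⟩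
  have hd := hdiam t
  have hD := hdist t
  rw [dist_comm, dist_eq_norm] at hD
  rintro _ ⟨s, hs, rfl⟩
  rw [mem_ball, dist_eq_norm]
  rcases le_total t (g t) with hle | hle
  · rw [uIcc_of_le hle] at hs
    have himg : (fun u => φ (t + u) x) '' Icc 0 (g t - t) = arc φ x t (g t) := by
      rw [arc, uIcc_of_le hle, ← image_image (fun u => φ u x) (fun u => t + u),
        image_const_add_Icc]
      simp
    have h := hfwd (fun u => φ (t + u) x) (fun u => hflow.2.1 _ hx)
      (fun u => (hvel x hx (t + u)).comp_const_add t u) (g t - t)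
      (by rw [himg]; exact hd.trans_le (min_le_left _ _)) δ (hδ.trans_le (min_le_left _ _))
      (by simpa using hD) (s - t) ⟨sub_nonneg.2 hs.1, sub_le_sub_right hs.2 t⟩
    simpa using h
  · rw [uIcc_of_ge hle] at hs
    have himg : (fun u => φ (t - u) x) '' Icc 0 (t - g t) = arc φ x t (g t) := by
      rw [arc, uIcc_of_ge hle, ← image_image (fun u => φ u x) (fun u => t - u),
        image_const_sub_Icc]
      simp
    have h := hbwd (fun u => φ (t - u) x) (fun u => hflow.2.1 _ hx)
      (fun u => (hvel x hx (t - u)).comp_const_sub t u) (t - g t)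
      (by rw [himg]; exact hd.trans_le (min_le_right _ _)) δ (hδ.trans_le (min_le_right _ _))
      (by simpa using hD) (t - s) ⟨sub_nonneg.2 hs.2, sub_le_sub_left hs.1 t⟩
    simpa using h
end
end

section
/- Let φ be a flow on a compact C² manifold M ⊂ ℝ^d with C¹ velocity field X. If every fixed point of φ is dynamically isolated and the derivative d_σX is invertible for every σ ∈ fix(φ), then φ is efficient. -/
open Metric Set Function

noncomputable section

section Curves

variable {E : Type*} [NormedAddCommGroup E] [InnerProductSpace ℝ E]

/-- A curve whose velocity stays close to a constant vector `v` on an interval moves along `v`. -/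
lemma norm_sub_smul_le_of_velocity_near {γ γ' : ℝ → E} {v : E} {t T : ℝ}
    (hγ : ∀ s, HasDerivAt γ (γ' s) s)
    (hv : ∀ s ∈ uIcc t T, ‖γ' s - v‖ ≤ ‖v‖ / 4) {a b : ℝ}
    (ha : a ∈ uIcc t T) (hb : b ∈ uIcc t T) :
    ‖γ b - γ a - (b - a) • v‖ ≤ ‖v‖ / 4 * |b - a| := by
  have hderiv : ∀ s ∈ uIcc t T,
      HasDerivWithinAt (fun s => γ s - s • v) (γ' s - v) (uIcc t T) s := fun s _ => by
    simpa using! ((hγ s).sub ((hasDerivAt_id s).smul_const v)).hasDerivWithinAt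
  have h := Convex.norm_image_sub_le_of_norm_hasDerivWithin_le hderiv hv (convex_uIcc t T) ha hb
  rw [Real.norm_eq_abs] at h
  convert h using 2
  module

/-- If the velocity is close to `v` on the interval between `t` and `T`, the curve leaves `γ t` at
speed at least `3 / 4 * ‖v‖`. -/
lemma mul_norm_le_norm_sub_of_velocity_near {γ γ' : ℝ → E} {v : E} {t T : ℝ}
    (hγ : ∀ s, HasDerivAt γ (γ' s) s)
    (hv : ∀ s ∈ uIcc t T, ‖γ' s - v‖ ≤ ‖v‖ / 4) :
    3 / 4 * |T - t| * ‖v‖ ≤ ‖γ T - γ t‖ := by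
  have h := norm_sub_smul_le_of_velocity_near hγ hv left_mem_uIcc right_mem_uIcc
  have h₂ := norm_sub_norm_le ((T - t) • v) (γ T - γ t)
  rw [norm_sub_rev ((T - t) • v), norm_smul, Real.norm_eq_abs] at h₂
  linarith

/-- If the velocity is close to `v` on the interval between `t` and `T`, the curve between these
times is no farther from `γ t` than its endpoint `γ T`. -/
lemma norm_sub_le_norm_sub_of_velocity_near {γ γ' : ℝ → E} {v : E} {t T s : ℝ}
    (hγ : ∀ s, HasDerivAt γ (γ' s) s)
    (hv : ∀ s ∈ uIcc t T, ‖γ' s - v‖ ≤ ‖v‖ / 4) (hs : s ∈ uIcc t T) :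
    ‖γ s - γ t‖ ≤ ‖γ T - γ t‖ := by
  have h₁ := norm_sub_smul_le_of_velocity_near hγ hv left_mem_uIcc hs
  have h₂ := norm_sub_smul_le_of_velocity_near hγ hv hs right_mem_uIcc
  have hsign : 0 ≤ (s - t) * (T - s) := by
    rcases mem_uIcc.1 hs with h | h <;> nlinarith [h.1, h.2]
  set e₁ := γ s - γ t - (s - t) • v with he₁
  set e₂ := γ T - γ s - (T - s) • v with he₂
  have ha : γ s - γ t = (s - t) • v + e₁ := by rw [he₁]; abel
  have hb : γ T - γ s = (T - s) • v + e₂ := by rw [he₂]; abel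
  have habs : (s - t) * (T - s) = |s - t| * |T - s| := by rw [← abs_mul, abs_of_nonneg hsign]
  have hinner : inner ℝ (γ s - γ t) (γ T - γ s)
      = (s - t) * (T - s) * ‖v‖ ^ 2 + (s - t) * inner ℝ v e₂ + (T - s) * inner ℝ e₁ v
        + inner ℝ e₁ e₂ := by
    rw [ha, hb]
    simp only [inner_add_left, inner_add_right, real_inner_smul_left, real_inner_smul_right,
      real_inner_self_eq_norm_sq]
    ring
  have hA := abs_nonneg (s - t)
  have hB := abs_nonneg (T - s)
  have hV := norm_nonneg v
  have b₁ : |(s - t) * inner ℝ v e₂| ≤ |s - t| * (‖v‖ * (‖v‖ / 4 * |T - s|)) := by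
    rw [abs_mul]
    gcongr
    exact (abs_real_inner_le_norm _ _).trans (by gcongr)
  have b₂ : |(T - s) * inner ℝ e₁ v| ≤ |T - s| * (‖v‖ / 4 * |s - t| * ‖v‖) := by
    rw [abs_mul]
    gcongr
    exact (abs_real_inner_le_norm _ _).trans (by gcongr)
  have b₃ : |inner ℝ e₁ e₂| ≤ ‖v‖ / 4 * |s - t| * (‖v‖ / 4 * |T - s|) :=
    (abs_real_inner_le_norm _ _).trans (by gcongr)
  have hpos : 0 ≤ inner ℝ (γ s - γ t) (γ T - γ s) := by
    have : 0 ≤ |s - t| * |T - s| * ‖v‖ ^ 2 := by positivity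
    rw [hinner, habs]
    linarith [neg_le_of_abs_le b₁, neg_le_of_abs_le b₂, neg_le_of_abs_le b₃]
  have hsq := norm_add_sq_real (γ s - γ t) (γ T - γ s)
  rw [show γ s - γ t + (γ T - γ s) = γ T - γ t by abel] at hsq
  exact le_of_sq_le_sq (by nlinarith [sq_nonneg ‖γ T - γ s‖]) (norm_nonneg _)

/-- Along an integral curve of a field that is Lipschitz on the curve, the velocity changes little
over short times, relative to the initial speed. -/
lemma velocity_near_of_abs_sub_le {γ : ℝ → E} {X : E → E} {L η : ℝ}
    (hL : 0 < L) (hη : L * η ≤ 1 / 8) (hγ : ∀ s, HasDerivAt γ (X (γ s)) s)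
    (hlip : ∀ a b, ‖X (γ a) - X (γ b)‖ ≤ L * ‖γ a - γ b‖) {t s : ℝ} (hs : |s - t| ≤ η) :
    ‖X (γ s) - X (γ t)‖ ≤ ‖X (γ t)‖ / 4 := by
  have hη0 : 0 ≤ η := (abs_nonneg _).trans hs
  have hball : ∀ u, u ∈ closedBall t η ↔ |u - t| ≤ η := fun u => by
    rw [mem_closedBall, Real.dist_eq]
  have hγc : Continuous γ := continuous_iff_continuousAt.2 fun s => (hγ s).continuousAt
  obtain ⟨m, hm, hmax⟩ := (isCompact_closedBall t η).exists_isMaxOn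
    ⟨t, mem_closedBall_self hη0⟩ (f := fun u => ‖γ u - γ t‖) (by fun_prop)
  have hmax : ∀ u ∈ closedBall t η, ‖γ u - γ t‖ ≤ ‖γ m - γ t‖ := hmax
  have hmv := Convex.norm_image_sub_le_of_norm_hasDerivWithin_le (f := γ)
    (C := ‖X (γ t)‖ + L * ‖γ m - γ t‖) (fun u _ => (hγ u).hasDerivWithinAt)
    (fun u hu => by
      have h₁ := norm_le_norm_add_norm_sub (X (γ t)) (X (γ u))
      have h₂ := (hlip u t).trans (mul_le_mul_of_nonneg_left (hmax u hu) hL.le)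
      linarith [norm_sub_rev (X (γ t)) (X (γ u))])
    (convex_closedBall t η) (mem_closedBall_self hη0) hm
  have hmη : ‖m - t‖ ≤ η := (hball m).1 hm
  have hle : ‖γ m - γ t‖ ≤ (‖X (γ t)‖ + L * ‖γ m - γ t‖) * η :=
    hmv.trans (by gcongr)
  have hs' := (hlip s t).trans
    (mul_le_mul_of_nonneg_left (hmax s ((hball s).2 hs)) hL.le)
  have hLm : 0 ≤ L * ‖γ m - γ t‖ := by positivity
  nlinarith [mul_le_mul_of_nonneg_left hle hL.le, norm_nonneg (X (γ t)),
    mul_le_mul_of_nonneg_right hη (add_nonneg (norm_nonneg (X (γ t))) hLm)]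

end Curves

/-- The velocity field vanishes at a point of `M` only if the point is fixed. -/
lemma mem_fixOn_of_velocity_eq_zero {d : ℕ} {φ : ℝ → Euc d → Euc d} {X : Euc d → Euc d}
    {M : Set (Euc d)} {K : NNReal} (hflow : FlowOn φ M) (hlip : LipschitzOnWith K X M)
    (hvel : ∀ x ∈ M, ∀ t : ℝ, HasDerivAt (fun s : ℝ => φ s x) (X (φ t x)) t)
    {σ : Euc d} (hσ : σ ∈ M) (h0 : X σ = 0) : σ ∈ fixOn φ M := by
  refine ⟨hσ, fun t => ?_⟩
  have h : (fun s => φ s σ) = fun _ => σ :=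
    ODE_solution_unique_univ (v := fun _ => X) (s := fun _ => M) (K := K) (t₀ := 0)
      (fun _ => hlip) (fun s => ⟨hvel σ hσ s, hflow.2.1 s hσ⟩)
      (fun s => ⟨by simpa [h0] using hasDerivAt_const s σ, hσ⟩) (hflow.2.2.1 σ hσ)
  exact congrFun h t

/-- The velocity field vanishes at the fixed points. -/
lemma velocity_eq_zero_of_mem_fixOn {d : ℕ} {φ : ℝ → Euc d → Euc d} {X : Euc d → Euc d}
    {M : Set (Euc d)}
    (hvel : ∀ x ∈ M, ∀ t : ℝ, HasDerivAt (fun s : ℝ => φ s x) (X (φ t x)) t)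
    {σ : Euc d} (hσ : σ ∈ fixOn φ M) : X σ = 0 := by
  have h := hvel σ hσ.1 0
  simp only [hσ.2] at h
  exact h.unique (hasDerivAt_const 0 σ)

/-- If all fixed points are dynamically isolated, orbits that are slow at all times are fixed. -/
lemma exists_speed_bound_of_dynIsolated {d : ℕ} {φ : ℝ → Euc d → Euc d} {X : Euc d → Euc d}
    {M : Set (Euc d)} {K : NNReal} (hMc : IsCompact M) (hflow : FlowOn φ M)
    (hXc : Continuous X) (hlip : LipschitzOnWith K X M)
    (hvel : ∀ x ∈ M, ∀ t : ℝ, HasDerivAt (fun s : ℝ => φ s x) (X (φ t x)) t)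
    (hiso : ∀ σ ∈ fixOn φ M, DynIsolated φ M σ) :
    ∃ c > 0, ∀ x ∈ M, (∀ t, ‖X (φ t x)‖ < c) → x ∈ fixOn φ M := by
  have hfix : fixOn φ M = M ∩ X ⁻¹' {0} := Subset.antisymm
    (fun σ hσ => ⟨hσ.1, velocity_eq_zero_of_mem_fixOn hvel hσ⟩)
    (fun σ hσ => mem_fixOn_of_velocity_eq_zero hflow hlip hvel hσ.1 hσ.2)
  have hcomp : IsCompact (fixOn φ M) := by
    rw [hfix]
    exact hMc.inter_right (isClosed_singleton.preimage hXc)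
  choose! r hr hrb using hiso
  have hdisc : IsDiscrete (fixOn φ M) := by
    refine IsDiscrete.of_nhdsWithin fun σ hσ => ?_
    rw [Filter.le_pure_iff]
    filter_upwards [self_mem_nhdsWithin,
      mem_nhdsWithin_of_mem_nhds (ball_mem_nhds σ (hr σ hσ))] with τ hτ hτb
    refine hrb σ hσ τ hτ.1 ?_
    rintro _ ⟨t, rfl⟩
    simpa only [hτ.2 t] using hτb
  obtain ⟨U, hU, hUd⟩ := (hcomp.finite hdisc).t2_separation
  let V : Euc d → Set (Euc d) := fun σ => U σ ∩ ball σ (r σ)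
  have hVo : ∀ σ, IsOpen (V σ) := fun σ => (hU σ).2.inter isOpen_ball
  have hVm : ∀ σ ∈ fixOn φ M, σ ∈ V σ := fun σ hσ => ⟨(hU σ).1, mem_ball_self (hr σ hσ)⟩
  obtain ⟨c, hc, hcb⟩ : ∃ c > 0, ∀ y ∈ M, ‖X y‖ < c → y ∈ ⋃ σ ∈ fixOn φ M, V σ := by
    have hK : IsCompact (M \ ⋃ σ ∈ fixOn φ M, V σ) :=
      hMc.diff (isOpen_biUnion fun σ _ => hVo σ)
    rcases (M \ ⋃ σ ∈ fixOn φ M, V σ).eq_empty_or_nonempty with he | hne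
    · exact ⟨1, one_pos, fun y hy _ => sdiff_eq_empty.1 he hy⟩
    · obtain ⟨z, hz, hmin⟩ := hK.exists_isMinOn hne (f := fun y => ‖X y‖) (by fun_prop)
      refine ⟨‖X z‖, norm_pos_iff.2 fun h0 => hz.2 ?_, fun y hy hlt => ?_⟩
      · have hzf := mem_fixOn_of_velocity_eq_zero hflow hlip hvel hz.1 h0
        exact mem_biUnion hzf (hVm z hzf)
      · by_contra hyn
        exact absurd (hmin ⟨hy, hyn⟩) (not_le.2 hlt)
  refine ⟨c, hc, fun x hx hslow => ?_⟩
  have hmem : ∀ t, φ t x ∈ ⋃ σ ∈ fixOn φ M, V σ := fun t =>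
    hcb _ (hflow.2.1 t hx) (hslow t)
  obtain ⟨σ, hσ, hσ0⟩ := mem_iUnion₂.1 (hmem 0)
  have hcont : Continuous fun t => φ t x :=
    continuous_iff_continuousAt.2 fun t => (hvel x hx t).continuousAt
  have hsub : orb φ x ⊆ V σ := by
    refine IsPreconnected.subset_left_of_subset_union (hVo σ)
      (v := ⋃ τ ∈ fixOn φ M \ {σ}, V τ) (isOpen_biUnion fun τ _ => hVo τ) ?_ ?_
      ⟨φ 0 x, ⟨0, rfl⟩, hσ0⟩ (isPreconnected_range hcont)
    · refine disjoint_iUnion₂_right.2 fun τ hτ => ?_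
      exact (hUd hσ hτ.1 (Ne.symm hτ.2)).mono inter_subset_left inter_subset_left
    · rintro _ ⟨t, rfl⟩
      obtain ⟨τ, hτ, hτt⟩ := mem_iUnion₂.1 (hmem t)
      by_cases h : τ = σ
      · exact Or.inl (h ▸ hτt)
      · exact Or.inr (mem_biUnion (show τ ∈ fixOn φ M \ {σ} from ⟨hτ, h⟩) hτt)
  rw [hrb σ hσ x hx (hsub.trans inter_subset_right)]
  exact hσ

/-- Let `φ` be a flow on a compact C² manifold `M ⊂ ℝ^d` with C¹
velocity field `X`. If every fixed point of `φ` is dynamically isolated and the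
derivative `d_σX` is invertible for every `σ ∈ fix(φ)`, then `φ` is efficient. -/
theorem efficient_of_dynIsolated_invertible {d : ℕ}
    (φ : ℝ → Euc d → Euc d) (X : Euc d → Euc d) (M : Set (Euc d))
    (hMc : IsCompact M) (hflow : FlowOn φ M) (hX : ContDiff ℝ 1 X)
    (hvel : ∀ x ∈ M, ∀ t : ℝ, HasDerivAt (fun s : ℝ => φ s x) (X (φ t x)) t)
    (hiso : ∀ σ ∈ fixOn φ M, DynIsolated φ M σ)
    (hinv : ∀ σ ∈ fixOn φ M, IsUnit (fderiv ℝ X σ)) :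
    Efficient φ X M := by
  obtain ⟨K, hK⟩ := (hX.locallyLipschitz.locallyLipschitzOn (s := M)
    ).exists_lipschitzOnWith_of_compact hMc
  obtain ⟨c, hc, hslow⟩ :=
    exists_speed_bound_of_dynIsolated hMc hflow hX.continuous hK hvel hiso
  let L : ℝ := K + 1
  have hL : 0 < L := by positivity
  refine ⟨min (1 / (16 * L)) (c / (4 * L)), by positivity, ?_⟩
  intro δ hδ hδs x hx hnfix g hg hdist hdiam
  obtain ⟨hδ₁, -⟩ := lt_min_iff.1 hδs
  have hγ := hvel x hx
  have hlip : ∀ a b, ‖X (φ a x) - X (φ b x)‖ ≤ L * ‖φ a x - φ b x‖ := fun a b => by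
    refine (hK.norm_sub_le (hflow.2.1 a hx) (hflow.2.1 b hx)).trans ?_
    gcongr
    exact le_add_of_nonneg_right zero_le_one
  have hclose : ∀ t, ‖φ (g t) x - φ t x‖ < δ * ‖X (φ t x)‖ := fun t => by
    rw [← dist_eq_norm, dist_comm]
    exact hdist t
  have hLδ : L * (2 * δ) ≤ 1 / 8 := by
    rw [lt_div_iff₀ (by positivity)] at hδ₁
    linarith
  -- While the velocity stays nearly constant, the time shift is less than `2 * δ`.
  have hshort : ∀ t, (∀ s ∈ uIcc t (g t), ‖X (φ s x) - X (φ t x)‖ ≤ ‖X (φ t x)‖ / 4) →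
      |g t - t| < 2 * δ := fun t hv => by
    have h := (mul_norm_le_norm_sub_of_velocity_near hγ hv).trans_lt (hclose t)
    linarith [lt_of_mul_lt_mul_right h (norm_nonneg _)]
  have hnear : ∀ t, |g t - t| ≤ 2 * δ →
      ∀ s ∈ uIcc t (g t), ‖X (φ s x) - X (φ t x)‖ ≤ ‖X (φ t x)‖ / 4 := fun t ht s hs =>
    velocity_near_of_abs_sub_le hL hLδ hγ hlip ((abs_sub_left_of_mem_uIcc hs).trans ht)
  by_cases hall : ∀ t, |g t - t| ≤ 2 * δ
  · rintro t _ ⟨s, hs, rfl⟩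
    rw [mem_ball, dist_eq_norm]
    exact (norm_sub_le_norm_sub_of_velocity_near hγ (hnear t (hall t)) hs).trans_lt (hclose t)
  · -- The time shift stays large, so the whole orbit is slow.
    push Not at hall
    obtain ⟨t₀, ht₀⟩ := hall
    have hcont : Continuous fun t => |g t - t| := (hg.1.sub continuous_id).abs
    have hfar : ∀ t, 2 * δ < |g t - t| := fun t => by
      by_contra! hle
      obtain ⟨u, hu⟩ := mem_range_of_exists_le_of_exists_ge hcont ⟨t, hle⟩ ⟨t₀, ht₀.le⟩
      exact (hshort u (hnear u hu.le)).ne hu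
    refine absurd (hslow x hx fun t => ?_).2 hnfix
    by_contra! hfast
    refine (hfar t).not_gt (hshort t fun s hs => ?_)
    have hbdd : Bornology.IsBounded (arc φ x t (g t)) := hMc.isBounded.subset <| by
      rintro _ ⟨u, -, rfl⟩
      exact hflow.2.1 u hx
    have hd := (dist_le_diam_of_mem hbdd ⟨s, hs, rfl⟩ ⟨t, left_mem_uIcc, rfl⟩).trans_lt
      ((hdiam t).trans_le (min_le_right _ _))
    rw [dist_eq_norm, lt_div_iff₀ (by positivity)] at hd
    linarith [hlip s t]
end
end

section
/- For a flow φ on a compact metric space (Λ, dist) the following statements are equivalent: (i) fix(φ) is an open subset of Λ; (ii) there is T₀ > 0 such that for all T ∈ (0, T₀] there is ξ > 0 such that dist(φ_T(x), x) > ξ for all x ∉ fix(φ). -/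
open Metric Set Function

noncomputable section

/-- Near a point that is not fixed by a flow there are no periodic points of arbitrarily small
positive period. -/
theorem IsFlow.eventually_ne_of_notMem_fixSet {α : Type*} [TopologicalSpace α] [T2Space α]
    {φ : ℝ → α → α} (hφ : IsFlow φ) {y : α} (hy : y ∉ fixSet φ) :
    ∀ᶠ p : ℝ × α in nhds (0, y), 0 < p.1 → φ p.1 p.2 ≠ p.2 := by
  obtain ⟨hc, h0, hadd⟩ := hφ
  obtain ⟨t, ht⟩ : ∃ t, φ t y ≠ y := by simpa [fixSet] using hy
  have hct : Continuous fun p : ℝ × α => φ t p.2 :=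
    hc.comp (continuous_const.prodMk continuous_snd)
  have hopen : ∀ᶠ p : ℝ × α in nhds (0, y), φ t p.2 ≠ φ p.1 p.2 :=
    (isOpen_ne_fun hct hc).mem_nhds (by simpa [h0] using ht)
  rw [nhds_prod_eq, Filter.eventually_prod_iff] at hopen ⊢
  obtain ⟨P, hP, Q, hQ, hPQ⟩ := hopen
  obtain ⟨ε, hε, hball⟩ := Metric.eventually_nhds_iff.1 hP
  refine ⟨fun r => r < ε, eventually_lt_nhds hε, Q, hQ, fun {T} hT {x} hx hpos hper => ?_⟩
  have hperiodic : Function.Periodic (fun s => φ s x) T := fun s => by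
    simp only [hadd, hper]
  obtain ⟨r, hr, hrt⟩ := hperiodic.exists_mem_Ico₀ hpos t
  refine hPQ (hball ?_) hx hrt
  rw [Real.dist_0_eq_abs, abs_of_nonneg hr.1]
  exact hr.2.trans hT

/-- For a flow `φ` on a compact metric space `(Λ, dist)` the
following are equivalent: (i) `fix(φ)` is open; (ii) there is `T₀ > 0` such that
for all `T ∈ (0, T₀]` there is `ξ > 0` with `dist (φ_T x) x > ξ` for all
`x ∉ fix(φ)`. -/
theorem isOpen_fixSet_iff_uniform_displacement
    {Λ : Type*} [MetricSpace Λ] [CompactSpace Λ]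
    (φ : ℝ → Λ → Λ) (hφ : IsFlow φ) :
    IsOpen (fixSet φ) ↔
      ∃ T₀ > (0 : ℝ), ∀ T : ℝ, T ∈ Set.Ioc 0 T₀ →
        ∃ ξ > (0 : ℝ), ∀ x : Λ, x ∉ fixSet φ → ξ < dist (φ T x) x := by
  have hdist (T : ℝ) : Continuous fun x => dist (φ T x) x :=
    (hφ.1.comp (continuous_const.prodMk continuous_id)).dist continuous_id
  constructor
  · intro hopen
    have hK : IsCompact (fixSet φ)ᶜ := hopen.isClosed_compl.isCompact
    have hev := hK.eventually_forall_of_forall_eventually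
      (P := fun T x => 0 < T → φ T x ≠ x) fun y hy => hφ.eventually_ne_of_notMem_fixSet hy
    obtain ⟨ε, hε, hne⟩ := Metric.eventually_nhds_iff.1 hev
    refine ⟨ε / 2, half_pos hε, fun T hT => ?_⟩
    have hTε : dist T 0 < ε := by
      rw [Real.dist_0_eq_abs, abs_of_pos hT.1]
      linarith [hT.2]
    obtain ⟨a, ha, hle⟩ := hK.exists_forall_le' (hdist T).continuousOn
      fun x hx => dist_pos.2 (hne hTε x hx hT.1)
    exact ⟨a / 2, half_pos ha, fun x hx => (half_lt_self ha).trans_le (hle x hx)⟩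
  · rintro ⟨T, hT, h⟩
    obtain ⟨ξ, hξ, hlt⟩ := h T ⟨hT, le_rfl⟩
    have heq : fixSet φ = {x | dist (φ T x) x < ξ} := by
      ext x
      refine ⟨fun hx => ?_, fun hx => ?_⟩
      · simpa [hx T] using hξ
      · by_contra hfix
        exact lt_asymm hx (hlt x hfix)
    rw [heq]
    exact isOpen_lt (hdist T) continuous_const
end
end

section
/- Let φ be a flow on a compact metric space (Λ, dist). If every fixed point of φ is dynamically isolated, then there is β₀ > 0 such that every point x ∈ Λ whose orbit satisfies diam(φ_ℝ(x)) < β₀ is a fixed point of φ. -/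
open Metric Set Function

noncomputable section

/-- Two points of an orbit in a compact space are at distance at most its diameter. -/
theorem dist_le_diam_orb {α : Type*} [MetricSpace α] [CompactSpace α] {φ : ℝ → α → α}
    {x : α} (h0 : φ 0 x = x) (t : ℝ) : dist (φ t x) x ≤ Metric.diam (orb φ x) :=
  Metric.dist_le_diam_of_mem Metric.isBounded_of_compactSpace ⟨t, rfl⟩ ⟨0, h0⟩

/-- Near every point there is a neighbourhood in which orbits of small diameter are trivial,
provided the fixed points are dynamically isolated. -/
theorem exists_nhds_diam_bound {α : Type*} [MetricSpace α] [CompactSpace α] {φ : ℝ → α → α}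
    (hφ : IsFlow φ) (hiso : ∀ σ ∈ fixSet φ, DynIsolated φ Set.univ σ) (y : α) :
    ∃ U ∈ nhds y, ∃ β > (0 : ℝ), ∀ x ∈ U, Metric.diam (orb φ x) < β → x ∈ fixSet φ := by
  obtain ⟨hcont, h0, -⟩ := hφ
  by_cases hy : y ∈ fixSet φ
  · obtain ⟨r, hr, hiso⟩ := hiso y hy
    refine ⟨Metric.ball y (r / 2), Metric.ball_mem_nhds y (half_pos hr), r / 2, half_pos hr,
      fun x hx hdiam => ?_⟩
    have hxy : x = y := hiso x (Set.mem_univ x) <| by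
      rintro _ ⟨t, rfl⟩
      have hdist := dist_le_diam_orb (h0 x) t
      have htri := dist_triangle (φ t x) x y
      rw [Metric.mem_ball] at hx ⊢
      linarith
    exact hxy ▸ hy
  · obtain ⟨t, ht⟩ : ∃ t, φ t y ≠ y := by simpa [fixSet] using hy
    have hpos : 0 < dist (φ t y) y := dist_pos.2 ht
    have hdisp : Continuous fun x => dist (φ t x) x :=
      (hcont.comp (Continuous.prodMk_right t)).dist continuous_id
    refine ⟨{x | dist (φ t y) y / 2 < dist (φ t x) x},
      hdisp.continuousAt.eventually_const_lt (half_lt_self hpos), dist (φ t y) y / 2,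
      half_pos hpos, fun x hx hdiam => ?_⟩
    exact absurd (hx.trans_le (dist_le_diam_orb (h0 x) t)) hdiam.not_gt

/-- Let `φ` be a flow on a compact metric space `(Λ, dist)`. If
every fixed point of `φ` is dynamically isolated, then there is `β₀ > 0` such that
every point whose orbit has diameter `< β₀` is a fixed point. -/
theorem exists_diam_bound_of_dynIsolated_fixed
    {Λ : Type*} [MetricSpace Λ] [CompactSpace Λ]
    (φ : ℝ → Λ → Λ) (hφ : IsFlow φ)
    (hiso : ∀ σ ∈ fixSet φ, DynIsolated φ Set.univ σ) :
    ∃ β₀ > (0 : ℝ), ∀ x : Λ, Metric.diam (orb φ x) < β₀ → x ∈ fixSet φ := by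
  suffices h : ∃ β > (0 : ℝ), ∀ x ∈ (Set.univ : Set Λ), Metric.diam (orb φ x) < β →
      x ∈ fixSet φ by
    simpa using h
  refine isCompact_univ.induction_on
    (p := fun s => ∃ β > (0 : ℝ), ∀ x ∈ s, Metric.diam (orb φ x) < β → x ∈ fixSet φ)
    ⟨1, one_pos, by simp⟩ ?_ ?_ ?_
  · rintro s t hst ⟨β, hβ, h⟩
    exact ⟨β, hβ, fun x hx => h x (hst hx)⟩
  · rintro s t ⟨β, hβ, hs⟩ ⟨γ, hγ, ht⟩
    refine ⟨min β γ, lt_min hβ hγ, fun x hx hdiam => ?_⟩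
    rcases hx with hx | hx
    · exact hs x hx (hdiam.trans_le (min_le_left β γ))
    · exact ht x hx (hdiam.trans_le (min_le_right β γ))
  · intro y _
    obtain ⟨U, hU, h⟩ := exists_nhds_diam_bound hφ hiso y
    exact ⟨U, mem_nhdsWithin_of_mem_nhds hU, h⟩
end
end

section
/- If a flow φ on a metric space (Λ, dist) is KH-expansive, then fix(φ) is an open subset of Λ. -/
open Metric Set Function

noncomputable section

/-- If a flow `φ` on a metric space `(Λ, dist)` is KH-expansive,
then `fix(φ)` is an open subset of `Λ`. -/
theorem isOpen_fixSet_of_khExpansive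
    {Λ : Type*} [MetricSpace Λ] (φ : ℝ → Λ → Λ) (hφ : IsFlow φ)
    (hkh : KHExpansive φ) : IsOpen (fixSet φ) := by
  obtain ⟨-, hzero, -⟩ := hφ
  obtain ⟨δ, hδ, h⟩ := hkh
  refine Metric.isOpen_iff.2 fun σ hσ => ⟨δ, hδ, fun y hy => ?_⟩
  have hfix : ∀ t, φ t σ = σ := hσ
  -- With the constant reparametrization `0`, any `y` that is `δ`-close to `σ` is in its orbit.
  obtain ⟨t, rfl⟩ := h σ (fun _ => 0) continuous_const rfl
    (fun t => by simpa [hfix] using hδ) y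
    (fun t => by simpa [hfix, hzero, dist_comm] using hy)
  simpa only [hfix] using hσ
end
end

section
/- Let φ be a flow on a metric space (Λ, dist) and suppose x ∉ fix(φ), u : ℝ → ℝ is a function, h ∈ H⁺(ℝ), sup_{t ∈ ℝ} diam(φ_{[t,u(t)]}(x)) < diam(φ_ℝ(x))/2, and φ_{h(t)}(x) ∈ φ_{[t,u(t)]}(x) for all t ∈ ℝ. Then there is g ∈ H⁺(ℝ) such that g(t) ∈ [t, u(t)] for all t ∈ ℝ and φ_{g(t)}(x) = φ_{h(t)}(x) for all t ∈ ℝ. -/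
open Metric Set Function

noncomputable section

/-- Two times at which a flow visits the same point differ by a period of the orbit. -/
theorem IsFlow.periodic_of_eq {α : Type*} [TopologicalSpace α] {φ : ℝ → α → α} (hφ : IsFlow φ)
    {x : α} {a b : ℝ} (hab : φ a x = φ b x) : Function.Periodic (fun t => φ t x) (a - b) := by
  intro t
  have h1 := hφ.2.2 (t - b) a x
  have h2 := hφ.2.2 (t - b) b x
  rw [hab, ← h2] at h1
  simpa [show t - b + a = t + (a - b) by ring] using h1

/-- If a periodic curve stays within distance `r` of `f t` along both `[t, a]` and `[t, b]`, and
`b - a` is a nonzero period, then the whole curve has diameter at most `2 * r`. -/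
theorem Function.Periodic.diam_range_le {α : Type*} [PseudoMetricSpace α] {f : ℝ → α} {t a b r : ℝ}
    (hf : Function.Periodic f (b - a)) (hab : a ≠ b)
    (ha : ∀ s ∈ Set.uIcc t a, dist (f t) (f s) ≤ r)
    (hb : ∀ s ∈ Set.uIcc t b, dist (f t) (f s) ≤ r) :
    Metric.diam (Set.range f) ≤ 2 * r := by
  have hr : 0 ≤ r := dist_nonneg.trans (ha a Set.right_mem_uIcc)
  have key : ∀ y ∈ Set.range f, dist (f t) y ≤ r := by
    intro y hy
    rw [← hf.image_uIcc (sub_ne_zero.2 hab.symm) a, add_sub_cancel] at hy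
    obtain ⟨s, hs, rfl⟩ := hy
    rcases Set.uIcc_subset_uIcc_union_uIcc (b := t) hs with hs | hs
    · exact ha s (Set.uIcc_comm a t ▸ hs)
    · exact hb s hs
  refine Metric.diam_le_of_forall_dist_le (by positivity) fun y hy z hz => ?_
  linarith [dist_triangle_left y z (f t), key y hy, key z hz]

/-- The condition that a curve stays within distance `r` of `f t` along `[t, k t]` is open
in `t`. -/
theorem isOpen_setOf_forall_uIcc_dist_lt {α : Type*} [PseudoMetricSpace α] {f : ℝ → α}
    (hf : Continuous f) {k : ℝ → ℝ} (hk : Continuous k) (r : ℝ) :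
    IsOpen {t | ∀ s ∈ Set.uIcc t (k t), dist (f t) (f s) < r} := by
  have hset : {t | ∀ s ∈ Set.uIcc t (k t), dist (f t) (f s) < r} =
      {t | ∀ l ∈ Set.Icc (0 : ℝ) 1, dist (f t) (f (t + l * (k t - t))) < r} := by
    ext t
    simp only [← segment_eq_uIcc, segment_eq_image', Set.mem_ofPred_eq, Set.forall_mem_image,
      smul_eq_mul]
  rw [hset, isOpen_iff_eventually]
  intro t ht
  refine isCompact_Icc.eventually_forall_of_forall_eventually fun l hl => ?_
  have hc : Continuous fun p : ℝ × ℝ => dist (f p.1) (f (p.1 + p.2 * (k p.1 - p.1))) := by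
    fun_prop
  exact hc.continuousAt.eventually_lt continuousAt_const (ht l hl)

/-- Let `φ` be a flow on a metric space, `x ∉ fix(φ)`,
`u : ℝ → ℝ` a function and `h ∈ H⁺(ℝ)` with
`sup_t diam (φ_{[t, u t]} x) < diam (φ_ℝ(x)) / 2` and
`φ_{h t} x ∈ φ_{[t, u t]} x` for all `t`. Then there is `g ∈ H⁺(ℝ)` such that
`g t ∈ [t, u t]` and `φ_{g t} x = φ_{h t} x` for all `t`. -/
theorem exists_increasing_reparam
    {Λ : Type*} [MetricSpace Λ] (φ : ℝ → Λ → Λ) (hφ : IsFlow φ)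
    (x : Λ) (hx : x ∉ fixSet φ) (u : ℝ → ℝ) (h : ℝ → ℝ) (hh : IsHplus h)
    (hsup : (⨆ t : ℝ, Metric.diam (arc φ x t (u t))) < Metric.diam (orb φ x) / 2)
    (hmem : ∀ t : ℝ, φ (h t) x ∈ arc φ x t (u t)) :
    ∃ g : ℝ → ℝ, IsHplus g ∧ (∀ t : ℝ, g t ∈ Set.uIcc t (u t)) ∧
      ∀ t : ℝ, φ (g t) x = φ (h t) x := by
  obtain ⟨hcont, hmono, hsurj⟩ := hh
  have hf : Continuous fun t => φ t x := hφ.1.comp (by fun_prop : Continuous fun t : ℝ => (t, x))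
  have hbdd : Bornology.IsBounded (orb φ x) := by
    by_contra hb
    rw [Metric.diam_eq_zero_of_unbounded hb] at hsup
    linarith [Real.iSup_nonneg fun t : ℝ => Metric.diam_nonneg (s := arc φ x t (u t))]
  have hsub : ∀ t, arc φ x t (u t) ⊆ orb φ x := fun t => Set.image_subset_range _ _
  have harc : ∀ t, Metric.diam (arc φ x t (u t)) ≤ ⨆ t : ℝ, Metric.diam (arc φ x t (u t)) :=
    le_ciSup ⟨Metric.diam (orb φ x), by
      rintro _ ⟨t, rfl⟩
      exact Metric.diam_mono (hsub t) hbdd⟩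
  obtain ⟨r, hSr, hrD⟩ := exists_between hsup
  choose s hs hsh using hmem
  have hnear : ∀ t, ∀ v ∈ Set.uIcc t (s t), dist (φ t x) (φ v x) < r := fun t v hv =>
    (Metric.dist_le_diam_of_mem (hbdd.subset (hsub t)) ⟨t, Set.left_mem_uIcc, rfl⟩
      ⟨v, Set.uIcc_subset_uIcc_left (hs t) hv, rfl⟩).trans_lt ((harc t).trans_lt hSr)
  have hper : ∀ t, Function.Periodic (fun t => φ t x) (s t - h t) := fun t =>
    hφ.periodic_of_eq (hsh t)
  have hloc : IsLocallyConstant fun t => s t - h t := by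
    rw [IsLocallyConstant.iff_eventually_eq]
    intro t
    have hopen := isOpen_setOf_forall_uIcc_dist_lt hf
      (k := fun t' => h t' + (s t - h t)) (by fun_prop) r
    filter_upwards [hopen.mem_nhds (x := t) (by simpa using hnear t)] with t' ht'
    by_contra hne
    have hp : Function.Periodic (fun t => φ t x) (h t' + (s t - h t) - s t') := by
      rw [show h t' + (s t - h t) - s t' = s t - h t - (s t' - h t') by ring]
      exact (hper t).sub_period (hper t')
    have hdiam := hp.diam_range_le (fun h' => hne (by linarith))
      (fun v hv => (hnear t' v hv).le) (fun v hv => (ht' v hv).le)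
    change Metric.diam (orb φ x) ≤ _ at hdiam
    linarith
  have hs_eq : ∀ t, h t + (s 0 - h 0) = s t := fun t => by
    linarith [hloc.apply_eq_of_preconnectedSpace t 0]
  refine ⟨fun t => h t + (s 0 - h 0), ⟨by fun_prop, hmono.add_const _, fun y => ?_⟩,
    fun t => ?_, fun t => ?_⟩
  · obtain ⟨t, ht⟩ := hsurj (y - (s 0 - h 0))
    exact ⟨t, by simp [ht]⟩
  · simpa only [hs_eq] using hs t
  · simpa only [hs_eq] using hsh t
end
end

section
/- Let γ : [a,b] → ℝ^d be a C² curve with ‖γ'(t)‖ = 1 for all t ∈ [a,b]. If a < s < b and dist(γ(a), γ(s)) = sup_{a ≤ t ≤ b} dist(γ(a), γ(t)), then ‖γ''(s)‖ ≥ 1/dist(γ(a), γ(s)). -/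
open Metric Set

noncomputable section

/-- The second derivative of a function is nonpositive at a local maximum. -/
theorem IsLocalMax.deriv_deriv_nonpos {f : ℝ → ℝ} {x : ℝ} (h : IsLocalMax f x)
    (hf : ContinuousAt f x) : deriv (deriv f) x ≤ 0 := by
  by_contra! hpos
  have hmin := isLocalMin_of_deriv_deriv_pos hpos h.deriv_eq_zero hf
  have hconst : f =ᶠ[nhds x] fun _ => f x := by
    filter_upwards [h, hmin] with t h₁ h₂ using le_antisymm h₁ h₂
  have hzero : deriv (deriv f) x = 0 := by
    rw [hconst.deriv.deriv_eq]
    simp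
  exact hpos.ne hzero.symm

/-- Let `γ : [a,b] → ℝ^d` be a C² curve with unit speed. If
`a < s < b` and `dist (γ a) (γ s) = sup_{a ≤ t ≤ b} dist (γ a) (γ t)`, then
`‖γ'' s‖ ≥ 1 / dist (γ a) (γ s)`. -/
theorem norm_second_deriv_ge_of_max_dist {d : ℕ}
    (γ γ' γ'' : ℝ → Euc d) (a b s : ℝ)
    (hd1 : ∀ t ∈ Set.Icc a b, HasDerivWithinAt γ (γ' t) (Set.Icc a b) t)
    (hd2 : ∀ t ∈ Set.Icc a b, HasDerivWithinAt γ' (γ'' t) (Set.Icc a b) t)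
    (hcont : ContinuousOn γ'' (Set.Icc a b))
    (hunit : ∀ t ∈ Set.Icc a b, ‖γ' t‖ = 1)
    (has : a < s) (hsb : s < b)
    (hmax : ∀ t ∈ Set.Icc a b, dist (γ a) (γ t) ≤ dist (γ a) (γ s)) :
    1 / dist (γ a) (γ s) ≤ ‖γ'' s‖ := by
  have hmem : ∀ᶠ t in nhds s, t ∈ Set.Ioo a b := Ioo_mem_nhds has hsb
  have hs : s ∈ Set.Ioo a b := ⟨has, hsb⟩
  have hγ : ∀ t ∈ Set.Ioo a b, HasDerivAt (fun u => γ u - γ a) (γ' t) t := fun t ht =>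
    ((hd1 t (Ioo_subset_Icc_self ht)).hasDerivAt (Icc_mem_nhds ht.1 ht.2)).sub_const _
  have hγ' : HasDerivAt γ' (γ'' s) s :=
    (hd2 s (Ioo_subset_Icc_self hs)).hasDerivAt (Icc_mem_nhds has hsb)
  have hsq : ∀ t ∈ Set.Ioo a b,
      HasDerivAt (fun u => ‖γ u - γ a‖ ^ 2) (2 * inner ℝ (γ t - γ a) (γ' t)) t :=
    fun t ht => (hγ t ht).norm_sq
  have hlocal : IsLocalMax (fun u => ‖γ u - γ a‖ ^ 2) s := by
    filter_upwards [hmem] with t ht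
    have := hmax t (Ioo_subset_Icc_self ht)
    rw [dist_eq_norm', dist_eq_norm'] at this
    gcongr
  have hderiv : deriv (fun u => ‖γ u - γ a‖ ^ 2) =ᶠ[nhds s]
      fun t => 2 * inner ℝ (γ t - γ a) (γ' t) := by
    filter_upwards [hmem] with t ht using (hsq t ht).deriv
  have hsecond := hlocal.deriv_deriv_nonpos (hsq s hs).continuousAt
  rw [hderiv.deriv_eq, (((hγ s hs).inner ℝ hγ').const_mul 2).deriv,
    real_inner_self_eq_norm_sq, hunit s (Ioo_subset_Icc_self hs)] at hsecond
  have hcs := neg_le_of_abs_le (abs_real_inner_le_norm (γ s - γ a) (γ'' s))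
  rw [dist_eq_norm']
  refine div_le_of_le_mul₀ (norm_nonneg _) (norm_nonneg _) ?_
  linarith
end
end

section
/- Let γ : [a,b] → ℝ^d be a C² curve with ‖γ'(t)‖ = 1 for all t ∈ [a,b]. If R > 0, ‖γ''(t)‖ ≤ 1/R for all t ∈ [a,b], and diam(γ([a,b])) < R, then diam(γ([a,b])) = dist(γ(a), γ(b)). -/
open Metric Set

noncomputable section

/-- If `γ''` is the second derivative of a unit speed curve `γ` on `[a, b]`, bounded by `1 / R`, and
the image of `γ` stays within distance `R` of `γ s`, then `t ↦ ⟪γ t - γ s, γ' t⟫` is monotone. -/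
theorem monotoneOn_inner_sub_deriv {E : Type*} [NormedAddCommGroup E] [InnerProductSpace ℝ E]
    {γ γ' γ'' : ℝ → E} {a b R s : ℝ}
    (hd1 : ∀ t ∈ Icc a b, HasDerivWithinAt γ (γ' t) (Icc a b) t)
    (hd2 : ∀ t ∈ Icc a b, HasDerivWithinAt γ' (γ'' t) (Icc a b) t)
    (hunit : ∀ t ∈ Icc a b, ‖γ' t‖ = 1)
    (hR : 0 < R) (hcurv : ∀ t ∈ Icc a b, ‖γ'' t‖ ≤ 1 / R)
    (hdist : ∀ t ∈ Icc a b, ‖γ t - γ s‖ ≤ R) :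
    MonotoneOn (fun t => inner ℝ (γ t - γ s) (γ' t)) (Icc a b) := by
  have hderiv : ∀ t ∈ Icc a b, HasDerivWithinAt (fun t => inner ℝ (γ t - γ s) (γ' t))
      (inner ℝ (γ t - γ s) (γ'' t) + inner ℝ (γ' t) (γ' t)) (Icc a b) t := fun t ht =>
    ((hd1 t ht).sub_const (γ s)).inner ℝ (hd2 t ht)
  refine monotoneOn_of_hasDerivWithinAt_nonneg (convex_Icc a b)
    (fun t ht => (hderiv t ht).continuousWithinAt)
    (fun t ht => (hderiv t (interior_subset ht)).mono interior_subset) fun t ht => ?_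
  have ht' := interior_subset ht
  have hle : ‖γ t - γ s‖ * ‖γ'' t‖ ≤ R * (1 / R) :=
    mul_le_mul (hdist t ht') (hcurv t ht') (norm_nonneg _) hR.le
  rw [mul_one_div_cancel hR.ne'] at hle
  have habs := abs_le.mp (abs_real_inner_le_norm (γ t - γ s) (γ'' t))
  rw [real_inner_self_eq_norm_sq, hunit t ht']
  linarith [habs.1]

/-- The squared distance to a point `p` has derivative `2 ⟪γ t - p, γ' t⟫` along `γ`. -/
theorem hasDerivWithinAt_norm_sub_const_sq {E : Type*} [NormedAddCommGroup E]
    [InnerProductSpace ℝ E] {γ : ℝ → E} {v p : E} {S : Set ℝ} {t : ℝ}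
    (h : HasDerivWithinAt γ v S t) :
    HasDerivWithinAt (fun t => ‖γ t - p‖ ^ 2) (2 * inner ℝ (γ t - p) v) S t :=
  (h.sub_const p).norm_sq

/-- If `t ↦ ⟪γ t - γ s, γ' t⟫` is monotone, the distance to `γ s` is nondecreasing after time `s`. -/
theorem monotoneOn_dist_of_monotoneOn_inner {E : Type*} [NormedAddCommGroup E]
    [InnerProductSpace ℝ E] {γ γ' : ℝ → E} {a b s : ℝ} (hs : s ∈ Icc a b)
    (hd1 : ∀ t ∈ Icc a b, HasDerivWithinAt γ (γ' t) (Icc a b) t)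
    (hmono : MonotoneOn (fun t => inner ℝ (γ t - γ s) (γ' t)) (Icc a b)) :
    MonotoneOn (fun t => dist (γ s) (γ t)) (Icc s b) := by
  have hsub : Icc s b ⊆ Icc a b := Icc_subset_Icc_left hs.1
  have hsq : MonotoneOn (fun t => ‖γ t - γ s‖ ^ 2) (Icc s b) := by
    have hderiv : ∀ t ∈ Icc s b, HasDerivWithinAt (fun t => ‖γ t - γ s‖ ^ 2)
        (2 * inner ℝ (γ t - γ s) (γ' t)) (Icc s b) t := fun t ht =>
      hasDerivWithinAt_norm_sub_const_sq ((hd1 t (hsub ht)).mono hsub)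
    refine monotoneOn_of_hasDerivWithinAt_nonneg (convex_Icc s b)
      (fun t ht => (hderiv t ht).continuousWithinAt)
      (fun t ht => (hderiv t (interior_subset ht)).mono interior_subset) fun t ht => ?_
    have ht' := interior_subset ht
    have hle := hmono hs (hsub ht') ht'.1
    simp only [sub_self, inner_zero_left] at hle
    linarith
  intro t ht u hu htu
  simp only [dist_eq_norm, norm_sub_rev (γ s)]
  exact (sq_le_sq₀ (norm_nonneg _) (norm_nonneg _)).mp (hsq ht hu htu)

/-- If `t ↦ ⟪γ t - γ s, γ' t⟫` is monotone, the distance to `γ s` is nonincreasing before time `s`. -/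
theorem antitoneOn_dist_of_monotoneOn_inner {E : Type*} [NormedAddCommGroup E]
    [InnerProductSpace ℝ E] {γ γ' : ℝ → E} {a b s : ℝ} (hs : s ∈ Icc a b)
    (hd1 : ∀ t ∈ Icc a b, HasDerivWithinAt γ (γ' t) (Icc a b) t)
    (hmono : MonotoneOn (fun t => inner ℝ (γ t - γ s) (γ' t)) (Icc a b)) :
    AntitoneOn (fun t => dist (γ t) (γ s)) (Icc a s) := by
  have hsub : Icc a s ⊆ Icc a b := Icc_subset_Icc_right hs.2
  have hsq : AntitoneOn (fun t => ‖γ t - γ s‖ ^ 2) (Icc a s) := by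
    have hderiv : ∀ t ∈ Icc a s, HasDerivWithinAt (fun t => ‖γ t - γ s‖ ^ 2)
        (2 * inner ℝ (γ t - γ s) (γ' t)) (Icc a s) t := fun t ht =>
      hasDerivWithinAt_norm_sub_const_sq ((hd1 t (hsub ht)).mono hsub)
    refine antitoneOn_of_hasDerivWithinAt_nonpos (convex_Icc a s)
      (fun t ht => (hderiv t ht).continuousWithinAt)
      (fun t ht => (hderiv t (interior_subset ht)).mono interior_subset) fun t ht => ?_
    have ht' := interior_subset ht
    have hle := hmono (hsub ht') hs ht'.2
    simp only [sub_self, inner_zero_left] at hle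
    linarith
  intro t ht u hu htu
  simp only [dist_eq_norm]
  exact (sq_le_sq₀ (norm_nonneg _) (norm_nonneg _)).mp (hsq ht hu htu)

/-- Let `γ : [a,b] → ℝ^d` be a C² curve with unit speed. If
`R > 0`, `‖γ'' t‖ ≤ 1/R` for all `t ∈ [a,b]` and `diam (γ([a,b])) < R`, then
`diam (γ([a,b])) = dist (γ a) (γ b)`. -/
theorem diam_eq_dist_endpoints_of_small_curvature {d : ℕ}
    (γ γ' γ'' : ℝ → Euc d) (a b R : ℝ) (hab : a ≤ b)
    (hd1 : ∀ t ∈ Set.Icc a b, HasDerivWithinAt γ (γ' t) (Set.Icc a b) t)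
    (hd2 : ∀ t ∈ Set.Icc a b, HasDerivWithinAt γ' (γ'' t) (Set.Icc a b) t)
    (hcont : ContinuousOn γ'' (Set.Icc a b))
    (hunit : ∀ t ∈ Set.Icc a b, ‖γ' t‖ = 1)
    (hR : 0 < R) (hcurv : ∀ t ∈ Set.Icc a b, ‖γ'' t‖ ≤ 1 / R)
    (hdiam : Metric.diam (γ '' Set.Icc a b) < R) :
    Metric.diam (γ '' Set.Icc a b) = dist (γ a) (γ b) := by
  have hbdd : Bornology.IsBounded (γ '' Icc a b) :=
    (isCompact_Icc.image_of_continuousOn fun t ht => (hd1 t ht).continuousWithinAt).isBounded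
  have hmono : ∀ s ∈ Icc a b, MonotoneOn (fun t => inner ℝ (γ t - γ s) (γ' t)) (Icc a b) :=
    fun s hs => monotoneOn_inner_sub_deriv hd1 hd2 hunit hR hcurv fun t ht => by
      rw [← dist_eq_norm]
      exact (dist_le_diam_of_mem hbdd (mem_image_of_mem γ ht) (mem_image_of_mem γ hs)).trans
        hdiam.le
  have ha : a ∈ Icc a b := left_mem_Icc.mpr hab
  have hb : b ∈ Icc a b := right_mem_Icc.mpr hab
  have hle : ∀ s ∈ Icc a b, ∀ t ∈ Icc a b, s ≤ t → dist (γ s) (γ t) ≤ dist (γ a) (γ b) :=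
    fun s hs t ht hst =>
      (antitoneOn_dist_of_monotoneOn_inner ht hd1 (hmono t ht) (left_mem_Icc.mpr ht.1)
        ⟨hs.1, hst⟩ hs.1).trans
      (monotoneOn_dist_of_monotoneOn_inner ha hd1 (hmono a ha) ht hb ht.2)
  refine le_antisymm (diam_le_of_forall_dist_le dist_nonneg ?_)
    (dist_le_diam_of_mem hbdd (mem_image_of_mem γ ha) (mem_image_of_mem γ hb))
  rintro _ ⟨s, hs, rfl⟩ _ ⟨t, ht, rfl⟩
  rcases le_total s t with hst | hts
  · exact hle s hs t ht hst
  · rw [dist_comm]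
    exact hle t ht s hs hts
end
end

section
/- On ℝ² consider the vector field X(x,y) = (x² + y²)·(−y, x), whose flow φ rotates each point p by angle ‖p‖²·t (i.e. φ_t(p) = R_{‖p‖² t}(p), where R_θ is rotation by θ about the origin), and consider the compact φ-invariant set Λ = {p ∈ ℝ² : ‖p‖ = e^{−n} for some integer n ≥ 1} ∪ {(0,0)}. Then the restricted flow φ|Λ is rescaling expansive. -/
open Metric Set Function

noncomputable section

/-- Rotation of the plane by angle `θ` about the origin. -/
def rot (θ : ℝ) (p : Euc 2) : Euc 2 :=
  (WithLp.equiv 2 (Fin 2 → ℝ)).symm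
    ![Real.cos θ * p 0 - Real.sin θ * p 1, Real.sin θ * p 0 + Real.cos θ * p 1]

/-- The vector field `X(x, y) = (x² + y²)·(−y, x)` on `ℝ²`. -/
def Xex (p : Euc 2) : Euc 2 :=
  (WithLp.equiv 2 (Fin 2 → ℝ)).symm
    ![(p 0 ^ 2 + p 1 ^ 2) * (-(p 1)), (p 0 ^ 2 + p 1 ^ 2) * p 0]

/-- The flow of `Xex`: it rotates each point `p` by the angle `‖p‖² · t`. -/
def phiEx (t : ℝ) (p : Euc 2) : Euc 2 := rot (‖p‖ ^ 2 * t) p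

/-- The compact invariant set
`Λ = {p ∈ ℝ² : ‖p‖ = e^{−n}, n ∈ ℤ, n ≥ 1} ∪ {(0,0)}`. -/
def LamEx : Set (Euc 2) :=
  {p : Euc 2 | ∃ n : ℕ, 1 ≤ n ∧ ‖p‖ = Real.exp (-(n : ℝ))} ∪ {0}

lemma norm_sq_euc_two (p : Euc 2) : ‖p‖ ^ 2 = p 0 ^ 2 + p 1 ^ 2 := by
  simp [EuclideanSpace.norm_sq_eq, Fin.sum_univ_two]

@[simp] lemma rot_apply_zero (θ : ℝ) (p : Euc 2) :
    rot θ p 0 = Real.cos θ * p 0 - Real.sin θ * p 1 := by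
  simp [rot]

@[simp] lemma rot_apply_one (θ : ℝ) (p : Euc 2) :
    rot θ p 1 = Real.sin θ * p 0 + Real.cos θ * p 1 := by
  simp [rot]

@[simp] lemma norm_rot (θ : ℝ) (p : Euc 2) : ‖rot θ p‖ = ‖p‖ := by
  refine (sq_eq_sq₀ (norm_nonneg _) (norm_nonneg _)).1 ?_
  rw [norm_sq_euc_two, norm_sq_euc_two, rot_apply_zero, rot_apply_one]
  linear_combination (p 0 ^ 2 + p 1 ^ 2) * Real.sin_sq_add_cos_sq θ

@[simp] lemma norm_phiEx (t : ℝ) (p : Euc 2) : ‖phiEx t p‖ = ‖p‖ := norm_rot _ _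

lemma norm_Xex (p : Euc 2) : ‖Xex p‖ = ‖p‖ ^ 3 := by
  refine (sq_eq_sq₀ (norm_nonneg _) (by positivity)).1 ?_
  have h : (‖p‖ ^ 3) ^ 2 = (‖p‖ ^ 2) ^ 3 := by ring
  rw [h, norm_sq_euc_two, norm_sq_euc_two]
  simp only [Xex, WithLp.equiv_symm_apply, Matrix.cons_val_zero, Matrix.cons_val_one]
  ring

lemma dist_rot_sq (θ : ℝ) (p : Euc 2) :
    dist p (rot θ p) ^ 2 = 2 * ‖p‖ ^ 2 * (1 - Real.cos θ) := by
  rw [dist_eq_norm, norm_sq_euc_two, norm_sq_euc_two]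
  simp only [PiLp.sub_apply, rot_apply_zero, rot_apply_one]
  linear_combination (p 0 ^ 2 + p 1 ^ 2) * Real.sin_sq_add_cos_sq θ

/-- A chord of a circle is at least `2 / π` times the arc it subtends. -/
lemma two_mul_norm_mul_abs_le_pi_mul_dist_rot {θ : ℝ} (hθ : |θ| ≤ Real.pi) (p : Euc 2) :
    2 * (‖p‖ * |θ|) ≤ Real.pi * dist p (rot θ p) := by
  have hpi := Real.pi_pos
  refine (sq_le_sq₀ (by positivity) (by positivity)).1 ?_
  have h : 2 * θ ^ 2 ≤ Real.pi ^ 2 * (1 - Real.cos θ) := by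
    calc 2 * θ ^ 2 = Real.pi ^ 2 * (2 / Real.pi ^ 2 * θ ^ 2) := by field_simp
      _ ≤ _ := by gcongr; linarith [Real.cos_le_one_sub_mul_cos_sq hθ]
  rw [mul_pow, mul_pow, mul_pow, sq_abs, dist_rot_sq]
  nlinarith [mul_le_mul_of_nonneg_left h (sq_nonneg ‖p‖)]

/-- Rotations act transitively on circles centred at the origin. -/
lemma exists_rot_eq {p q : Euc 2} (hp : p ≠ 0) (h : ‖p‖ = ‖q‖) :
    ∃ θ : ℝ, |θ| ≤ Real.pi ∧ rot θ p = q := by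
  have hpos : 0 < ‖p‖ := norm_pos_iff.2 hp
  have hsq : p 0 ^ 2 + p 1 ^ 2 ≠ 0 := by
    rw [← norm_sq_euc_two]; positivity
  have hpq : p 0 ^ 2 + p 1 ^ 2 = q 0 ^ 2 + q 1 ^ 2 := by
    rw [← norm_sq_euc_two, ← norm_sq_euc_two, h]
  let z : ℂ := ⟨(p 0 * q 0 + p 1 * q 1) / (p 0 ^ 2 + p 1 ^ 2),
    (p 0 * q 1 - p 1 * q 0) / (p 0 ^ 2 + p 1 ^ 2)⟩
  have hz : ‖z‖ = 1 := by
    refine (sq_eq_sq₀ (norm_nonneg _) zero_le_one).1 ?_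
    rw [Complex.sq_norm, Complex.normSq_apply]
    simp only [z]
    field_simp
    linear_combination -(p 0 ^ 2 + p 1 ^ 2) * hpq
  have hz0 : z ≠ 0 := norm_pos_iff.1 (hz ▸ one_pos)
  refine ⟨z.arg, Complex.abs_arg_le_pi z, ?_⟩
  ext i
  fin_cases i
  · simp only [Fin.zero_eta, rot_apply_zero, Complex.cos_arg hz0, Complex.sin_arg, hz, z]
    field_simp
    ring
  · simp only [Fin.mk_one, rot_apply_one, Complex.cos_arg hz0, Complex.sin_arg, hz, z]
    field_simp
    ring

/-- The radii of the circles in `LamEx` are uniformly separated, relative to their size. -/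
lemma norm_eq_of_mem_LamEx {x y : Euc 2} (hx : x ∈ LamEx) (hy : y ∈ LamEx)
    (h : |‖x‖ - ‖y‖| ≤ ‖x‖ ^ 3 / 2) : ‖x‖ = ‖y‖ := by
  have exp_gap : ∀ {a b : ℕ}, a < b → 2 * Real.exp (-(b : ℝ)) < Real.exp (-(a : ℝ)) := by
    intro a b hab
    have h1 : Real.exp (-(b : ℝ)) * Real.exp 1 ≤ Real.exp (-(a : ℝ)) := by
      rw [← Real.exp_add, Real.exp_le_exp]
      have : (a : ℝ) + 1 ≤ b := by exact_mod_cast hab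
      linarith
    nlinarith [Real.exp_pos (-(b : ℝ)), Real.exp_one_gt_d9]
  rcases hx with ⟨n, -, hx⟩ | rfl
  · have hle : ‖x‖ ≤ 1 := by
      rw [hx, Real.exp_le_one_iff]
      exact neg_nonpos.2 n.cast_nonneg
    have hpos : 0 < ‖x‖ := hx ▸ Real.exp_pos _
    have hcube : ‖x‖ ^ 3 ≤ ‖x‖ := pow_le_of_le_one hpos.le hle (by norm_num)
    obtain ⟨h1, h2⟩ := abs_le.1 h
    rcases hy with ⟨m, -, hy⟩ | rfl
    · rcases lt_trichotomy m n with hmn | rfl | hmn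
      · have := exp_gap hmn
        rw [← hx, ← hy] at this
        linarith
      · rw [hx, hy]
      · have := exp_gap hmn
        rw [← hx, ← hy] at this
        linarith
    · rw [norm_zero] at h2
      linarith
  · simpa using h.trans_eq (by simp) |>.antisymm (abs_nonneg _) |>.symm

/-- The flow of `X(x,y) = (x² + y²)(−y, x)` restricted to
`Λ = {‖p‖ = e^{−n} : n ≥ 1} ∪ {0}` is rescaling expansive. -/
theorem rescalingExpansive_phiEx : RescalingExpansive phiEx Xex LamEx := by
  intro ε hε
  refine ⟨min (1 / 2) (ε / 2), by positivity, fun x hx y hy h _ hdist t ↦ ?_⟩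
  have hd := hdist t
  rw [norm_Xex, norm_phiEx] at hd
  have hd₁ : dist (phiEx t x) (phiEx (h t) y) ≤ ‖x‖ ^ 3 / 2 := by
    refine hd.trans ?_
    nlinarith [min_le_left (1 / 2) (ε / 2), pow_nonneg (norm_nonneg x) 3]
  have hd₂ : 2 * dist (phiEx t x) (phiEx (h t) y) ≤ ‖x‖ ^ 3 * ε := by
    nlinarith [min_le_right (1 / 2) (ε / 2), pow_nonneg (norm_nonneg x) 3]
  have hnorm : ‖x‖ = ‖y‖ := by
    refine norm_eq_of_mem_LamEx hx hy (le_trans ?_ hd₁)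
    simpa [dist_eq_norm] using abs_norm_sub_norm_le (phiEx t x) (phiEx (h t) y)
  rw [arc, uIcc_of_le (by linarith)]
  rcases eq_or_ne x 0 with rfl | hx0
  · have hz : phiEx t 0 = 0 := norm_eq_zero.1 (by simp)
    have hw : phiEx (h t) y = 0 := norm_eq_zero.1 (by simpa using hnorm.symm)
    exact ⟨0, ⟨by linarith, hε.le⟩, by simp [hz, hw, ← norm_eq_zero]⟩
  · have hr : 0 < ‖x‖ := norm_pos_iff.2 hx0
    obtain ⟨θ, hθ, hrot⟩ := exists_rot_eq (p := phiEx t x) (q := phiEx (h t) y)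
      (norm_pos_iff.1 (by simpa using hx0)) (by simpa using hnorm)
    have hchord := two_mul_norm_mul_abs_le_pi_mul_dist_rot hθ (phiEx t x)
    rw [hrot, norm_phiEx] at hchord
    have hθε : |θ| ≤ ‖x‖ ^ 2 * ε := by
      have hpi : Real.pi * dist (phiEx t x) (phiEx (h t) y)
          ≤ 4 * dist (phiEx t x) (phiEx (h t) y) :=
        mul_le_mul_of_nonneg_right Real.pi_le_four dist_nonneg
      refine le_of_mul_le_mul_left ?_ hr
      linarith [show ‖x‖ * (‖x‖ ^ 2 * ε) = ‖x‖ ^ 3 * ε by ring]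
    refine ⟨θ / ‖x‖ ^ 2, abs_le.1 ?_, ?_⟩
    · rw [abs_div, abs_of_pos (pow_pos hr 2), div_le_iff₀ (pow_pos hr 2)]
      linarith
    · change rot (‖phiEx t x‖ ^ 2 * (θ / ‖x‖ ^ 2)) (phiEx t x) = _
      rw [norm_phiEx, mul_div_cancel₀ _ (pow_pos hr 2).ne', hrot]
end
end
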